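/- Let γ ∈ Γ_g be a non-trivial element. Then the core surface Core(⟨γ⟩) is connected and compact, its thick version is homeomorphic to an annulus, and both boundary cycles of Core(⟨γ⟩) have length ℓ(γ^{Γ_g}), the minimal length of a word in {a_1^{±1}, …, b_g^{±1}} representing the conjugacy class of γ in Γ_g. -/

import Mathlib

/-!
Formalization preamble for "Core Surfaces" (Magee–Puder).

We work with a fixed combinatorial (CW) model.  The surface `Σ_g` has one vertex,
`2g` directed labeled edges (the label `2i` plays the role of `a_{i+1}` and `2i+1`
the role of `b_{i+1}`), and one `4g`-gon glued along `[a₁,b₁]⋯[a_g,b_g]`.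

* `Gamma g` is the surface group, presented by the single relator.
* A `Complex g` is a combinatorial 2-complex with directed, labeled edges and
  2-cells given by their boundary walks; coverings of `Σ_g` are the complexes in
  which every vertex has exactly one incoming/outgoing edge of each label, every
  walk reading the relator is closed, and every closed walk reading the relator
  bounds exactly one face (`IsCovering`).  A tiled surface is a complex that
  embeds into such a covering (`IsTiledSurface`).
* Blocks, chains, boundary cycles (via the ribbon structure coming from the fixed
  cyclic order of the `4g` half-edges around a vertex of `Σ_g`), boundary-reduced
  and strongly boundary-reduced surfaces are defined combinatorially.
* Homotopy of edge-walks is the edge-path-group homotopy: backtrack insertions and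
  insertions of boundaries of (present) faces.
* `cover g J` is the covering space `J\~Σ_g` of `Σ_g` associated to a subgroup
  `J ≤ Γ_g` (vertices = right cosets), and `coreSub g J` is the core surface of
  `J`, defined exactly as in the paper: the union of all shortest representative
  cycles of essential free-homotopy classes, together with all components of the
  complement containing finitely many `4g`-gons.
-/

noncomputable section

namespace CS

/-- Signed letters over the generators `a₁,b₁,…,a_g,b_g` of `Γ_g`
(`a_{i+1} ↦ 2i`, `b_{i+1} ↦ 2i+1`); `true` means a positive letter. -/
abbrev Letter (g : ℕ) := Fin (2 * g) × Bool

/-- The label of the `p`-th letter of the relator `[a₁,b₁][a₂,b₂]⋯[a_g,b_g]`. -/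
def relLabel (g : ℕ) (p : Fin (4 * g)) : Fin (2 * g) :=
  ⟨2 * ((p : ℕ) / 4) + ((p : ℕ) % 4) % 2, by have := p.2; omega⟩

/-- The sign of the `p`-th letter of the relator. -/
def relSign (g : ℕ) (p : Fin (4 * g)) : Bool := decide ((p : ℕ) % 4 < 2)

/-- The relator `[a₁,b₁][a₂,b₂]⋯[a_g,b_g]` as a word (list of signed letters). -/
def relatorWord (g : ℕ) : List (Letter g) :=
  (List.finRange (4 * g)).map fun p => (relLabel g p, relSign g p)

/-- The relator as an element of the free group on the `2g` generators. -/
def relatorF (g : ℕ) : FreeGroup (Fin (2 * g)) :=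
  ((relatorWord g).map fun l => if l.2 then FreeGroup.of l.1 else (FreeGroup.of l.1)⁻¹).prod

/-- The surface group `Γ_g = ⟨a₁,b₁,…,a_g,b_g ∣ [a₁,b₁]⋯[a_g,b_g]⟩`. -/
abbrev Gamma (g : ℕ) := PresentedGroup ({relatorF g} : Set (FreeGroup (Fin (2 * g))))

/-- The image of a signed letter in `Γ_g`. -/
def letterG {g : ℕ} (l : Letter g) : Gamma g :=
  if l.2 then PresentedGroup.of l.1 else (PresentedGroup.of l.1)⁻¹

/-- The image of a word in `Γ_g`. -/
def wordG {g : ℕ} (w : List (Letter g)) : Gamma g := (w.map letterG).prod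

/-- `ℓ(γ^{Γ_g})`: the minimal length of a word in the generators representing the
conjugacy class of `γ` in `Γ_g`. -/
def conjLen {g : ℕ} (γ : Gamma g) : ℕ :=
  sInf {n | ∃ w : List (Letter g), w.length = n ∧ ∃ x : Gamma g, x * wordG w * x⁻¹ = γ}

/-! ### Half-edge positions around a vertex of `Σ_g`

The `4g` half-edges around the vertex `o` of `Σ_g` come in the (clockwise) cyclic
order `a₁`-out, `b₁`-in, `a₁`-in, `b₁`-out, `a₂`-out, `b₂`-in, `a₂`-in, `b₂`-out, …
-/

/-- Position of the outgoing `ℓ`-labeled half-edge in the cyclic order. -/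
def posOut {g : ℕ} (ℓ : Fin (2 * g)) : ℕ :=
  if (ℓ : ℕ) % 2 = 0 then 2 * (ℓ : ℕ) else 2 * (ℓ : ℕ) + 1

/-- Position of the incoming `ℓ`-labeled half-edge in the cyclic order. -/
def posIn {g : ℕ} (ℓ : Fin (2 * g)) : ℕ :=
  if (ℓ : ℕ) % 2 = 0 then 2 * (ℓ : ℕ) + 2 else 2 * (ℓ : ℕ) - 1

/-- The position of the half-edge through which a traversal of a dart with signed
letter `s` *arrives* at its terminal vertex. -/
def posArr {g : ℕ} (s : Letter g) : ℕ := if s.2 then posIn s.1 else posOut s.1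

/-- The position of the half-edge through which a traversal of a dart with signed
letter `s` *leaves* its initial vertex. -/
def posLv {g : ℕ} (s : Letter g) : ℕ := if s.2 then posOut s.1 else posIn s.1

/-- The number of half-edges strictly between the arrival half-edge of `s` and the
departure half-edge of `t`, in the clockwise cyclic order of the `4g` half-edges
around a vertex. -/
def gapN {g : ℕ} (s t : Letter g) : ℕ := (posLv t + 4 * g - (posArr s + 1)) % (4 * g)

/-! ### Combinatorial complexes -/

/-- A combinatorial at-most-2-dimensional CW-complex with directed edges labeled by
the generators of `Γ_g`, and 2-cells recorded by their boundary walks (lists of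
darts, i.e. edges with a direction of traversal). -/
structure Complex (g : ℕ) where
  V : Type
  E : Type
  F : Type
  src : E → V
  dst : E → V
  lab : E → Fin (2 * g)
  bdry : F → List (E × Bool)

namespace Complex

variable {g : ℕ} (Y : Complex g)

/-- Darts: edges together with a direction of traversal (`true` = forward). -/
abbrev D := Y.E × Bool

/-- The initial vertex of a dart. -/
def dTail (d : Y.D) : Y.V := if d.2 then Y.src d.1 else Y.dst d.1

/-- The terminal vertex of a dart. -/
def dHead (d : Y.D) : Y.V := if d.2 then Y.dst d.1 else Y.src d.1

/-- The reversal of a dart. -/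
def dRev (d : Y.D) : Y.D := (d.1, !d.2)

/-- The signed letter read by a dart. -/
def dLet (d : Y.D) : Letter g := (Y.lab d.1, d.2)

/-- The word read along a list of darts. -/
def wordOf (l : List Y.D) : List (Letter g) := l.map Y.dLet

/-- The reversed walk. -/
def revW (l : List Y.D) : List Y.D := (l.map Y.dRev).reverse

/-- `WalkFrom u v l` : `l` is a walk (edge-path) from `u` to `v`. -/
inductive WalkFrom : Y.V → Y.V → List Y.D → Prop
  | nil (v : Y.V) : WalkFrom v v []
  | cons (d : Y.D) {v : Y.V} {l : List Y.D} :
      WalkFrom (Y.dHead d) v l → WalkFrom (Y.dTail d) v (d :: l)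

/-- All darts of `l` use edges from the set `sE`. -/
def InSet (sE : Set Y.E) (l : List Y.D) : Prop := ∀ d ∈ l, d.1 ∈ sE

/-- Two darts are adjacent (can be traversed consecutively). -/
def adj (d d' : Y.D) : Prop := Y.dHead d = Y.dTail d'

/-- A nonempty closed walk. -/
def IsCycle (c : List Y.D) : Prop := c ≠ [] ∧ ∃ v, Y.WalkFrom v v c

/-- **P1**: at most one incoming and at most one outgoing `ℓ`-labeled edge at every
vertex, for every label `ℓ`. -/
def P1 : Prop :=
  (∀ e e' : Y.E, Y.src e = Y.src e' → Y.lab e = Y.lab e' → e = e') ∧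
  (∀ e e' : Y.E, Y.dst e = Y.dst e' → Y.lab e = Y.lab e' → e = e')

/-- **P2**: every walk reading a word equal to `1` in `Γ_g` is closed. -/
def P2 : Prop :=
  ∀ (u v : Y.V) (l : List Y.D), Y.WalkFrom u v l → wordG (Y.wordOf l) = 1 → u = v

/-- **P3**: every 2-cell is glued along a closed walk reading the relator
`[a₁,b₁]⋯[a_g,b_g]`, and every such closed walk bounds at most one 2-cell. -/
def P3 : Prop :=
  (∀ f : Y.F, (∃ v, Y.WalkFrom v v (Y.bdry f)) ∧ Y.wordOf (Y.bdry f) = relatorWord g) ∧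
  Function.Injective Y.bdry

/-- A combinatorial covering space of `Σ_g`: every vertex has exactly one outgoing
and one incoming edge of each label, every walk reading the relator is closed, and
every closed walk reading the relator bounds exactly one `4g`-gon. -/
def IsCovering : Prop :=
  Y.P1 ∧ Y.P3 ∧
  (∀ (v : Y.V) (ℓ : Fin (2 * g)), ∃ e, Y.src e = v ∧ Y.lab e = ℓ) ∧
  (∀ (v : Y.V) (ℓ : Fin (2 * g)), ∃ e, Y.dst e = v ∧ Y.lab e = ℓ) ∧
  (∀ (u v : Y.V) (l : List Y.D), Y.WalkFrom u v l → Y.wordOf l = relatorWord g → u = v) ∧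
  (∀ (v : Y.V) (l : List Y.D), Y.WalkFrom v v l → Y.wordOf l = relatorWord g →
    ∃ f, Y.bdry f = l)

end Complex

/-- A morphism of labeled complexes: maps cells to cells of the same dimension and
respects sources, targets, labels and face boundaries (equivalently, commutes with
the immersions to `Σ_g`). -/
structure Hom {g : ℕ} (Y Z : Complex g) where
  mV : Y.V → Z.V
  mE : Y.E → Z.E
  mF : Y.F → Z.F
  hsrc : ∀ e, Z.src (mE e) = mV (Y.src e)
  hdst : ∀ e, Z.dst (mE e) = mV (Y.dst e)
  hlab : ∀ e, Z.lab (mE e) = Y.lab e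
  hbdry : ∀ f, Z.bdry (mF f) = (Y.bdry f).map fun d => (mE d.1, d.2)

namespace Hom

variable {g : ℕ} {Y Z : Complex g}

/-- The induced map on darts. -/
def mD (φ : Hom Y Z) (d : Y.D) : Z.D := (φ.mE d.1, d.2)

/-- Injectivity (an embedding of complexes). -/
def Inj (φ : Hom Y Z) : Prop :=
  Function.Injective φ.mV ∧ Function.Injective φ.mE ∧ Function.Injective φ.mF

end Hom

namespace Complex

variable {g : ℕ} (Y : Complex g)

/-- A tiled surface: a complex which embeds into a combinatorial covering space of
`Σ_g` (compatibly with directions and labels). -/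
def IsTiledSurface : Prop :=
  ∃ Z : Complex g, Z.IsCovering ∧ ∃ φ : Hom Y Z, φ.Inj

/-- Connectivity of a complex (any two vertices are joined by a walk). -/
def Connected : Prop := Nonempty Y.V ∧ ∀ v w : Y.V, ∃ l, Y.WalkFrom v w l

/-! ### Blocks and chains -/

/-- A block: a nonempty walk such that successive darts have no half-edges between
them (hence it reads a subword of the cyclic relator, of length at most `4g`). -/
def IsBlock (l : List Y.D) : Prop :=
  l ≠ [] ∧ l.length ≤ 4 * g ∧
  List.Chain' (fun d d' => Y.adj d d' ∧ gapN (Y.dLet d) (Y.dLet d') = 0) l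

/-- Two blocks are consecutive: concatenation is a walk and there is exactly one
half-edge between the last dart of the first and the first dart of the second. -/
def chainStep (b b' : List Y.D) : Prop :=
  ∃ d d', b.getLast? = some d ∧ b'.head? = some d' ∧ Y.adj d d' ∧
    gapN (Y.dLet d) (Y.dLet d') = 1

/-- A chain: a nonempty sequence of consecutive blocks. -/
def IsChain (bs : List (List Y.D)) : Prop :=
  bs ≠ [] ∧ (∀ b ∈ bs, Y.IsBlock b) ∧ List.Chain' Y.chainStep bs

/-- A cyclic chain: a chain whose blocks pave an entire cycle. -/
def IsCyclicChain (bs : List (List Y.D)) : Prop :=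
  Y.IsChain bs ∧ ∃ b b', bs.getLast? = some b ∧ bs.head? = some b' ∧ Y.chainStep b b'

/-- A long chain: a chain of consecutive blocks of lengths `2g, 2g−1, …, 2g−1, 2g`. -/
def IsLongChain (bs : List (List Y.D)) : Prop :=
  Y.IsChain bs ∧ ∃ k, bs.map List.length = 2 * g :: (List.replicate k (2 * g - 1) ++ [2 * g])

/-- A half-chain: a cyclic chain all of whose blocks have length `2g − 1`. -/
def IsHalfChain (bs : List (List Y.D)) : Prop :=
  Y.IsCyclicChain bs ∧ ∀ b ∈ bs, b.length = 2 * g - 1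

/-! ### Boundary cycles of the thick version (relative to sets of present edges and
faces), via the ribbon structure -/

/-- `nextD sE d d'`: among darts (with edge in `sE`) leaving the head of `d`, the
dart `d'` is the first one in clockwise order after the arrival half-edge of `d`.
This is the successor map whose orbits trace the boundary components of the thick
version of the ribbon graph. -/
def nextD (sE : Set Y.E) (d d' : Y.D) : Prop :=
  d'.1 ∈ sE ∧ Y.adj d d' ∧
  ∀ d'' : Y.D, d''.1 ∈ sE → Y.adj d d'' →
    gapN (Y.dLet d) (Y.dLet d') ≤ gapN (Y.dLet d) (Y.dLet d'')

/-- The corner between the consecutive darts `d, d'` is filled by a face from `sF`. -/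
def faceStep (sF : Set Y.F) (d d' : Y.D) : Prop :=
  ∃ f ∈ sF, [d, d'] <:+: (Y.bdry f ++ Y.bdry f)

/-- One step along the boundary of the thick version. -/
def bStep (sE : Set Y.E) (sF : Set Y.F) (d d' : Y.D) : Prop :=
  d.1 ∈ sE ∧ Y.nextD sE d d' ∧ ¬ Y.faceStep sF d d'

/-- A (finite segment of a) boundary cycle of the thick version. -/
def BPath (sE : Set Y.E) (sF : Set Y.F) (l : List Y.D) : Prop :=
  l ≠ [] ∧ Y.InSet sE l ∧ List.Chain' (Y.bStep sE sF) l

/-- A (finite) boundary cycle of the thick version. -/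
def BCycle (sE : Set Y.E) (sF : Set Y.F) (l : List Y.D) : Prop :=
  Y.BPath sE sF l ∧ ∃ d d', l.getLast? = some d ∧ l.head? = some d' ∧ Y.bStep sE sF d d'

/-- A dart lying on the boundary of the thick version. -/
def IsBDart (sE : Set Y.E) (sF : Set Y.F) (d : Y.D) : Prop :=
  d.1 ∈ sE ∧ ∃ d', Y.nextD sE d d' ∧ ¬ Y.faceStep sF d d'

/-- Boundary reduced: no boundary cycle contains a long block (length `≥ 2g+1`) or
a long chain. -/
def BoundaryReduced (sE : Set Y.E) (sF : Set Y.F) : Prop :=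
  (∀ l, Y.BPath sE sF l → ¬ (Y.IsBlock l ∧ 2 * g + 1 ≤ l.length)) ∧
  (∀ bs, Y.IsLongChain bs → ¬ Y.BPath sE sF bs.flatten)

/-- Strongly boundary reduced: no boundary cycle contains a half-block (length
exactly `2g`) or a half-chain. -/
def StronglyBoundaryReduced (sE : Set Y.E) (sF : Set Y.F) : Prop :=
  (∀ l, Y.BPath sE sF l → ¬ (Y.IsBlock l ∧ l.length = 2 * g)) ∧
  (∀ bs, Y.IsHalfChain bs → ¬ Y.BCycle sE sF bs.flatten)

/-! ### Combinatorial homotopy of walks -/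

/-- A closed walk traversing the boundary of a face from `sF` (in either direction,
starting anywhere). -/
def faceLoop (sF : Set Y.F) (b : List Y.D) : Prop :=
  ∃ f ∈ sF, ∃ n, b = (Y.bdry f).rotate n ∨ b = Y.revW ((Y.bdry f).rotate n)

/-- Elementary homotopy move: insertion of a backtrack or of a face boundary. -/
def elemMove (sE : Set Y.E) (sF : Set Y.F) (l l' : List Y.D) : Prop :=
  (∃ (l₁ l₂ : List Y.D) (d : Y.D), d.1 ∈ sE ∧ l = l₁ ++ l₂ ∧ l' = l₁ ++ d :: Y.dRev d :: l₂) ∨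
  (∃ l₁ l₂ b, Y.faceLoop sF b ∧ l = l₁ ++ l₂ ∧ l' = l₁ ++ b ++ l₂)

/-- Homotopy (rel endpoints) of walks from `u` to `v`, inside the subcomplex with
edge set `sE` and face set `sF`. -/
def Homotopic (sE : Set Y.E) (sF : Set Y.F) (u v : Y.V) (c c' : List Y.D) : Prop :=
  Relation.EqvGen
    (fun a b =>
      Y.WalkFrom u v a ∧ Y.WalkFrom u v b ∧ Y.InSet sE a ∧ Y.InSet sE b ∧
        (Y.elemMove sE sF a b ∨ Y.elemMove sE sF b a)) c c'

/-- A closed walk which is null-homotopic. -/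
def NullHomotopic (sE : Set Y.E) (sF : Set Y.F) (c : List Y.D) : Prop :=
  ∃ v, Y.WalkFrom v v c ∧ Y.Homotopic sE sF v v c []

/-- An essential cycle: a nonempty closed walk which is not null-homotopic. -/
def Essential (sE : Set Y.E) (sF : Set Y.F) (c : List Y.D) : Prop :=
  Y.IsCycle c ∧ Y.InSet sE c ∧ ¬ Y.NullHomotopic sE sF c

/-- Free homotopy of closed walks. -/
def FreelyHomotopic (sE : Set Y.E) (sF : Set Y.F) (c c' : List Y.D) : Prop :=
  ∃ u v q, Y.WalkFrom u u c ∧ Y.WalkFrom v v c' ∧ Y.WalkFrom u v q ∧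
    Y.InSet sE q ∧ Y.InSet sE c ∧ Y.InSet sE c' ∧
    Y.Homotopic sE sF u u c (q ++ c' ++ Y.revW q)

/-- `c` is a shortest representative of its free homotopy class. -/
def ShortestRep (sE : Set Y.E) (sF : Set Y.F) (c : List Y.D) : Prop :=
  ∀ c', Y.FreelyHomotopic sE sF c c' → c.length ≤ c'.length

end Complex

/-- `s` occurs as a contiguous subword of the cyclic word `c`. -/
def cycContains {α : Type*} (c s : List α) : Prop :=
  s ≠ [] ∧ s.length ≤ c.length ∧ s <:+: (c ++ c)

namespace Complex

variable {g : ℕ} (Y : Complex g)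

/-- The cycle `c` contains no long block and no long chain. -/
def NoLongBlockOrChainCyc (c : List Y.D) : Prop :=
  (∀ s, cycContains c s → ¬ (Y.IsBlock s ∧ 2 * g + 1 ≤ s.length)) ∧
  (∀ bs, Y.IsLongChain bs → ¬ cycContains c bs.flatten)

/-- A (cyclically) non-backtracking cycle. -/
def NonBacktrackingCyc (c : List Y.D) : Prop :=
  ¬ ∃ d : Y.D, cycContains c [d, Y.dRev d]

/-- A cycle which is essential and a shortest representative of its
free homotopy class. -/
def GoodCycle (c : List Y.D) : Prop :=
  Y.IsCycle c ∧ Y.Essential Set.univ Set.univ c ∧ Y.ShortestRep Set.univ Set.univ c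

/-! ### Cells and components of complements -/

/-- The cells of a complex. -/
def Cell := Y.V ⊕ Y.E ⊕ Y.F

def vCell (v : Y.V) : Y.Cell := Sum.inl v
def eCell (e : Y.E) : Y.Cell := Sum.inr (Sum.inl e)
def fCell (f : Y.F) : Y.Cell := Sum.inr (Sum.inr f)

/-- Basic incidence of (open) cells. -/
def inc0 : Y.Cell → Y.Cell → Prop := fun c c' =>
  match c, c' with
  | Sum.inl v, Sum.inr (Sum.inl e) => Y.src e = v ∨ Y.dst e = v
  | Sum.inl v, Sum.inr (Sum.inr f) => ∃ d ∈ Y.bdry f, Y.dTail d = v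
  | Sum.inr (Sum.inl e), Sum.inr (Sum.inr f) => ∃ b, (e, b) ∈ Y.bdry f
  | _, _ => False

/-- Symmetrized incidence of cells. -/
def incid (c c' : Y.Cell) : Prop := Y.inc0 c c' ∨ Y.inc0 c' c

end Complex

/-- A triple of subsets of the cells of a complex `Y` (a prospective subcomplex). -/
structure SubC {g : ℕ} (Y : Complex g) where
  sV : Set Y.V
  sE : Set Y.E
  sF : Set Y.F

namespace SubC

variable {g : ℕ} {Y : Complex g}

/-- `S` is an actual subcomplex: closed under taking boundaries of cells. -/
def IsSub (S : SubC Y) : Prop :=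
  (∀ e ∈ S.sE, Y.src e ∈ S.sV ∧ Y.dst e ∈ S.sV) ∧
  (∀ f ∈ S.sF, ∀ d ∈ Y.bdry f, d.1 ∈ S.sE)

/-- Containment of subcomplexes. -/
def le (S T : SubC Y) : Prop := S.sV ⊆ T.sV ∧ S.sE ⊆ T.sE ∧ S.sF ⊆ T.sF

/-- Compactness: finitely many cells. -/
def Compact (S : SubC Y) : Prop := S.sV.Finite ∧ S.sE.Finite ∧ S.sF.Finite

/-- Connectivity of the subcomplex. -/
def Connected (S : SubC Y) : Prop :=
  S.sV.Nonempty ∧ ∀ v ∈ S.sV, ∀ w ∈ S.sV, ∃ l, Y.WalkFrom v w l ∧ Y.InSet S.sE l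

/-- Image of a subcomplex under a morphism. -/
def image {Z : Complex g} (φ : Hom Y Z) (S : SubC Y) : SubC Z :=
  ⟨φ.mV '' S.sV, φ.mE '' S.sE, φ.mF '' S.sF⟩

end SubC

/-- The whole complex, as a subcomplex of itself. -/
def fullSub {g : ℕ} (Y : Complex g) : SubC Y := ⟨Set.univ, Set.univ, Set.univ⟩

namespace Complex

variable {g : ℕ} (Y : Complex g)

/-- Membership of a cell in a subcomplex. -/
def inSub (S : SubC Y) : Y.Cell → Prop := fun c =>
  match c with
  | Sum.inl v => v ∈ S.sV
  | Sum.inr (Sum.inl e) => e ∈ S.sE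
  | Sum.inr (Sum.inr f) => f ∈ S.sF

/-- Reachability of cells through the open complement of the subcomplex `S`
(= lying in the same connected component of the complement). -/
def reachS (S : SubC Y) (c c' : Y.Cell) : Prop :=
  Relation.ReflTransGen (fun a b => Y.incid a b ∧ ¬ Y.inSub S a ∧ ¬ Y.inSub S b) c c'

end Complex

/-- The closure (as a subcomplex) of the connected component of the cell `c₀` in the
complement of the subcomplex `S`. -/
def compCl {g : ℕ} (Y : Complex g) (S : SubC Y) (c₀ : Y.Cell) : SubC Y :=
  let cF : Set Y.F := {f | Y.reachS S c₀ (Y.fCell f)}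
  let cE : Set Y.E :=
    {e | Y.reachS S c₀ (Y.eCell e)} ∪ {e | ∃ f ∈ cF, ∃ b, (e, b) ∈ Y.bdry f}
  let cV : Set Y.V :=
    {v | Y.reachS S c₀ (Y.vCell v)} ∪ {v | ∃ e ∈ cE, Y.src e = v ∨ Y.dst e = v}
  ⟨cV, cE, cF⟩

/-- The subcomplex has exactly one boundary cycle (which covers all boundary darts). -/
def OneBdry {g : ℕ} (Y : Complex g) (S : SubC Y) : Prop :=
  ∃ δ, Y.BCycle S.sE S.sF δ ∧ ∀ d, Y.IsBDart S.sE S.sF d → d ∈ δ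

/-- The subcomplex has exactly two (disjoint) boundary cycles, covering all
boundary darts. -/
def TwoBdry {g : ℕ} (Y : Complex g) (S : SubC Y) : Prop :=
  ∃ δ₁ δ₂, Y.BCycle S.sE S.sF δ₁ ∧ Y.BCycle S.sE S.sF δ₂ ∧ δ₁.Disjoint δ₂ ∧
    ∀ d, Y.IsBDart S.sE S.sF d → d ∈ δ₁ ∨ d ∈ δ₂

/-- The boundary-reduced closure of `S` inside `Y`: the intersection of all
intermediate boundary reduced subcomplexes. -/
def BRcl {g : ℕ} (Y : Complex g) (S : SubC Y) : SubC Y where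
  sV := ⋂ T ∈ {T : SubC Y | T.IsSub ∧ S.le T ∧ Y.BoundaryReduced T.sE T.sF}, T.sV
  sE := ⋂ T ∈ {T : SubC Y | T.IsSub ∧ S.le T ∧ Y.BoundaryReduced T.sE T.sF}, T.sE
  sF := ⋂ T ∈ {T : SubC Y | T.IsSub ∧ S.le T ∧ Y.BoundaryReduced T.sE T.sF}, T.sF

/-- The strongly-boundary-reduced closure of `S` inside `Y`. -/
def SBRcl {g : ℕ} (Y : Complex g) (S : SubC Y) : SubC Y where
  sV := ⋂ T ∈ {T : SubC Y | T.IsSub ∧ S.le T ∧ Y.StronglyBoundaryReduced T.sE T.sF}, T.sV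
  sE := ⋂ T ∈ {T : SubC Y | T.IsSub ∧ S.le T ∧ Y.StronglyBoundaryReduced T.sE T.sF}, T.sE
  sF := ⋂ T ∈ {T : SubC Y | T.IsSub ∧ S.le T ∧ Y.StronglyBoundaryReduced T.sE T.sF}, T.sF

/-- An isomorphism between the subcomplex `S` of `Y` and the subcomplex `T` of `Z`. -/
structure SubEquiv {g : ℕ} (Y : Complex g) (S : SubC Y) (Z : Complex g) (T : SubC Z) where
  fV : Y.V → Z.V
  fE : Y.E → Z.E
  fF : Y.F → Z.F
  bijV : Set.BijOn fV S.sV T.sV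
  bijE : Set.BijOn fE S.sE T.sE
  bijF : Set.BijOn fF S.sF T.sF
  hsrc : ∀ e ∈ S.sE, Z.src (fE e) = fV (Y.src e)
  hdst : ∀ e ∈ S.sE, Z.dst (fE e) = fV (Y.dst e)
  hlab : ∀ e ∈ S.sE, Z.lab (fE e) = Y.lab e
  hbdry : ∀ f ∈ S.sF, Z.bdry (fF f) = (Y.bdry f).map fun d => (fE d.1, d.2)

/-- `FunnelComponent Y S c₀`: the connected component of the cell `c₀` in the
complement of the subcomplex `S` is a twice-punctured sphere with one funnel and
one fake-puncture.  Rendered combinatorially: the component contains infinitely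
many `4g`-gons (the funnel); there is a boundary cycle `δ` of `S` adjacent to the
component, it is unique (one fake-puncture), and every closed walk inside the
closure of the component is freely homotopic there to a power of `δ` or of its
inverse (so the closure is a half-open annulus bounded by `δ`). -/
def FunnelComponent {g : ℕ} (Y : Complex g) (S : SubC Y) (c₀ : Y.Cell) : Prop :=
  {f : Y.F | Y.reachS S c₀ (Y.fCell f)}.Infinite ∧
  ∃ δ : List Y.D, Y.BCycle S.sE S.sF δ ∧
    (∃ d ∈ δ, ∃ c', Y.incid (Y.eCell d.1) c' ∧ Y.reachS S c₀ c') ∧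
    (∀ δ', Y.BCycle S.sE S.sF δ' →
      (∃ d ∈ δ', ∃ c', Y.incid (Y.eCell d.1) c' ∧ Y.reachS S c₀ c') →
      ∃ n, δ' = δ.rotate n) ∧
    (∀ (v : Y.V) (l : List Y.D), Y.WalkFrom v v l →
      Y.InSet ({e | Y.reachS S c₀ (Y.eCell e)} ∪ {e | ∃ b, (e, b) ∈ δ}) l →
      ∃ n,
        Y.FreelyHomotopic ({e | Y.reachS S c₀ (Y.eCell e)} ∪ {e | ∃ b, (e, b) ∈ δ})
          {f | Y.reachS S c₀ (Y.fCell f)} l ((List.replicate n δ).flatten) ∨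
        Y.FreelyHomotopic ({e | Y.reachS S c₀ (Y.eCell e)} ∪ {e | ∃ b, (e, b) ∈ δ})
          {f | Y.reachS S c₀ (Y.fCell f)} l ((List.replicate n (Y.revW δ)).flatten))

/-- `Y` contains a funnel: an essential cycle `δ` of `Y` cutting off an infinite
region of `Y` which is attached to the rest of `Y` only along `δ`, contains no
boundary of `Y`, and is a half-open annulus (every loop inside is freely homotopic
to a power of `δ`); i.e. an end of `Y` which is a puncture of the ambient covering. -/
def HasFunnel {g : ℕ} (Y : Complex g) : Prop :=
  ∃ (δ : List Y.D) (sE : Set Y.E) (sF : Set Y.F),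
    Y.IsCycle δ ∧ Y.Essential Set.univ Set.univ δ ∧
    (∀ d ∈ δ, d.1 ∉ sE) ∧ sE.Nonempty ∧ sF.Infinite ∧
    (∀ f ∈ sF, ∀ d ∈ Y.bdry f, d.1 ∈ sE ∨ ∃ b, (d.1, b) ∈ δ) ∧
    (∀ f : Y.F, (∃ d ∈ Y.bdry f, d.1 ∈ sE) → f ∈ sF) ∧
    (∀ d : Y.D, d.1 ∈ sE → ¬ Y.IsBDart Set.univ Set.univ d) ∧
    (∀ v : Y.V, (∃ e ∈ sE, Y.src e = v ∨ Y.dst e = v) → (∀ d ∈ δ, Y.dTail d ≠ v) →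
      ∀ e' : Y.E, (Y.src e' = v ∨ Y.dst e' = v) → e' ∈ sE) ∧
    (∀ (v : Y.V) (l : List Y.D), Y.WalkFrom v v l →
      Y.InSet (sE ∪ {e | ∃ b, (e, b) ∈ δ}) l →
      ∃ n,
        Y.FreelyHomotopic (sE ∪ {e | ∃ b, (e, b) ∈ δ}) sF l
          ((List.replicate n δ).flatten) ∨
        Y.FreelyHomotopic (sE ∪ {e | ∃ b, (e, b) ∈ δ}) sF l
          ((List.replicate n (Y.revW δ)).flatten))

/-- The fundamental group of `Y` is cyclic: some closed walk `c` generates all free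
homotopy classes of loops.  (For a connected surface this is *equivalent to NOT
having genus ≥ 1 or at least 3 boundary components/punctures*.) -/
def CyclicPi1 {g : ℕ} (Y : Complex g) : Prop :=
  ∃ c : List Y.D, ∀ (v : Y.V) (l : List Y.D), Y.WalkFrom v v l →
    ∃ n,
      Y.FreelyHomotopic Set.univ Set.univ l ((List.replicate n c).flatten) ∨
      Y.FreelyHomotopic Set.univ Set.univ l ((List.replicate n (Y.revW c)).flatten)

/-! ### The covering space `J\~Σ_g` and the core surface of `J` -/

/-- Right cosets `Jx` of `J` in `Γ_g` — the vertices (and faces) of `J\~Σ_g`. -/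
abbrev Cos (g : ℕ) (J : Subgroup (Gamma g)) := Quotient (QuotientGroup.rightRel J)

/-- The coset `Jx`. -/
def mkCos (g : ℕ) (J : Subgroup (Gamma g)) (x : Gamma g) : Cos g J :=
  Quotient.mk _ x

/-- Right multiplication on right cosets. -/
def rmul (g : ℕ) (J : Subgroup (Gamma g)) (x : Gamma g) : Cos g J → Cos g J :=
  Quotient.map (· * x) (by
    intro a b hab
    have h1 : b * a⁻¹ ∈ J := QuotientGroup.rightRel_apply.mp hab
    refine QuotientGroup.rightRel_apply.mpr ?_
    have h2 : b * x * (a * x)⁻¹ = b * a⁻¹ := by group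
    rw [h2]; exact h1)

/-- The walk in `J\~Σ_g` starting at a vertex and reading a given word. -/
def relWalk (g : ℕ) (J : Subgroup (Gamma g)) :
    Cos g J → List (Letter g) → List ((Cos g J × Fin (2 * g)) × Bool)
  | _, [] => []
  | v, (ℓ, true) :: w =>
      ((v, ℓ), true) :: relWalk g J (rmul g J (PresentedGroup.of ℓ) v) w
  | v, (ℓ, false) :: w =>
      ((rmul g J (PresentedGroup.of ℓ)⁻¹ v, ℓ), false) ::
        relWalk g J (rmul g J (PresentedGroup.of ℓ)⁻¹ v) w

/-- The covering space `Υ = J\~Σ_g` of `Σ_g` corresponding to the subgroup `J`,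
with the CW-structure pulled back from `Σ_g`: vertices and `4g`-gons are the right
cosets of `J`, and each vertex carries one outgoing edge per label. -/
def cover (g : ℕ) (J : Subgroup (Gamma g)) : Complex g where
  V := Cos g J
  E := Cos g J × Fin (2 * g)
  F := Cos g J
  src e := e.1
  dst e := rmul g J (PresentedGroup.of e.2) e.1
  lab e := e.2
  bdry v := relWalk g J v (relatorWord g)

/-- The map `J₁\~Σ_g → J₂\~Σ_g` on vertices, for `J₁ ≤ J₂`. -/
def coverMapV {g : ℕ} {J₁ J₂ : Subgroup (Gamma g)} (h : J₁ ≤ J₂) :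
    Cos g J₁ → Cos g J₂ :=
  Quotient.map id (by
    intro a b hab
    have h1 : b * a⁻¹ ∈ J₁ := QuotientGroup.rightRel_apply.mp hab
    exact QuotientGroup.rightRel_apply.mpr (h h1))

/-- The natural covering morphism on edges. -/
def coverMapE {g : ℕ} {J₁ J₂ : Subgroup (Gamma g)} (h : J₁ ≤ J₂)
    (e : (cover g J₁).E) : (cover g J₂).E :=
  (coverMapV h e.1, e.2)

/-- The natural covering morphism on darts. -/
def coverMapD {g : ℕ} {J₁ J₂ : Subgroup (Gamma g)} (h : J₁ ≤ J₂)
    (d : (cover g J₁).D) : (cover g J₂).D :=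
  (coverMapE h d.1, d.2)

/-- The cycle `c` in `J\~Σ_g` represents the conjugacy class of `γ` in `J`
(conjugacy classes in `J` ↔ free homotopy classes of essential loops in `J\~Σ_g`). -/
def RepCls {g : ℕ} (J : Subgroup (Gamma g)) (c : List ((cover g J).D))
    (γ : Gamma g) : Prop :=
  ∃ x j : Gamma g, j ∈ J ∧
    (cover g J).WalkFrom (mkCos g J x) (mkCos g J x) c ∧
    x * wordG ((cover g J).wordOf c) * x⁻¹ = j * γ * j⁻¹

/-- Step (i) of the definition of the core surface: the edges lying on some
shortest representative cycle of an essential free homotopy class. -/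
def coreE1 (g : ℕ) (J : Subgroup (Gamma g)) : Set (cover g J).E :=
  {e | ∃ c, (cover g J).GoodCycle c ∧ ∃ b, (e, b) ∈ c}

/-- The vertices of step (i) of the definition of the core surface. -/
def coreV1 (g : ℕ) (J : Subgroup (Gamma g)) : Set (cover g J).V :=
  {v | ∃ e ∈ coreE1 g J, (cover g J).src e = v ∨ (cover g J).dst e = v}

/-- Step (i) of the definition of the core surface, as a subcomplex of `J\~Σ_g`. -/
def coreS1 (g : ℕ) (J : Subgroup (Gamma g)) : SubC (cover g J) :=
  ⟨coreV1 g J, coreE1 g J, ∅⟩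

/-- A cell of `J\~Σ_g` lying in a connected component of the complement of step (i)
which contains only finitely many `4g`-gons. -/
def coreFin (g : ℕ) (J : Subgroup (Gamma g)) (c : (cover g J).Cell) : Prop :=
  ¬ (cover g J).inSub (coreS1 g J) c ∧
  {f : (cover g J).F | (cover g J).reachS (coreS1 g J) c ((cover g J).fCell f)}.Finite

open Classical in
/-- The core surface `Core(J)` of a subgroup `J ≤ Γ_g`, as a subcomplex of
`Υ = J\~Σ_g`: (i) the union of all shortest representative cycles of essential
free homotopy classes in `Υ`, together with (ii) all connected components of the
complement containing finitely many `4g`-gons.  For the trivial subgroup it is a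
single vertex. -/
def coreSub (g : ℕ) (J : Subgroup (Gamma g)) : SubC (cover g J) :=
  if J = ⊥ then ⟨{mkCos g J 1}, ∅, ∅⟩
  else
    ⟨coreV1 g J ∪ {v | coreFin g J ((cover g J).vCell v)},
     coreE1 g J ∪ {e | coreFin g J ((cover g J).eCell e)},
     {f | coreFin g J ((cover g J).fCell f)}⟩

/-!
Let `Υ = J\~Σ_g` with `J = ⟨γ⟩`. Since `H₁(Υ) = ℤ` is generated by the class of `γ`, every closed
walk is homologous to a multiple of a fixed cycle through the base vertex, and this cycle is in
turn the boundary of an infinite set of faces, half of the annulus `Υ`. Among the sets of faces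
that agree with that half up to finitely many faces, consider the *minimal cuts*, those with the
fewest frontier darts. A homology bound shows that a closed walk representing `γ` is at least as
long as a minimal cut; conversely the frontier of a minimal cut, traversed with the cut on its
left, is a single closed walk representing `γ`. So the length of a minimal cut is the minimal
length `ℓ` of the conjugacy class of `γ`, and every shortest cycle in the class of a power of `γ`
runs along frontiers of minimal cuts.

The number of frontier darts is submodular, so minimal cuts form a lattice, and counting Euler
characteristics bounds the number of faces between two of them. Hence there are a least minimal
cut `A` and a greatest one `B`. The faces of the core surface are those of `B \ A`, its edges are
the edges of their closures together with the two frontiers, and its two boundary cycles are the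
frontier of `A` and the reversed frontier of `B`, each of length `ℓ`.
-/

section Letters

variable {g : ℕ}

namespace Letter

/-- The inverse of a signed letter. -/
def inv (s : Letter g) : Letter g := (s.1, !s.2)

@[simp] lemma inv_inv (s : Letter g) : s.inv.inv = s := by simp [inv]

end Letter

lemma letterG_inv (s : Letter g) : letterG s.inv = (letterG s)⁻¹ := by
  rcases s with ⟨a, _ | _⟩ <;> simp [Letter.inv, letterG]

lemma posArr_eq_posLv_inv (s : Letter g) : posArr s = posLv s.inv := by
  rcases s with ⟨a, _ | _⟩ <;> simp [Letter.inv, posArr, posLv]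

lemma posLv_lt (s : Letter g) : posLv s < 4 * g := by
  rcases s with ⟨⟨a, ha⟩, _ | _⟩ <;> simp only [posLv, posIn, posOut] <;> grind

lemma posLv_injective : Function.Injective (posLv : Letter g → ℕ) := by
  rintro ⟨⟨a, ha⟩, _ | _⟩ ⟨⟨b, hb⟩, _ | _⟩ h <;> simp only [posLv, posIn, posOut] at h <;> grind

namespace Letter

/-- The letter whose departing half-edge has position `p`; inverse to `posLv`. -/
def ofPos (p : ℕ) (hp : p < 4 * g) : Letter g :=
  (⟨2 * (p / 4) + (if p % 4 = 0 ∨ p % 4 = 2 then 0 else 1), by split_ifs <;> omega⟩,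
    decide (p % 4 = 0 ∨ p % 4 = 3))

lemma posLv_ofPos (p : ℕ) (hp : p < 4 * g) : posLv (ofPos p hp) = p := by
  have h : p % 4 = 0 ∨ p % 4 = 1 ∨ p % 4 = 2 ∨ p % 4 = 3 := by omega
  rcases h with h | h | h | h <;> simp [ofPos, posLv, posIn, posOut, h] <;> omega

/-- Clockwise rotation around a vertex: the letter of the half-edge following that of `s`. -/
def rot (s : Letter g) : Letter g :=
  ofPos ((posLv s + 1) % (4 * g)) (Nat.mod_lt _ (Nat.zero_lt_of_lt (posLv_lt s)))

lemma posLv_rot (s : Letter g) : posLv s.rot = (posLv s + 1) % (4 * g) := posLv_ofPos _ _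

lemma posLv_rot_iterate (k : ℕ) (s : Letter g) : posLv (rot^[k] s) = (posLv s + k) % (4 * g) := by
  induction k with
  | zero => simp [Nat.mod_eq_of_lt (posLv_lt s)]
  | succ k ih => rw [Function.iterate_succ_apply', posLv_rot, ih, Nat.mod_add_mod, add_assoc]

lemma rot_bijective : Function.Bijective (rot : Letter g → Letter g) := by
  refine Finite.injective_iff_bijective.mp fun s t h => posLv_injective ?_
  have hmod : posLv s + 1 ≡ posLv t + 1 [MOD 4 * g] := by
    have hpos := congrArg posLv h
    rwa [posLv_rot, posLv_rot] at hpos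
  exact (Nat.ModEq.add_right_cancel' 1 hmod).eq_of_lt_of_lt (posLv_lt s) (posLv_lt t)

lemma rot_iterate_period (s : Letter g) : rot^[4 * g] s = s :=
  posLv_injective (by rw [posLv_rot_iterate, Nat.add_mod_right, Nat.mod_eq_of_lt (posLv_lt s)])

lemma exists_rot_iterate_eq (s t : Letter g) : ∃ k < 4 * g, rot^[k] s = t := by
  have hs := posLv_lt s
  refine ⟨(posLv t + 4 * g - posLv s) % (4 * g), Nat.mod_lt _ (by omega), posLv_injective ?_⟩
  rw [posLv_rot_iterate, Nat.add_mod_mod, ← Nat.add_sub_assoc (by omega), Nat.add_sub_cancel_left,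
    Nat.add_mod_right, Nat.mod_eq_of_lt (posLv_lt t)]

lemma eq_of_rot_invariant {α : Type*} {p : Letter g → α} (h : ∀ s, p s.rot = p s)
    (s t : Letter g) : p s = p t := by
  obtain ⟨k, -, rfl⟩ := exists_rot_iterate_eq s t
  induction k with
  | zero => rfl
  | succ k ih => rw [Function.iterate_succ_apply', h, ih]

/-- The letter following `s` in the cyclic relator: turn by one half-edge after arriving. -/
def next (s : Letter g) : Letter g := s.inv.rot

end Letter

open Letter

lemma gapN_rot_iterate_next (s : Letter g) {j : ℕ} (hj : j < 4 * g) :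
    gapN s (rot^[j] s.next) = j := by
  have hs := posLv_lt s.inv
  have hpos : posLv (rot^[j] s.next) = (posLv s.inv + (j + 1)) % (4 * g) := by
    rw [next, ← Function.iterate_succ_apply, posLv_rot_iterate]
  rw [gapN, posArr_eq_posLv_inv, hpos]
  by_cases hwrap : posLv s.inv + (j + 1) < 4 * g
  · rw [Nat.mod_eq_of_lt hwrap, show posLv s.inv + (j + 1) + 4 * g - (posLv s.inv + 1) = j + 4 * g
      by omega, Nat.add_mod_right, Nat.mod_eq_of_lt hj]
  · have hmod : (posLv s.inv + (j + 1)) % (4 * g) = posLv s.inv + (j + 1) - 4 * g := by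
      rw [Nat.mod_eq_sub_mod (by omega), Nat.mod_eq_of_lt (by omega)]
    rw [hmod, show posLv s.inv + (j + 1) - 4 * g + 4 * g - (posLv s.inv + 1) = j by omega,
      Nat.mod_eq_of_lt hj]

lemma rot_iterate_gapN_next (s t : Letter g) : rot^[gapN s t] s.next = t := by
  obtain ⟨k, hk, rfl⟩ := exists_rot_iterate_eq s.next t
  rw [gapN_rot_iterate_next s hk]

lemma length_relatorWord : (relatorWord g).length = 4 * g := by simp [relatorWord]

namespace Letter

/-- The index at which `s` occurs in the relator. -/
def relPos (s : Letter g) : ℕ :=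
  if (s.1 : ℕ) % 2 = 0 then (if s.2 then 2 * (s.1 : ℕ) else 2 * (s.1 : ℕ) + 2)
  else (if s.2 then 2 * (s.1 : ℕ) - 1 else 2 * (s.1 : ℕ) + 1)

/-- The letter at index `p` of the relator; inverse to `relPos`. -/
def ofRelPos (p : ℕ) (hp : p < 4 * g) : Letter g := (relLabel g ⟨p, hp⟩, relSign g ⟨p, hp⟩)

lemma relPos_lt (s : Letter g) : s.relPos < 4 * g := by
  rcases s with ⟨⟨a, ha⟩, _ | _⟩ <;> simp only [relPos] <;> grind

lemma ofRelPos_relPos (s : Letter g) : ofRelPos s.relPos s.relPos_lt = s := by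
  rcases s with ⟨⟨a, ha⟩, _ | _⟩ <;> rcases Nat.mod_two_eq_zero_or_one a with h | h <;>
    simp [ofRelPos, relPos, relLabel, relSign, h] <;> omega

lemma relPos_ofRelPos (p : ℕ) (hp : p < 4 * g) : (ofRelPos p hp).relPos = p := by
  have h : p % 4 = 0 ∨ p % 4 = 1 ∨ p % 4 = 2 ∨ p % 4 = 3 := by omega
  rcases h with h | h | h | h <;> simp [ofRelPos, relPos, relLabel, relSign, h] <;> omega

lemma posLv_inv_ofRelPos_add_one {p : ℕ} (hp : p + 1 < 4 * g) :
    posLv (ofRelPos p (Nat.lt_of_succ_lt hp)).inv + 1 = posLv (ofRelPos (p + 1) hp) := by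
  have h : p % 4 = 0 ∧ (p + 1) % 4 = 1 ∨ p % 4 = 1 ∧ (p + 1) % 4 = 2 ∨
      p % 4 = 2 ∧ (p + 1) % 4 = 3 ∨ p % 4 = 3 ∧ (p + 1) % 4 = 0 := by omega
  rcases h with ⟨h, h'⟩ | ⟨h, h'⟩ | ⟨h, h'⟩ | ⟨h, h'⟩ <;>
    simp [ofRelPos, inv, posLv, posIn, posOut, relLabel, relSign, h, h'] <;> omega

lemma next_ofRelPos (p : ℕ) (hp : p < 4 * g) :
    (ofRelPos p hp).next = ofRelPos ((p + 1) % (4 * g)) (Nat.mod_lt _ (Nat.zero_lt_of_lt hp)) := by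
  apply posLv_injective
  rw [next, posLv_rot]
  by_cases hlast : p + 1 = 4 * g
  · have hmod : p % 4 = 3 := by omega
    have hpos : posLv (ofRelPos p hp).inv = p := by
      simp [ofRelPos, inv, posLv, posOut, relLabel, relSign, hmod]; omega
    simp only [hpos, hlast, Nat.mod_self]
    simp [ofRelPos, posLv, posOut, relLabel, relSign]
  · have hlt : p + 1 < 4 * g := by omega
    rw [posLv_inv_ofRelPos_add_one hlt, Nat.mod_eq_of_lt (posLv_lt _)]
    simp only [Nat.mod_eq_of_lt hlt]

lemma relPos_next (s : Letter g) : s.next.relPos = (s.relPos + 1) % (4 * g) := by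
  conv_lhs => rw [← s.ofRelPos_relPos]
  rw [next_ofRelPos, relPos_ofRelPos]

end Letter

lemma getElem_relatorWord {p : ℕ} (hp : p < (relatorWord g).length) :
    (relatorWord g)[p] = ofRelPos p (by rwa [length_relatorWord] at hp) := by
  simp [relatorWord, ofRelPos]

@[simp] lemma wordG_nil : wordG ([] : List (Letter g)) = 1 := rfl

@[simp] lemma wordG_cons (s : Letter g) (w) : wordG (s :: w) = letterG s * wordG w := by
  simp [wordG]

@[simp] lemma wordG_append (w w' : List (Letter g)) : wordG (w ++ w') = wordG w * wordG w' := by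
  simp [wordG]

lemma wordG_relatorWord : wordG (relatorWord g) = 1 := by
  have hmk : wordG (relatorWord g) = PresentedGroup.mk {relatorF g} (relatorF g) := by
    have hrel : relatorF g = ((relatorWord g).map fun l : Letter g =>
      if l.2 then FreeGroup.of l.1 else (FreeGroup.of l.1)⁻¹).prod := rfl
    rw [congrArg (PresentedGroup.mk _) hrel, wordG, map_list_prod, List.map_map]
    refine congrArg List.prod (List.map_congr_left fun s _ => ?_)
    rcases s with ⟨a, _ | _⟩ <;> simp [letterG, PresentedGroup.of]
  exact hmk.trans (PresentedGroup.one_of_mem rfl)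

/-- The formal inverse of a word. -/
def invWord (w : List (Letter g)) : List (Letter g) := (w.map inv).reverse

lemma invWord_cons (s : Letter g) (w : List (Letter g)) :
    invWord (s :: w) = invWord w ++ [s.inv] := by simp [invWord]

lemma wordG_invWord (w : List (Letter g)) : wordG (invWord w) = (wordG w)⁻¹ := by
  induction w with
  | nil => simp [invWord]
  | cons s w ih => simp [invWord_cons, ih, letterG_inv]

lemma wordG_surjective : Function.Surjective (wordG : List (Letter g) → Gamma g) := by
  intro x
  induction x using PresentedGroup.induction_on with | _ x
  induction x using FreeGroup.induction_on with
  | C1 => exact ⟨[], by simp⟩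
  | of a => exact ⟨[(a, true)], by simp [letterG]; rfl⟩
  | inv_of a _ => exact ⟨[(a, false)], by simp [letterG]; rfl⟩
  | mul x y hx hy =>
    obtain ⟨w, hw⟩ := hx
    obtain ⟨w', hw'⟩ := hy
    exact ⟨w ++ w', by simp [hw, hw']⟩

lemma prod_map_eq_of_wordG_eq {M : Type*} [Monoid M] {f : Letter g → M}
    (hinv : ∀ s, f s * f s.inv = 1) (hrel : ((relatorWord g).map f).prod = 1)
    {w w' : List (Letter g)} (h : wordG w = wordG w') : (w.map f).prod = (w'.map f).prod := by
  let u (a : Fin (2 * g)) : Mˣ := ⟨f (a, true), f (a, false), hinv (a, true), hinv (a, false)⟩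
  let F (s : Letter g) : Mˣ := if s.2 then u s.1 else (u s.1)⁻¹
  have hF (v : List (Letter g)) : (((v.map F).prod : Mˣ) : M) = (v.map f).prod := by
    rw [← Units.coeHom_apply, map_list_prod, List.map_map]
    refine congrArg List.prod (List.map_congr_left fun s _ => ?_)
    rcases s with ⟨a, _ | _⟩ <;> rfl
  have hlift : ∀ r ∈ ({relatorF g} : Set _), FreeGroup.lift u r = 1 := by
    rintro _ rfl
    have hword : FreeGroup.lift u (relatorF g) = ((relatorWord g).map F).prod := by
      rw [relatorF, map_list_prod, List.map_map]
      refine congrArg List.prod (List.map_congr_left fun s _ => ?_)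
      rcases s with ⟨a, _ | _⟩ <;> simp [F]
    exact Units.ext (by rw [hword, hF, hrel, Units.val_one])
  have hφ (v : List (Letter g)) : PresentedGroup.toGroup hlift (wordG v) = (v.map F).prod := by
    rw [wordG, map_list_prod, List.map_map]
    refine congrArg List.prod (List.map_congr_left fun s _ => ?_)
    rcases s with ⟨a, _ | _⟩ <;> simp [letterG, F]
  rw [← hF, ← hF, ← hφ, ← hφ, h]

lemma con_of_wordG_eq (c : Con (FreeMonoid (Letter g)))
    (hinv : ∀ s : Letter g, c (FreeMonoid.of s * FreeMonoid.of s.inv) 1)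
    (hrel : c (FreeMonoid.ofList (relatorWord g)) 1) {w w' : List (Letter g)}
    (h : wordG w = wordG w') : c (FreeMonoid.ofList w) (FreeMonoid.ofList w') := by
  have hmk (v : List (Letter g)) :
      c.mk' (FreeMonoid.ofList v) = (v.map fun s => c.mk' (FreeMonoid.of s)).prod := by
    induction v with
    | nil => exact map_one c.mk'
    | cons s v ih => rw [FreeMonoid.ofList_cons, map_mul, ih, List.map_cons, List.prod_cons]
  rw [← c.eq]
  refine (hmk w).trans (Eq.trans ?_ (hmk w').symm)
  refine prod_map_eq_of_wordG_eq (fun s => ?_) ?_ h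
  · exact (map_mul c.mk' _ _).symm.trans (c.eq.mpr (hinv s))
  · exact (hmk _).symm.trans (c.eq.mpr hrel)

end Letters

section Darts

variable {g : ℕ} {J : Subgroup (Gamma g)}

instance : DecidableEq (Cos g J) := Classical.decEq _

/-- Right multiplication on cosets, with the arguments in the order in which a walk reads them. -/
def act (v : Cos g J) (a : Gamma g) : Cos g J := rmul g J a v

lemma act_mkCos (x a : Gamma g) : act (mkCos g J x) a = mkCos g J (x * a) := rfl

lemma mkCos_surjective : Function.Surjective (mkCos g J) := Quotient.exists_rep

lemma mkCos_eq_mkCos {x y : Gamma g} : mkCos g J x = mkCos g J y ↔ y * x⁻¹ ∈ J :=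
  Quotient.eq.trans QuotientGroup.rightRel_apply

lemma act_mkCos_eq_self_iff {x a : Gamma g} :
    act (mkCos g J x) a = mkCos g J x ↔ x * a * x⁻¹ ∈ J := by
  rw [act_mkCos, eq_comm, mkCos_eq_mkCos]

@[simp] lemma act_one (v : Cos g J) : act v 1 = v := by
  obtain ⟨x, rfl⟩ := mkCos_surjective v
  rw [act_mkCos, mul_one]

lemma act_mul (v : Cos g J) (a b : Gamma g) : act v (a * b) = act (act v a) b := by
  obtain ⟨x, rfl⟩ := mkCos_surjective v
  simp only [act_mkCos, mul_assoc]

@[simp] lemma act_act_inv_cancel (v : Cos g J) (a : Gamma g) : act (act v a) a⁻¹ = v := by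
  rw [← act_mul, mul_inv_cancel, act_one]

@[simp] lemma act_inv_act_cancel (v : Cos g J) (a : Gamma g) : act (act v a⁻¹) a = v := by
  rw [← act_mul, inv_mul_cancel, act_one]

variable (g J) in
/-- Darts of `J\~Σ_g` encoded as pairs (tail, letter); unlike `(cover g J).D`, whose negative darts
are stored by the source of the underlying edge, this makes walks a plain recursion. -/
abbrev Dart := Cos g J × Letter g

namespace Dart

/-- The terminal vertex of a dart. -/
def head (d : Dart g J) : Cos g J := act d.1 (letterG d.2)

/-- The reversal of a dart. -/
def rev (d : Dart g J) : Dart g J := (d.head, d.2.inv)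

@[simp] lemma rev_fst (d : Dart g J) : d.rev.1 = d.head := rfl

@[simp] lemma rev_snd (d : Dart g J) : d.rev.2 = d.2.inv := rfl

@[simp] lemma head_rev (d : Dart g J) : d.rev.head = d.1 := by simp [head, rev, letterG_inv]

@[simp] lemma rev_rev (d : Dart g J) : d.rev.rev = d := Prod.ext d.head_rev d.2.inv_inv

lemma rev_injective : Function.Injective (rev : Dart g J → Dart g J) :=
  Function.LeftInverse.injective rev_rev

lemma rev_eq_iff {d e : Dart g J} : d.rev = e ↔ d = e.rev :=
  ⟨fun h => by rw [← h, rev_rev], fun h => by rw [h, rev_rev]⟩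

/-- The dart of the complex `cover g J` given by a (tail, letter) pair. -/
def toCover (d : Dart g J) : (cover g J).D :=
  if d.2.2 then ((d.1, d.2.1), true) else ((d.head, d.2.1), false)

/-- The (tail, letter) pair of a dart of the complex `cover g J`; inverse to `Dart.toCover`. -/
def ofCover (d : (cover g J).D) : Dart g J := ((cover g J).dTail d, (cover g J).dLet d)

lemma ofCover_toCover (d : Dart g J) : ofCover d.toCover = d := by
  rcases d with ⟨x, a, _ | _⟩
  · exact Prod.ext (act_inv_act_cancel x _) rfl
  · rfl

lemma toCover_ofCover (d : (cover g J).D) : (ofCover d).toCover = d := by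
  rcases d with ⟨⟨x, a⟩, _ | _⟩
  · exact Prod.ext (Prod.ext (act_act_inv_cancel x _) rfl) rfl
  · rfl

lemma toCover_injective : Function.Injective (toCover : Dart g J → _) :=
  Function.LeftInverse.injective ofCover_toCover

lemma toCover_surjective : Function.Surjective (toCover : Dart g J → _) :=
  Function.RightInverse.surjective toCover_ofCover

lemma dLet_toCover (d : Dart g J) : (cover g J).dLet d.toCover = d.2 :=
  congrArg Prod.snd d.ofCover_toCover

lemma dTail_toCover (d : Dart g J) : (cover g J).dTail d.toCover = d.1 :=
  congrArg Prod.fst d.ofCover_toCover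

lemma dHead_toCover (d : Dart g J) : (cover g J).dHead d.toCover = d.head := by
  rcases d with ⟨x, a, _ | _⟩ <;> rfl

lemma dRev_toCover (d : Dart g J) : (cover g J).dRev d.toCover = d.rev.toCover := by
  rcases d with ⟨x, a, _ | _⟩
  · rfl
  · exact Prod.ext (Prod.ext (head_rev (x, (a, true))).symm rfl) rfl

lemma toCover_rev_fst (d : Dart g J) : d.rev.toCover.1 = d.toCover.1 :=
  (congrArg Prod.fst d.dRev_toCover).symm

lemma eq_or_eq_rev_of_toCover_fst_eq {d e : Dart g J} (h : d.toCover.1 = e.toCover.1) :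
    d = e ∨ d = e.rev := by
  by_cases hdir : d.toCover.2 = e.toCover.2
  · exact .inl (toCover_injective (Prod.ext h hdir))
  · refine .inr (toCover_injective ?_)
    rw [← dRev_toCover]
    exact Prod.ext h (Bool.eq_not.mpr hdir)

lemma adj_toCover (d e : Dart g J) : (cover g J).adj d.toCover e.toCover ↔ d.head = e.1 := by
  rw [Complex.adj, dHead_toCover, dTail_toCover]; rfl

end Dart

/-- The list of darts of the walk starting at a vertex and reading a given word. -/
def dartWalk : Cos g J → List (Letter g) → List (Dart g J)
  | _, [] => []
  | v, s :: w => (v, s) :: dartWalk (act v (letterG s)) w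

lemma dartWalk_append (v : Cos g J) (w w' : List (Letter g)) :
    dartWalk v (w ++ w') = dartWalk v w ++ dartWalk (act v (wordG w)) w' := by
  induction w generalizing v with
  | nil => simp [dartWalk]
  | cons s w ih => simp [dartWalk, ih, act_mul]

lemma length_dartWalk (v : Cos g J) (w : List (Letter g)) :
    (dartWalk v w).length = w.length := by
  induction w generalizing v with
  | nil => rfl
  | cons s w ih => simp [dartWalk, ih]

lemma map_snd_dartWalk (v : Cos g J) (w : List (Letter g)) : (dartWalk v w).map Prod.snd = w := by
  induction w generalizing v with
  | nil => rfl
  | cons s w ih => simp [dartWalk, ih]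

lemma getElem_dartWalk (v : Cos g J) (w : List (Letter g)) (p : ℕ)
    (hp : p < (dartWalk v w).length) :
    (dartWalk v w)[p] =
      (act v (wordG (w.take p)), w[p]'(by rwa [length_dartWalk] at hp)) := by
  induction w generalizing v p with
  | nil => simp [dartWalk] at hp
  | cons s w ih => cases p <;> simp [dartWalk, ih, act_mul]

lemma dartWalk_invWord (v : Cos g J) (w : List (Letter g)) :
    dartWalk (act v (wordG w)) (invWord w) = ((dartWalk v w).map Dart.rev).reverse := by
  induction w generalizing v with
  | nil => simp [dartWalk, invWord]
  | cons s w ih =>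
    rw [invWord_cons, dartWalk_append, wordG_cons, act_mul, ih, wordG_invWord, act_act_inv_cancel]
    simp only [dartWalk, List.map_cons, List.reverse_cons]
    rfl

lemma relWalk_eq_map_dartWalk (v : Cos g J) (w : List (Letter g)) :
    relWalk g J v w = (dartWalk v w).map Dart.toCover := by
  induction w generalizing v with
  | nil => rfl
  | cons s w ih =>
    rcases s with ⟨a, _ | _⟩ <;> simp only [relWalk, dartWalk, List.map_cons, ih] <;> rfl

lemma bdry_cover (f : Cos g J) :
    (cover g J).bdry f = (dartWalk f (relatorWord g)).map Dart.toCover :=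
  relWalk_eq_map_dartWalk f _

lemma walkFrom_dartWalk (v : Cos g J) (w : List (Letter g)) :
    (cover g J).WalkFrom v (act v (wordG w)) ((dartWalk v w).map Dart.toCover) := by
  induction w generalizing v with
  | nil => rw [wordG_nil, act_one]; exact .nil _
  | cons s w ih =>
    have htail := ih (Dart.head (v, s))
    rw [Dart.head, ← act_mul, ← wordG_cons, ← Dart.head, ← Dart.dHead_toCover] at htail
    have hwalk := Complex.WalkFrom.cons _ htail
    rwa [Dart.dTail_toCover, Dart.dHead_toCover] at hwalk

lemma walkFrom_iff {u v : (cover g J).V} {l : List (cover g J).D} :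
    (cover g J).WalkFrom u v l ↔
      ∃ w, l = (dartWalk (u : Cos g J) w).map Dart.toCover ∧ v = act (u : Cos g J) (wordG w) := by
  refine ⟨fun h => ?_, ?_⟩
  · induction h with
    | nil v => exact ⟨[], rfl, (act_one (J := J) v).symm⟩
    | cons d h ih =>
      obtain ⟨w, hw, hv⟩ := ih
      obtain ⟨d, rfl⟩ := Dart.toCover_surjective d
      rw [Dart.dHead_toCover] at hw hv
      rw [Dart.dTail_toCover]
      exact ⟨d.2 :: w, by rw [hw]; rfl, by rw [hv, wordG_cons, act_mul]; rfl⟩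
  · rintro ⟨w, rfl, rfl⟩
    exact walkFrom_dartWalk _ _

lemma wordOf_dartWalk (v : Cos g J) (w : List (Letter g)) :
    (cover g J).wordOf ((dartWalk v w).map Dart.toCover) = w := by
  rw [Complex.wordOf, List.map_map]
  exact (List.map_congr_left fun d _ => d.dLet_toCover).trans (map_snd_dartWalk v w)

lemma revW_map_toCover (l : List (Dart g J)) :
    (cover g J).revW (l.map Dart.toCover) = ((l.map Dart.rev).reverse).map Dart.toCover := by
  simp only [Complex.revW, List.map_map, List.map_reverse]
  exact congrArg _ (List.map_congr_left fun d _ => d.dRev_toCover)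

/-- The element of `Γ_g` read along the relator before the occurrence of `s`. -/
def Letter.prefixElt (s : Letter g) : Gamma g := wordG ((relatorWord g).take s.relPos)

lemma Letter.prefixElt_next (s : Letter g) : s.next.prefixElt = s.prefixElt * letterG s := by
  have hs := s.relPos_lt
  have hlen : s.relPos < (relatorWord g).length := by rwa [length_relatorWord]
  have hsucc : wordG ((relatorWord g).take (s.relPos + 1)) = s.prefixElt * letterG s := by
    rw [List.take_succ_eq_append_getElem hlen, wordG_append, getElem_relatorWord,
      Letter.ofRelPos_relPos]
    simp [prefixElt]
  rw [← hsucc, prefixElt, relPos_next]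
  by_cases hlast : s.relPos + 1 = 4 * g
  · rw [hlast, Nat.mod_self, ← length_relatorWord, List.take_length, wordG_relatorWord]
    rfl
  · rw [Nat.mod_eq_of_lt (by omega)]

namespace Dart

/-- The face to the left of a dart: the one whose boundary walk traverses it. -/
def face (d : Dart g J) : Cos g J := act d.1 d.2.prefixElt⁻¹

/-- The successor of a dart on the boundary walk of the face to its left. -/
def next (d : Dart g J) : Dart g J := (d.head, d.2.next)

@[simp] lemma next_fst (d : Dart g J) : d.next.1 = d.head := rfl

lemma face_next (d : Dart g J) : d.next.face = d.face := by
  simp only [face, next, head, Letter.prefixElt_next, mul_inv_rev, act_mul, act_act_inv_cancel]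

lemma face_rev (d : Dart g J) : d.rev.face = face (d.1, d.2.rot) := by
  rw [← face_next]
  simp [next, Letter.next]

end Dart

lemma getElem?_dartWalk_relPos (d : Dart g J) :
    (dartWalk d.face (relatorWord g))[d.2.relPos]? = some d := by
  have hlen : d.2.relPos < (dartWalk d.face (relatorWord g)).length := by
    rw [length_dartWalk, length_relatorWord]; exact d.2.relPos_lt
  rw [List.getElem?_eq_getElem hlen, getElem_dartWalk, getElem_relatorWord, Letter.ofRelPos_relPos,
    ← Letter.prefixElt, Dart.face, act_inv_act_cancel]

lemma mem_dartWalk_relatorWord {f : Cos g J} {d : Dart g J} :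
    d ∈ dartWalk f (relatorWord g) ↔ d.face = f := by
  constructor
  · rw [List.mem_iff_getElem]
    rintro ⟨p, hp, rfl⟩
    rw [getElem_dartWalk, Dart.face, getElem_relatorWord, Letter.prefixElt, Letter.relPos_ofRelPos,
      act_act_inv_cancel]
  · rintro rfl
    exact List.mem_of_getElem? (getElem?_dartWalk_relPos d)

lemma nodup_dartWalk_relatorWord (f : Cos g J) : (dartWalk f (relatorWord g)).Nodup := by
  rw [List.nodup_iff_injective_getElem]
  rintro ⟨p, hp⟩ ⟨q, hq⟩ h
  have hpos := congrArg (fun d : Dart g J => d.2.relPos) h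
  simp only [getElem_dartWalk, getElem_relatorWord, Letter.relPos_ofRelPos] at hpos
  exact Fin.ext hpos

/-- The cellular 1-chain of a list of darts, as a function on darts that is odd under reversal. -/
def chain (l : List (Dart g J)) (d : Dart g J) : ℤ := (l.count d : ℤ) - l.count d.rev

/-- The cellular boundary of a (not necessarily finite) 2-chain. -/
def boundary (f : Cos g J → ℤ) (d : Dart g J) : ℤ := f d.face - f d.rev.face

lemma chain_nil : chain ([] : List (Dart g J)) = 0 := by ext d; simp [chain]

lemma chain_append (l l' : List (Dart g J)) : chain (l ++ l') = chain l + chain l' := by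
  ext d; simp [chain]; ring

lemma chain_cons (d : Dart g J) (l : List (Dart g J)) : chain (d :: l) = chain [d] + chain l :=
  chain_append [d] l

lemma chain_rev (l : List (Dart g J)) (d : Dart g J) : chain l d.rev = -chain l d := by
  simp [chain]

lemma chain_reverse_map_rev (l : List (Dart g J)) :
    chain ((l.map Dart.rev).reverse) = -chain l := by
  have hcount (e : Dart g J) : ((l.map Dart.rev).reverse).count e = l.count e.rev := by
    rw [List.count_reverse, ← List.count_map_of_injective l _ Dart.rev_injective, Dart.rev_rev]
  ext d
  simp [chain, hcount]

lemma finite_support_chain (l : List (Dart g J)) : (Function.support (chain l)).Finite := by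
  refine (l ++ l.map Dart.rev).toFinset.finite_toSet.subset fun d hd => ?_
  by_contra hmem
  simp only [List.toFinset_append, Finset.coe_union, List.coe_toFinset, Set.mem_union,
    Set.mem_ofPred_eq, not_or] at hmem
  have hrev : d.rev ∉ l := fun h => hmem.2 (List.mem_map.mpr ⟨_, h, d.rev_rev⟩)
  exact hd (by simp [chain, List.count_eq_zero_of_not_mem hmem.1,
    List.count_eq_zero_of_not_mem hrev])

lemma chain_singleton_apply (d : Dart g J) (x : Cos g J) (s : Letter g) :
    chain [d] (x, s) = (if s = d.2 then (Pi.single d.1 1 : Cos g J → ℤ) x else 0) -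
      if s = d.2.inv then (Pi.single d.head 1 : Cos g J → ℤ) x else 0 := by
  have htail : d = (x, s) ↔ s = d.2 ∧ x = d.1 :=
    ⟨by rintro rfl; simp, by rintro ⟨rfl, rfl⟩; rfl⟩
  have hhead : d = Dart.rev (x, s) ↔ s = d.2.inv ∧ x = d.head := by
    rw [← Dart.rev_eq_iff]
    exact ⟨fun h => ⟨(congrArg Prod.snd h).symm, (congrArg Prod.fst h).symm⟩,
      by rintro ⟨rfl, rfl⟩; rfl⟩
  simp only [chain, List.count_singleton, beq_iff_eq, htail, hhead, Pi.single_apply, ite_and,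
    Nat.cast_ite, Nat.cast_one, Nat.cast_zero]

lemma sum_chain_dartWalk (v : Cos g J) (w : List (Letter g)) (x : Cos g J) :
    ∑ s, chain (dartWalk v w) (x, s) =
      (Pi.single v 1 - Pi.single (act v (wordG w)) 1 : Cos g J → ℤ) x := by
  induction w generalizing v with
  | nil => simp [dartWalk, chain_nil]
  | cons s w ih =>
    have hsingle : ∑ t, chain [((v, s) : Dart g J)] (x, t) =
        (Pi.single v 1 : Cos g J → ℤ) x - (Pi.single (act v (letterG s)) 1 : Cos g J → ℤ) x := by
      simp only [chain_singleton_apply, Finset.sum_sub_distrib, Finset.sum_ite_eq',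
        Finset.mem_univ, if_true, Dart.head]
    rw [dartWalk, chain_cons]
    simp only [Pi.add_apply, Finset.sum_add_distrib, hsingle, ih, wordG_cons, act_mul,
      Pi.sub_apply]
    ring

lemma boundary_rev (f : Cos g J → ℤ) (d : Dart g J) : boundary f d.rev = -boundary f d := by
  simp [boundary]

lemma boundary_add (f f' : Cos g J → ℤ) : boundary (f + f') = boundary f + boundary f' := by
  ext d; simp [boundary]; ring

lemma boundary_sub (f f' : Cos g J → ℤ) : boundary (f - f') = boundary f - boundary f' := by
  ext d; simp [boundary]; ring

lemma boundary_smul (k : ℤ) (f : Cos g J → ℤ) : boundary (k • f) = k • boundary f := by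
  ext d; simp [boundary]; ring

lemma chain_relatorWord (f : Cos g J) :
    chain (dartWalk f (relatorWord g)) = boundary (Pi.single f 1) := by
  have hcount (e : Dart g J) :
      ((dartWalk f (relatorWord g)).count e : ℤ) = (Pi.single f 1 : Cos g J → ℤ) e.face := by
    by_cases he : e.face = f
    · rw [List.count_eq_one_of_mem (nodup_dartWalk_relatorWord f)
        (mem_dartWalk_relatorWord.mpr he), he]
      simp
    · rw [List.count_eq_zero_of_not_mem (fun h => he (mem_dartWalk_relatorWord.mp h))]
      simp [he]
  ext d
  simp only [chain, boundary, hcount]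

lemma sum_boundary (f : Cos g J → ℤ) (x : Cos g J) : ∑ s, boundary f (x, s) = 0 := by
  simp only [boundary, Dart.face_rev, Finset.sum_sub_distrib]
  rw [sub_eq_zero]
  exact (Letter.rot_bijective.sum_comp fun s => f (Dart.face (x, s))).symm

/-- Finitely supported cellular 1-cycles. -/
structure IsOneCycle (z : Dart g J → ℤ) : Prop where
  anti : ∀ d, z d.rev = -z d
  sum_eq_zero : ∀ x, ∑ s, z (x, s) = 0
  finite_support : (Function.support z).Finite

lemma isOneCycle_chain {v : Cos g J} {w : List (Letter g)} (h : act v (wordG w) = v) :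
    IsOneCycle (chain (dartWalk v w)) where
  anti := chain_rev _
  sum_eq_zero x := by rw [sum_chain_dartWalk, h, sub_self, Pi.zero_apply]
  finite_support := finite_support_chain _

lemma isOneCycle_boundary {f : Cos g J → ℤ} (h : (Function.support (boundary f)).Finite) :
    IsOneCycle (boundary f) :=
  ⟨boundary_rev f, sum_boundary f, h⟩

lemma finite_setOf_face_mem {A : Set (Cos g J)} (h : A.Finite) :
    {d : Dart g J | d.face ∈ A}.Finite := by
  refine ((h.prod Set.finite_univ).image
    fun p : Cos g J × Letter g => ((act p.1 p.2.prefixElt, p.2) : Dart g J)).subset fun d hd => ?_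
  exact ⟨(Dart.face d, d.2), ⟨hd, trivial⟩, by simp [Dart.face]⟩

lemma finite_support_boundary {f : Cos g J → ℤ} (h : (Function.support f).Finite) :
    (Function.support (boundary f)).Finite := by
  have hleft := finite_setOf_face_mem h
  refine (hleft.union (hleft.preimage Dart.rev_injective.injOn)).subset fun d hd => ?_
  by_contra hmem
  simp only [Set.mem_union, Set.mem_ofPred_eq, Set.mem_preimage, Function.mem_support, not_or,
    not_not] at hmem
  exact hd (by simp [boundary, hmem.1, hmem.2])

lemma eq_of_head_invariant {α : Type*} {F : Cos g J → α} (h : ∀ d : Dart g J, F d.head = F d.1)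
    (x y : Cos g J) : F x = F y := by
  have hword (w : List (Letter g)) (z : Cos g J) : F (act z (wordG w)) = F z := by
    induction w generalizing z with
    | nil => simp
    | cons s w ih => rw [wordG_cons, act_mul, ih]; exact h (z, s)
  obtain ⟨x, rfl⟩ := mkCos_surjective x
  obtain ⟨y, rfl⟩ := mkCos_surjective y
  obtain ⟨w, hw⟩ := wordG_surjective (x⁻¹ * y)
  rw [← hword w (mkCos g J x), hw, act_mkCos, mul_inv_cancel_left]

lemma eq_of_face_rev_invariant {α : Type*} {f : Cos g J → α}
    (h : ∀ d : Dart g J, f d.face = f d.rev.face) (hg : 0 < g) (u v : Cos g J) : f u = f v := by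
  let s₀ : Letter g := Letter.ofRelPos 0 (by omega)
  have haround (x s t) : f (Dart.face (x, s)) = f (Dart.face (x, t)) :=
    Letter.eq_of_rot_invariant (p := fun s => f (Dart.face (x, s)))
      (fun s => by rw [h (x, s), Dart.face_rev]) s t
  have hface (x : Cos g J) : f x = f (Dart.face (act x s₀.prefixElt, s₀)) := by simp [Dart.face]
  rw [hface u, hface v]
  refine eq_of_head_invariant (F := fun x => f (Dart.face (x, s₀))) (fun d => ?_) _ _
  calc f (Dart.face (d.head, s₀)) = f d.next.face := haround _ _ _
    _ = f d.face := by rw [d.face_next]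
    _ = f (Dart.face (d.1, s₀)) := haround _ _ _

end Darts

section Homology

variable {g : ℕ} {J : Subgroup (Gamma g)} {A : Type*} [AddCommGroup A]

/-- The sum of a 1-cochain along a list of darts. -/
def walkSum (t : Dart g J → A) (l : List (Dart g J)) : A := (l.map t).sum

@[simp] lemma walkSum_nil (t : Dart g J → A) : walkSum t [] = 0 := rfl

@[simp] lemma walkSum_cons (t : Dart g J → A) (d : Dart g J) (l : List (Dart g J)) :
    walkSum t (d :: l) = t d + walkSum t l := by simp [walkSum]

@[simp] lemma walkSum_append (t : Dart g J → A) (l l' : List (Dart g J)) :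
    walkSum t (l ++ l') = walkSum t l + walkSum t l' := by simp [walkSum]

/-- A word representing a given element of `Γ_g`. -/
def wordRep : Gamma g → List (Letter g) := Function.surjInv wordG_surjective

@[simp] lemma wordG_wordRep (x : Gamma g) : wordG (wordRep x) = x :=
  Function.surjInv_eq wordG_surjective x

@[simp] lemma mkCos_out (v : Cos g J) : mkCos g J v.out = v := Quotient.out_eq v

variable (g J) in
/-- The base vertex of `J\~Σ_g`. -/
def base : Cos g J := mkCos g J 1

lemma act_base (x : Gamma g) : act (base g J) x = mkCos g J x := by simp [base, act_mkCos]

lemma act_base_of_mem {x : Gamma g} (h : x ∈ J) : act (base g J) x = base g J := by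
  rw [act_base, base, mkCos_eq_mkCos]; simpa using J.inv_mem h

/-- Cellular 1-cocycles with values in `A`. -/
structure IsCocycle (t : Dart g J → A) : Prop where
  anti : ∀ d, t d.rev = -t d
  walkSum_relator : ∀ f, walkSum t (dartWalk f (relatorWord g)) = 0

/-- The integral of a cochain along the lift at `v` of the element `x` of `Γ_g`; for a cocycle it
does not depend on the word representing `x`. -/
def integral (t : Dart g J → A) (v : Cos g J) (x : Gamma g) : A :=
  walkSum t (dartWalk v (wordRep x))

namespace IsCocycle

variable {t : Dart g J → A} (ht : IsCocycle t)

include ht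

lemma walkSum_congr {w w' : List (Letter g)} (h : wordG w = wordG w') (v : Cos g J) :
    walkSum t (dartWalk v w) = walkSum t (dartWalk v w') := by
  let c : Con (FreeMonoid (Letter g)) :=
    { r := fun a b => wordG a.toList = wordG b.toList ∧
        ∀ v : Cos g J, walkSum t (dartWalk v a.toList) = walkSum t (dartWalk v b.toList)
      iseqv := ⟨fun _ => ⟨rfl, fun _ => rfl⟩, fun h => ⟨h.1.symm, fun v => (h.2 v).symm⟩,
        fun h h' => ⟨h.1.trans h'.1, fun v => (h.2 v).trans (h'.2 v)⟩⟩
      mul' := fun {a b a' b'} h h' => by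
        simp only [FreeMonoid.toList_mul, wordG_append, dartWalk_append, walkSum_append, h.1, h.2,
          h'.1, h'.2, implies_true, and_self] }
  refine (con_of_wordG_eq c (fun s => ⟨?_, fun v => ?_⟩) ⟨wordG_relatorWord, ?_⟩ h).2 v
  · simp [letterG_inv]
  · have hanti := ht.anti (v, s)
    simp only [Dart.rev, Dart.head] at hanti
    simp [dartWalk, hanti]
  · exact ht.walkSum_relator

lemma walkSum_eq_integral (v : Cos g J) (w : List (Letter g)) :
    walkSum t (dartWalk v w) = integral t v (wordG w) :=
  ht.walkSum_congr (by simp) v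

lemma integral_mul (v : Cos g J) (x y : Gamma g) :
    integral t v (x * y) = integral t v x + integral t (act v x) y := by
  have happend := ht.walkSum_eq_integral v (wordRep x ++ wordRep y)
  rw [dartWalk_append, walkSum_append, wordG_append, wordG_wordRep, wordG_wordRep] at happend
  exact happend.symm

lemma integral_one (v : Cos g J) : integral t v 1 = 0 := (ht.walkSum_eq_integral v []).symm

lemma integral_base_zpow {γ : Gamma g} (hγ : γ ∈ J) (k : ℤ) :
    integral t (base g J) (γ ^ k) = k • integral t (base g J) γ := by
  have hadd {x y : Gamma g} (hx : x ∈ J) : integral t (base g J) (x * y) =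
      integral t (base g J) x + integral t (base g J) y := by
    rw [ht.integral_mul, act_base_of_mem hx]
  induction k with
  | zero => rw [zpow_zero, zero_smul, ht.integral_one]
  | succ n ih => rw [zpow_add_one, hadd (J.zpow_mem hγ _), ih, add_smul, one_smul]
  | pred n ih =>
    have hstep := hadd (y := γ) (J.zpow_mem hγ (-(n : ℤ) - 1))
    rw [← zpow_add_one, sub_add_cancel, ih] at hstep
    rw [sub_smul, one_smul, hstep, add_sub_cancel_right]

lemma walkSum_of_conj_eq_zpow {γ : Gamma g} (hγ : γ ∈ J) {k : ℤ} {x : Gamma g}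
    {w : List (Letter g)} (hw : x * wordG w * x⁻¹ = γ ^ k) :
    walkSum t (dartWalk (mkCos g J x) w) = k • integral t (base g J) γ := by
  have hcomm : x * wordG w = γ ^ k * x := mul_inv_eq_iff_eq_mul.mp hw
  have hint := congrArg (integral t (base g J)) hcomm
  rw [ht.integral_mul, ht.integral_mul, act_base_of_mem (J.zpow_mem hγ k),
    ht.integral_base_zpow hγ, act_base, ← ht.walkSum_eq_integral, add_comm] at hint
  exact add_right_cancel hint

lemma exists_eq_potential_add_smul {γ : Gamma g} (hJ : J = Subgroup.zpowers γ) :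
    ∃ (P : Cos g J → A) (κ : Dart g J → ℤ),
      ∀ d, t d = P d.head - P d.1 + κ d • integral t (base g J) γ := by
  have hγ : γ ∈ J := hJ ▸ Subgroup.mem_zpowers γ
  have hpow (d : Dart g J) : ∃ k : ℤ, γ ^ k = d.1.out * letterG d.2 * d.head.out⁻¹ := by
    rw [← Subgroup.mem_zpowers_iff, ← hJ, ← mkCos_eq_mkCos, ← act_mkCos]
    simp [Dart.head]
  choose κ hκ using hpow
  refine ⟨fun v => integral t (base g J) v.out, κ, fun d => ?_⟩
  have hcomm : d.1.out * letterG d.2 = γ ^ κ d * d.head.out := by rw [hκ]; group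
  have hdart : integral t d.1 (letterG d.2) = t d := by
    simpa [dartWalk] using (ht.walkSum_eq_integral d.1 [d.2]).symm
  have hint := congrArg (integral t (base g J)) hcomm
  rw [ht.integral_mul, ht.integral_mul, act_base_of_mem (J.zpow_mem hγ _),
    ht.integral_base_zpow hγ, act_base, mkCos_out, hdart] at hint
  rw [eq_sub_of_add_eq' hint]
  abel

end IsCocycle

/-- The positive dart along an edge. -/
def Dart.ofEdge (e : Cos g J × Fin (2 * g)) : Dart g J := (e.1, (e.2, true))

lemma Dart.exists_ofEdge_eq (d : Dart g J) : ∃ e, d = ofEdge e ∨ d = (ofEdge e).rev := by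
  rcases d with ⟨v, a, _ | _⟩
  · exact ⟨(Dart.head (v, (a, false)), a), .inr (Dart.rev_rev (v, (a, false))).symm⟩
  · exact ⟨(v, a), .inl rfl⟩

lemma Dart.ofEdge_injective : Function.Injective (ofEdge : _ → Dart g J) := by
  rintro ⟨v, a⟩ ⟨v', a'⟩ h
  simpa [ofEdge] using h

lemma Dart.ofEdge_ne_rev (e e' : Cos g J × Fin (2 * g)) : ofEdge e ≠ (ofEdge e').rev := by
  simp [ofEdge, rev, Letter.inv]

/-- Evaluation of a 1-cochain on a 1-chain. Only positive darts contribute, since for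
antisymmetric arguments each term is invariant under reversal. -/
def pairing (z : Dart g J → ℤ) (t : Dart g J → A) : A :=
  ∑ᶠ e, z (Dart.ofEdge e) • t (Dart.ofEdge e)

lemma hasFiniteSupport_smul_ofEdge {z : Dart g J → ℤ} (hz : (Function.support z).Finite)
    (t : Dart g J → A) :
    Function.HasFiniteSupport fun e => z (Dart.ofEdge e) • t (Dart.ofEdge e) :=
  (hz.preimage Dart.ofEdge_injective.injOn).subset fun e he h => he (by simp [h])

lemma pairing_add_left {z z' : Dart g J → ℤ} (hz : (Function.support z).Finite)
    (hz' : (Function.support z').Finite) (t : Dart g J → A) :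
    pairing (z + z') t = pairing z t + pairing z' t := by
  simp only [pairing, Pi.add_apply, add_smul]
  exact finsum_add_distrib (hasFiniteSupport_smul_ofEdge hz t) (hasFiniteSupport_smul_ofEdge hz' t)

lemma pairing_add_right {z : Dart g J → ℤ} (hz : (Function.support z).Finite)
    (t t' : Dart g J → A) : pairing z (t + t') = pairing z t + pairing z t' := by
  simp only [pairing, Pi.add_apply, smul_add]
  exact finsum_add_distrib (hasFiniteSupport_smul_ofEdge hz t) (hasFiniteSupport_smul_ofEdge hz t')

lemma pairing_smul_left {z : Dart g J → ℤ} (hz : (Function.support z).Finite) (k : ℤ)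
    (t : Dart g J → A) : pairing (k • z) t = k • pairing z t := by
  simp only [pairing, Pi.smul_apply, smul_assoc]
  exact (smul_finsum' _ (hasFiniteSupport_smul_ofEdge hz t)).symm

lemma map_pairing {B : Type*} [AddCommGroup B] (q : A →+ B) {z : Dart g J → ℤ}
    (hz : (Function.support z).Finite) (t : Dart g J → A) :
    q (pairing z t) = pairing z fun d => q (t d) := by
  simp only [pairing, q.map_finsum (hasFiniteSupport_smul_ofEdge hz t), map_zsmul]

lemma finsum_dart_eq_zero {F : Dart g J → A} (hF : (Function.support F).Finite)
    (h : ∀ x, ∑ s, F (x, s) = 0) : ∑ᶠ d, F d = 0 := by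
  rw [finsum_curry F hF]
  simp only [finsum_eq_sum_of_fintype, h, finsum_zero]

lemma finsum_dart_eq_finsum_edge {F : Dart g J → A} (hF : (Function.support F).Finite) :
    ∑ᶠ d, F d = ∑ᶠ e, (F (Dart.ofEdge e) + F (Dart.ofEdge e).rev) := by
  let σ : (Cos g J × Fin (2 * g)) × Bool → Dart g J := fun d => Dart.ofCover (J := J) d
  have hσ : Function.Bijective σ :=
    ⟨Function.LeftInverse.injective Dart.toCover_ofCover,
      Function.RightInverse.surjective Dart.ofCover_toCover⟩
  have hσF : (Function.support (F ∘ σ)).Finite := hF.preimage hσ.1.injOn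
  rw [← finsum_comp (g := F) σ hσ]
  refine (finsum_curry (F ∘ σ) hσF).trans (finsum_congr fun e => ?_)
  rw [finsum_eq_sum_of_fintype, Fintype.sum_bool]
  rfl

lemma IsOneCycle.pairing_potential {z : Dart g J → ℤ} (hz : IsOneCycle z) (P : Cos g J → A) :
    pairing z (fun d => P d.head - P d.1) = 0 := by
  have hfin : (Function.support fun d : Dart g J => z d • P d.1).Finite :=
    hz.finite_support.subset fun d hd h => hd (by simp [h])
  have hvert : ∑ᶠ d : Dart g J, z d • P d.1 = 0 := finsum_dart_eq_zero hfin fun x => by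
    change ∑ s, z (x, s) • P x = 0
    rw [← Finset.sum_smul, hz.sum_eq_zero, zero_smul]
  rw [finsum_dart_eq_finsum_edge hfin] at hvert
  rw [← neg_eq_zero, ← hvert, pairing, ← finsum_neg_distrib]
  refine finsum_congr fun e => ?_
  rw [hz.anti, Dart.rev_fst, smul_sub, neg_smul]
  abel

lemma chain_singleton (d e : Dart g J) :
    chain [d] e = (if d = e then 1 else 0) - (if d = e.rev then 1 else 0) := by
  simp only [chain, List.count_singleton, beq_iff_eq, Nat.cast_ite, Nat.cast_one, Nat.cast_zero]

lemma chain_singleton_comm (d e : Dart g J) : chain [d] e = chain [e] d := by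
  have hrev : d = e.rev ↔ e = d.rev := by rw [← Dart.rev_eq_iff, eq_comm]
  simp only [chain_singleton, eq_comm (a := d) (b := e), hrev]

lemma chain_singleton_rev (d : Dart g J) : chain [d.rev] = -chain [d] := by
  simpa using chain_reverse_map_rev [d]

lemma pairing_chain_singleton {t : Dart g J → A} (ht : ∀ d, t d.rev = -t d) (d : Dart g J) :
    pairing (chain [d]) t = t d := by
  have hpos (e : Cos g J × Fin (2 * g)) :
      pairing (chain [Dart.ofEdge e]) t = t (Dart.ofEdge e) := by
    rw [pairing, finsum_eq_single _ e]
    · simp [chain_singleton, Dart.ofEdge_ne_rev]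
    · intro e' he'
      simp [chain_singleton, Dart.ofEdge_ne_rev, Dart.ofEdge_injective.ne he'.symm]
  obtain ⟨e, rfl | rfl⟩ := d.exists_ofEdge_eq
  · exact hpos e
  · rw [chain_singleton_rev, ← neg_one_zsmul, pairing_smul_left (finite_support_chain _), hpos, ht,
      neg_one_zsmul]

lemma pairing_chain {t : Dart g J → A} (ht : ∀ d, t d.rev = -t d) (l : List (Dart g J)) :
    pairing (chain l) t = walkSum t l := by
  induction l with
  | nil => simp [chain_nil, pairing]
  | cons d l ih =>
    rw [chain_cons, pairing_add_left (finite_support_chain _) (finite_support_chain _), ih,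
      pairing_chain_singleton ht, walkSum_cons]

lemma IsOneCycle.pairing_chain_singleton_eq {z : Dart g J → ℤ} (hz : IsOneCycle z) :
    pairing z (fun d => chain [d]) = z := by
  ext e
  calc pairing z (fun d => chain [d]) e = pairing z (fun d => chain [d] e) :=
        map_pairing (Pi.evalAddMonoidHom (fun _ : Dart g J => ℤ) e) hz.finite_support
          fun d => chain [d]
    _ = pairing (chain [e]) z :=
        finsum_congr fun d => by rw [chain_singleton_comm, smul_eq_mul, smul_eq_mul, mul_comm]
    _ = z e := pairing_chain_singleton hz.anti e

variable (g J) in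
/-- The boundaries of finite 2-chains. -/
def finiteBoundaries : AddSubgroup (Dart g J → ℤ) where
  carrier := {z | ∃ h : Cos g J → ℤ, (Function.support h).Finite ∧ z = boundary h}
  zero_mem' := ⟨0, by simp, by ext; simp [boundary]⟩
  add_mem' := by
    rintro _ _ ⟨h, hh, rfl⟩ ⟨h', hh', rfl⟩
    exact ⟨h + h', (hh.union hh').subset (Function.support_add h h'), (boundary_add h h').symm⟩
  neg_mem' := by
    rintro _ ⟨h, hh, rfl⟩
    exact ⟨-h, by simpa using hh, by ext; simp [boundary]; ring⟩

lemma exists_eq_add_boundary_of_mk_eq {z z' : Dart g J → ℤ}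
    (h : (QuotientAddGroup.mk z : _ ⧸ finiteBoundaries g J) = QuotientAddGroup.mk z') :
    ∃ f : Cos g J → ℤ, (Function.support f).Finite ∧ z = z' + boundary f := by
  obtain ⟨f, hf, he⟩ := QuotientAddGroup.eq.mp h.symm
  exact ⟨f, hf, by rw [← he]; abel⟩

variable (g J) in
/-- The universal 1-cocycle: a dart is sent to the class of its chain modulo boundaries. -/
def dartClass (d : Dart g J) : (Dart g J → ℤ) ⧸ finiteBoundaries g J :=
  QuotientAddGroup.mk (chain [d])

lemma walkSum_dartClass (l : List (Dart g J)) :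
    walkSum (dartClass g J) l = QuotientAddGroup.mk (chain l) := by
  induction l with
  | nil => rw [chain_nil]; rfl
  | cons d l ih => rw [walkSum_cons, ih, chain_cons]; rfl

lemma isCocycle_dartClass : IsCocycle (dartClass g J) where
  anti d := by rw [dartClass, chain_singleton_rev]; rfl
  walkSum_relator f := by
    rw [walkSum_dartClass, QuotientAddGroup.eq_zero_iff]
    exact ⟨Pi.single f 1, (Set.finite_singleton f).subset Pi.support_single_subset,
      chain_relatorWord f⟩

variable (J) in
/-- The cycle of the closed walk at the base vertex reading a word for `γ`. -/
def baseCycle (γ : Gamma g) : Dart g J → ℤ := chain (dartWalk (base g J) (wordRep γ))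

lemma integral_dartClass_base (γ : Gamma g) :
    integral (dartClass g J) (base g J) γ = QuotientAddGroup.mk (baseCycle J γ) :=
  walkSum_dartClass _

lemma isOneCycle_baseCycle {γ : Gamma g} (h : γ ∈ J) : IsOneCycle (baseCycle J γ) :=
  isOneCycle_chain (by rw [wordG_wordRep, act_base_of_mem h])

lemma IsOneCycle.exists_eq_smul_add_boundary {γ : Gamma g} (hJ : J = Subgroup.zpowers γ)
    {z : Dart g J → ℤ} (hz : IsOneCycle z) :
    ∃ (N : ℤ) (f : Cos g J → ℤ),
      (Function.support f).Finite ∧ z = N • baseCycle J γ + boundary f := by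
  obtain ⟨P, κ, hP⟩ := isCocycle_dartClass.exists_eq_potential_add_smul hJ
  refine ⟨pairing z κ, exists_eq_add_boundary_of_mk_eq ?_⟩
  let Φ := zmultiplesHom _ (integral (dartClass g J) (base g J) γ)
  calc QuotientAddGroup.mk z = QuotientAddGroup.mk' (finiteBoundaries g J) z := rfl
    _ = pairing z (dartClass g J) := by
        conv_lhs => rw [← hz.pairing_chain_singleton_eq]
        exact map_pairing _ hz.finite_support _
    _ = pairing z ((fun d => P d.head - P d.1) + fun d => Φ (κ d)) :=
        congrArg (pairing z) (funext hP)
    _ = Φ (pairing z κ) := by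
        rw [pairing_add_right hz.finite_support, hz.pairing_potential, zero_add,
          map_pairing _ hz.finite_support]
    _ = QuotientAddGroup.mk (pairing z κ • baseCycle J γ) :=
        congrArg (pairing z κ • ·) (integral_dartClass_base γ)

lemma exists_chain_eq_smul_add_boundary {γ : Gamma g} (hγ : γ ∈ J) {k : ℤ} {x : Gamma g}
    {w : List (Letter g)} (hw : x * wordG w * x⁻¹ = γ ^ k) :
    ∃ f : Cos g J → ℤ, (Function.support f).Finite ∧
      chain (dartWalk (mkCos g J x) w) = k • baseCycle J γ + boundary f := by
  have hsum := isCocycle_dartClass.walkSum_of_conj_eq_zpow hγ hw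
  rw [integral_dartClass_base, walkSum_dartClass] at hsum
  exact exists_eq_add_boundary_of_mk_eq hsum

lemma IsCocycle.pairing_boundary {t : Dart g J → A} (ht : IsCocycle t) {f : Cos g J → ℤ}
    (hf : (Function.support f).Finite) : pairing (boundary f) t = 0 := by
  suffices h : ∀ F : Cos g J →₀ ℤ, pairing (boundary F) t = 0 from h (Finsupp.ofSupportFinite f hf)
  intro F
  induction F using Finsupp.induction_linear with
  | zero =>
    have hzero : boundary (⇑(0 : Cos g J →₀ ℤ)) = chain [] := by ext; simp [boundary, chain]
    rw [hzero, pairing_chain ht.anti, walkSum_nil]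
  | add F G hF hG =>
    rw [Finsupp.coe_add, boundary_add, pairing_add_left (finite_support_boundary F.hasFiniteSupport)
      (finite_support_boundary G.hasFiniteSupport), hF, hG, add_zero]
  | single f n =>
    have hsingle : ⇑(Finsupp.single f n) = n • (Pi.single f 1 : Cos g J → ℤ) := by
      ext x; simp [Finsupp.single_apply, Pi.single_apply, eq_comm]
    rw [hsingle, boundary_smul, ← chain_relatorWord, pairing_smul_left (finite_support_chain _),
      pairing_chain ht.anti, ht.walkSum_relator, smul_zero]

/-- The element of `J` by which a dart moves the chosen coset representatives. -/
def transition (v : Cos g J) (x : Gamma g) : J :=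
  ⟨v.out * x * (act v x).out⁻¹, by rw [← mkCos_eq_mkCos, mkCos_out, ← act_mkCos, mkCos_out]⟩

lemma transition_one (v : Cos g J) : transition v 1 = 1 := Subtype.ext (by simp [transition])

lemma transition_mul (v : Cos g J) (x y : Gamma g) :
    transition v (x * y) = transition v x * transition (act v x) y :=
  Subtype.ext (by simp only [transition, Subgroup.coe_mul, act_mul]; group)

open scoped IsMulCommutative in
lemma walkSum_transition [IsMulCommutative J] (v : Cos g J) (w : List (Letter g)) :
    walkSum (fun d => Additive.ofMul (transition d.1 (letterG d.2))) (dartWalk v w) =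
      Additive.ofMul (transition v (wordG w)) := by
  induction w generalizing v with
  | nil => rw [wordG_nil, transition_one]; rfl
  | cons s w ih => simp only [dartWalk, walkSum_cons, ih, wordG_cons, transition_mul, ofMul_mul]

open scoped IsMulCommutative in
lemma isCocycle_transition [IsMulCommutative J] :
    IsCocycle fun d : Dart g J => Additive.ofMul (transition d.1 (letterG d.2)) where
  anti d := by
    have hmul := transition_mul d.1 (letterG d.2) (letterG d.2)⁻¹
    rw [mul_inv_cancel, transition_one] at hmul
    rw [Dart.rev_fst, Dart.rev_snd, letterG_inv, ← ofMul_inv]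
    exact congrArg Additive.ofMul (eq_inv_of_mul_eq_one_right hmul.symm)
  walkSum_relator f := by rw [walkSum_transition, wordG_relatorWord, transition_one, ofMul_one]

open scoped IsMulCommutative in
lemma wordG_eq_one_of_chain_eq_boundary [IsMulCommutative J] {v : Cos g J} {w : List (Letter g)}
    (hclosed : act v (wordG w) = v) {f : Cos g J → ℤ} (hf : (Function.support f).Finite)
    (hw : chain (dartWalk v w) = boundary f) : wordG w = 1 := by
  have hcocycle := isCocycle_transition (J := J)
  have hzero := hcocycle.pairing_boundary hf
  rw [← hw, pairing_chain hcocycle.anti, walkSum_transition, ofMul_eq_zero] at hzero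
  have hconj : v.out * wordG w * v.out⁻¹ = 1 := by
    simpa only [transition, hclosed, Subgroup.coe_one] using congrArg Subtype.val hzero
  exact conj_eq_one_iff.mp hconj

end Homology

section SelfIntersection

variable {g : ℕ} {J : Subgroup (Gamma g)}

lemma Letter.exists_rot_primitive {a : Letter g → ℤ} (h : ∑ s, a s = 0) :
    ∃ φ : Letter g → ℤ, ∀ s, φ s.rot = φ s - a s := by
  let before (n : ℕ) : Finset (Letter g) := {t | posLv t < n}
  have hsucc (s : Letter g) : before (posLv s + 1) = insert s (before (posLv s)) := by
    ext t
    simp only [before, Finset.mem_filter, Finset.mem_univ, true_and, Finset.mem_insert,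
      Nat.lt_succ_iff, le_iff_eq_or_lt, posLv_injective.eq_iff]
  have hsum (s : Letter g) :
      ∑ t ∈ before (posLv s + 1), a t = a s + ∑ t ∈ before (posLv s), a t := by
    rw [hsucc, Finset.sum_insert (by simp [before])]
  refine ⟨fun s => -∑ t ∈ before (posLv s), a t, fun s => ?_⟩
  simp only [posLv_rot]
  rcases (Nat.succ_le_of_lt (posLv_lt s)).eq_or_lt with hlast | hlt
  · have hall : ∑ t ∈ before (posLv s + 1), a t = 0 := by
      rw [← h]
      refine Finset.sum_congr ?_ fun _ _ => rfl
      exact Finset.filter_true_of_mem fun t _ => (posLv_lt t).trans_eq hlast.symm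
    have hbefore : before 0 = ∅ := by simp [before]
    rw [← Nat.succ_eq_add_one, hlast, Nat.mod_self, hbefore, Finset.sum_empty]
    linarith [hsum s]
  · rw [Nat.mod_eq_of_lt hlt, hsum]
    ring

lemma Dart.next_injective : Function.Injective (next : Dart g J → Dart g J) := fun d e h => by
  obtain ⟨hhead, hnext⟩ := Prod.ext_iff.mp h
  exact rev_injective (Prod.ext hhead (Letter.rot_bijective.1 hnext))

lemma perm_map_next_relatorWord (f : Cos g J) :
    ((dartWalk f (relatorWord g)).map Dart.next).Perm (dartWalk f (relatorWord g)) := by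
  refine List.Subperm.perm_of_length_le (List.Nodup.subperm
    ((nodup_dartWalk_relatorWord f).map Dart.next_injective) fun e he => ?_) (by simp)
  obtain ⟨d, hd, rfl⟩ := List.mem_map.mp he
  rwa [mem_dartWalk_relatorWord, Dart.face_next, ← mem_dartWalk_relatorWord]

lemma walkSum_sub_next_relatorWord (φ : Dart g J → ℤ) (f : Cos g J) :
    walkSum (fun d => φ d - φ d.next) (dartWalk f (relatorWord g)) = 0 := by
  have hperm := ((perm_map_next_relatorWord f).map φ).sum_eq
  rw [List.map_map] at hperm
  have hsub := Multiset.sum_map_sub (m := ↑(dartWalk f (relatorWord g))) (f := φ)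
    (g := φ ∘ Dart.next)
  simp only [Multiset.map_coe, Multiset.sum_coe] at hsub
  exact hsub.trans (sub_eq_zero.mpr hperm.symm)

lemma Dart.eq_of_next_invariant {α : Type*} {Ψ : Dart g J → α} (h : ∀ d : Dart g J, Ψ d.next = Ψ d)
    {d e : Dart g J} (hface : d.face = e.face) : Ψ d = Ψ e := by
  have haround (x : Cos g J) (s t : Letter g) :
      Ψ (act x s.prefixElt, s) = Ψ (act x t.prefixElt, t) := by
    have hstep (n : ℕ) (hn : n < 4 * g) (hpos : 0 < 4 * g) :
        Ψ (act x (Letter.ofRelPos n hn).prefixElt, Letter.ofRelPos n hn) =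
          Ψ (act x (Letter.ofRelPos 0 hpos).prefixElt, Letter.ofRelPos 0 hpos) := by
      induction n with
      | zero => rfl
      | succ n ih =>
        have hnext : Letter.ofRelPos (n + 1) hn = (Letter.ofRelPos n (by omega)).next := by
          rw [Letter.next_ofRelPos]
          simp only [Nat.mod_eq_of_lt hn]
        rw [← ih (by omega), hnext, Letter.prefixElt_next, act_mul]
        exact h (act x (Letter.ofRelPos n _).prefixElt, Letter.ofRelPos n _)
    have hpos : 0 < 4 * g := s.relPos.zero_le.trans_lt s.relPos_lt
    rw [← s.ofRelPos_relPos, hstep _ s.relPos_lt hpos, ← t.ofRelPos_relPos,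
      hstep _ t.relPos_lt hpos]
  have hd (d : Dart g J) : (act d.face d.2.prefixElt, d.2) = d :=
    Prod.ext (act_inv_act_cancel _ _) rfl
  rw [← hd d, ← hd e, hface]
  exact haround _ _ _

/-- Pairing a cycle with its own push-off to the right, read off from the primitives `φ` of the
cycle around the vertices, gives zero: the self-intersection number vanishes. -/
lemma IsOneCycle.pairing_self_dual {z φ : Dart g J → ℤ} (hz : IsOneCycle z)
    (hφ : ∀ d : Dart g J, φ (d.1, d.2.rot) = φ d - z d) :
    pairing z (fun d => φ d - φ d.next) = 0 := by
  have hnext (d : Dart g J) : φ d.next = φ d.rev + z d := by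
    rw [← sub_neg_eq_add, ← hz.anti]
    exact hφ d.rev
  have hvertex (x : Cos g J) : ∑ s, (2 * (z (x, s) * φ (x, s)) - z (x, s) * z (x, s)) = 0 := by
    have hrot := Letter.rot_bijective.sum_comp fun s => φ (x, s) * φ (x, s)
    rw [← sub_self (∑ s, φ (x, s) * φ (x, s))]
    nth_rw 2 [← hrot]
    rw [← Finset.sum_sub_distrib]
    refine Finset.sum_congr rfl fun s _ => ?_
    rw [hφ (x, s)]
    ring
  have hfin : (Function.support fun d => 2 * (z d * φ d) - z d * z d).Finite :=
    hz.finite_support.subset fun d hd h => hd (by simp [h])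
  have htotal := finsum_dart_eq_zero hfin hvertex
  rw [finsum_dart_eq_finsum_edge hfin] at htotal
  have hdouble : (2 : ℤ) • pairing z (fun d => φ d - φ d.next) = 0 := by
    rw [← htotal, pairing, smul_finsum' _
      (hasFiniteSupport_smul_ofEdge hz.finite_support fun d => φ d - φ d.next)]
    refine finsum_congr fun e => ?_
    rw [hz.anti, hnext, smul_eq_mul, smul_eq_mul]
    ring
  simpa using hdouble

lemma exists_boundary_eq_baseCycle {γ : Gamma g} (hJ : J = Subgroup.zpowers γ) (hg : 0 < g) :
    ∃ f : Cos g J → ℤ, boundary f = baseCycle J γ := by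
  have hz : IsOneCycle (baseCycle J γ) := isOneCycle_baseCycle (hJ ▸ Subgroup.mem_zpowers γ)
  choose φ' hφ' using fun x : Cos g J => Letter.exists_rot_primitive (hz.sum_eq_zero x)
  let φ (d : Dart g J) : ℤ := φ' d.1 d.2
  have hφ (d : Dart g J) : φ (d.1, d.2.rot) = φ d - baseCycle J γ d := hφ' d.1 d.2
  have ht : IsCocycle fun d : Dart g J => φ d - φ d.next :=
    { anti := fun d => by
        have hrev := hφ d.rev
        have hself := hφ d
        have hd : d.rev.next = (d.1, d.2.rot) := by simp [Dart.next, Letter.next]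
        change φ d.next = _ at hrev
        rw [hd, hself, hrev, hz.anti]
        ring
      walkSum_relator := walkSum_sub_next_relatorWord φ }
  have hperiod : integral (fun d : Dart g J => φ d - φ d.next) (base g J) γ = 0 := by
    rw [← hz.pairing_self_dual hφ]
    exact (pairing_chain ht.anti _).symm
  obtain ⟨P, κ, hP⟩ := ht.exists_eq_potential_add_smul hJ
  let Ψ (d : Dart g J) : ℤ := P d.1 + φ d
  have hΨ (d : Dart g J) : Ψ d.next = Ψ d := by
    have hpot := hP d
    rw [hperiod, smul_zero, add_zero] at hpot
    simp only [Ψ, Dart.next_fst]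
    linarith
  let s₀ : Letter g := Letter.ofRelPos 0 (by omega)
  refine ⟨fun x => Ψ (act x s₀.prefixElt, s₀), ?_⟩
  have hface (d : Dart g J) : Ψ (act d.face s₀.prefixElt, s₀) = Ψ d :=
    Dart.eq_of_next_invariant hΨ (act_act_inv_cancel _ _)
  ext d
  simp only [boundary, hface, Dart.face_rev]
  simp only [Ψ, hφ]
  ring

lemma Letter.sum_map_relatorWord {A : Type*} [AddCommMonoid A] (u : Letter g → A) :
    ((relatorWord g).map u).sum = ∑ s, u s := by
  have hbij : Function.Bijective fun p : Fin (4 * g) => ofRelPos p.1 p.2 :=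
    ⟨fun p q h => Fin.ext (by simpa only [relPos_ofRelPos] using congrArg relPos h),
      fun s => ⟨⟨s.relPos, s.relPos_lt⟩, s.ofRelPos_relPos⟩⟩
  rw [← hbij.sum_comp, ← List.sum_ofFn, relatorWord, List.map_map, List.ofFn_eq_map]
  rfl

lemma exists_hom_of_eq (c : Fin (2 * g) → ℤ) : ∃ φ : Gamma g →* Multiplicative ℤ,
    ∀ i, φ (PresentedGroup.of i) = Multiplicative.ofAdd (c i) := by
  let u (s : Letter g) : ℤ := if s.2 then c s.1 else -c s.1
  have hsum : ∑ s, u s = 0 := by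
    simp [Fintype.sum_prod_type, u]
  have hrel : ∀ r ∈ ({relatorF g} : Set (FreeGroup (Fin (2 * g)))),
      FreeGroup.lift (fun i => Multiplicative.ofAdd (c i)) r = 1 := by
    rintro _ rfl
    apply Multiplicative.toAdd.injective
    rw [toAdd_one, ← hsum, ← Letter.sum_map_relatorWord, relatorF, map_list_prod, toAdd_list_sum,
      List.map_map, List.map_map]
    refine congrArg List.sum (List.map_congr_left fun s _ => ?_)
    rcases s with ⟨a, _ | _⟩ <;> simp [u]
  exact ⟨PresentedGroup.toGroup hrel, fun i => PresentedGroup.toGroup.of hrel⟩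

lemma exists_hom_ne_one_of_apply_eq_one (hg : 0 < g) (γ : Gamma g) :
    ∃ φ : Gamma g →* Multiplicative ℤ, φ γ = 1 ∧ ∃ y, φ y ≠ 1 := by
  obtain ⟨u, hu⟩ := exists_hom_of_eq (g := g) fun i => if i.1 = 0 then 1 else 0
  obtain ⟨v, hv⟩ := exists_hom_of_eq (g := g) fun i => if i.1 = 1 then 1 else 0
  by_cases huγ : u γ = 1
  · exact ⟨u, huγ, PresentedGroup.of ⟨0, by omega⟩, by simp [hu]⟩
  · refine ⟨u ^ (v γ).toAdd / v ^ (u γ).toAdd, ?_, PresentedGroup.of ⟨1, by omega⟩, fun h => huγ ?_⟩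
    · apply Multiplicative.toAdd.injective
      simp [MonoidHom.div_apply, mul_comm]
    · apply Multiplicative.toAdd.injective
      simpa [hu, hv, MonoidHom.div_apply] using congrArg Multiplicative.toAdd h

lemma infinite_cos_zpowers (hg : 0 < g) (γ : Gamma g) :
    Infinite (Cos g (Subgroup.zpowers γ)) := by
  obtain ⟨φ, hφ, y, hy⟩ := exists_hom_ne_one_of_apply_eq_one hg γ
  refine Infinite.of_injective (fun n : ℤ => mkCos g (Subgroup.zpowers γ) (y ^ n)) fun m n hmn => ?_
  obtain ⟨k, hk⟩ := Subgroup.mem_zpowers_iff.mp (mkCos_eq_mkCos.mp hmn)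
  have himage := congrArg (fun x => (φ x).toAdd) hk
  simp only [map_zpow, hφ, one_zpow, map_mul, map_inv, toAdd_one, toAdd_mul, toAdd_inv,
    toAdd_zpow, smul_eq_mul, ← sub_eq_add_neg, ← sub_mul] at himage
  have hy' : (φ y).toAdd ≠ 0 := fun h => hy (Multiplicative.toAdd.injective h)
  have := (mul_eq_zero.mp himage.symm).resolve_right hy'
  omega

end SelfIntersection

section Cuts

open Filter

variable {g : ℕ} {J : Subgroup (Gamma g)} {γ : Gamma g} {A A₀ B : Set (Cos g J)}

/-- The darts crossing the frontier of the set of faces `B`, with their face inside `B`. -/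
def cut (B : Set (Cos g J)) : Set (Dart g J) := {d | d.face ∈ B ∧ d.rev.face ∉ B}

lemma rev_notMem_cut {d : Dart g J} (h : d ∈ cut B) : d.rev ∉ cut B := fun h' => h.2 h'.1

lemma mem_cut_compl {d : Dart g J} : d ∈ cut Bᶜ ↔ d.rev ∈ cut B := by
  simp [cut, and_comm]

lemma cut_compl (B : Set (Cos g J)) : cut Bᶜ = Dart.rev ⁻¹' cut B := Set.ext fun _ => mem_cut_compl

lemma ncard_cut_compl (B : Set (Cos g J)) : (cut Bᶜ).ncard = (cut B).ncard := by
  rw [cut_compl, Set.ncard_preimage_of_injective_subset_range Dart.rev_injective]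
  exact fun d _ => ⟨d.rev, d.rev_rev⟩

lemma boundary_indicator_apply (B : Set (Cos g J)) (d : Dart g J) :
    boundary (B.indicator 1) d = (cut B).indicator 1 d - (cut B).indicator 1 d.rev := by
  classical
  simp only [boundary, Set.indicator_apply, cut, Set.mem_ofPred_eq, Dart.rev_rev, Pi.one_apply]
  by_cases hd : Dart.face d ∈ B <;> by_cases hr : d.rev.face ∈ B <;> simp [hd, hr]

lemma finite_cut_of_finite_support_boundary
    (h : (Function.support (boundary (B.indicator 1))).Finite) : (cut B).Finite := by
  refine h.subset fun d hd => ?_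
  rw [Function.mem_support, boundary_indicator_apply, Set.indicator_of_mem hd,
    Set.indicator_of_notMem (rev_notMem_cut hd)]
  simp

lemma cut_nonempty (hg : 0 < g) (hB : B.Nonempty) (hB' : Bᶜ.Nonempty) : (cut B).Nonempty := by
  by_contra hempty
  rw [Set.not_nonempty_iff_eq_empty] at hempty
  obtain ⟨x, hx⟩ := hB
  obtain ⟨y, hy⟩ := hB'
  have hconst (d : Dart g J) : (d.face ∈ B) = (d.rev.face ∈ B) := by
    have hd : d ∉ cut B := hempty ▸ Set.notMem_empty d
    have hr : d.rev ∉ cut B := hempty ▸ Set.notMem_empty _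
    simp only [cut, Set.mem_ofPred_eq, Dart.rev_rev] at hd hr
    exact propext (by tauto)
  exact hy ((eq_of_face_rev_invariant hconst hg x y).mp hx)

lemma boundary_eq_boundary_iff (hg : 0 < g) {f f' : Cos g J → ℤ} :
    boundary f = boundary f' ↔ ∃ c, ∀ x, f x = f' x + c := by
  constructor
  · intro h
    have hconst (d : Dart g J) : (f - f') d.face = (f - f') d.rev.face := by
      have := congrFun h d
      simp only [boundary] at this
      simp only [Pi.sub_apply]
      linarith
    refine ⟨(f - f') (base g J), fun x => ?_⟩
    rw [← eq_of_face_rev_invariant hconst hg x, Pi.sub_apply]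
    ring
  · rintro ⟨c, hc⟩
    ext d
    simp [boundary, hc]

lemma boundary_indicator_compl (B : Set (Cos g J)) :
    boundary (Bᶜ.indicator 1) = -boundary (B.indicator 1) := by
  classical
  ext d
  rw [boundary_indicator_apply, Pi.neg_apply, boundary_indicator_apply]
  simp only [Set.indicator_apply, mem_cut_compl, Dart.rev_rev, neg_sub, Pi.one_apply]

lemma eventuallyEq_cofinite_zero {α : Type*} {f : α → ℤ} :
    f =ᶠ[cofinite] 0 ↔ (Function.support f).Finite :=
  eventually_cofinite

variable (γ A₀) in
/-- `A₀` is a set of faces filling up one of the two ends of the cover corresponding to `⟨γ⟩`: it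
has a finite frontier, homologous to the closed walk reading `γ`. -/
structure IsHalfSurface : Prop where
  two_le : 2 ≤ g
  eq_zpowers : J = Subgroup.zpowers γ
  ne_one : γ ≠ 1
  infinite : A₀.Infinite
  infinite_compl : A₀ᶜ.Infinite
  finite_cut : (cut A₀).Finite
  homologous : ∃ f : Cos g J → ℤ, (Function.support f).Finite ∧
    boundary (A₀.indicator 1) = baseCycle J γ + boundary f

lemma IsHalfSurface.pos (C : IsHalfSurface γ A₀) : 0 < g := by
  have := C.two_le
  omega

lemma IsHalfSurface.gen_mem (C : IsHalfSurface γ A₀) : γ ∈ J :=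
  C.eq_zpowers ▸ Subgroup.mem_zpowers γ

lemma IsHalfSurface.exists_smul_baseCycle_eq (C : IsHalfSurface γ A₀) (k : ℤ) {f : Cos g J → ℤ}
    (hf : (Function.support f).Finite) : ∃ f' : Cos g J → ℤ,
      f' =ᶠ[cofinite] k • A₀.indicator 1 ∧ k • baseCycle J γ + boundary f = boundary f' := by
  obtain ⟨f₀, hf₀, h₀⟩ := C.homologous
  refine ⟨k • (A₀.indicator 1 - f₀) + f, ?_, ?_⟩
  · filter_upwards [eventuallyEq_cofinite_zero.mpr hf, eventuallyEq_cofinite_zero.mpr hf₀]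
      with x hx hx₀
    simp [hx, hx₀]
  · rw [boundary_add, boundary_smul, boundary_sub, h₀, add_sub_cancel_right]

lemma IsHalfSurface.exists_eq_boundary (C : IsHalfSurface γ A₀) {z : Dart g J → ℤ}
    (hz : IsOneCycle z) :
    ∃ (k : ℤ) (f : Cos g J → ℤ), f =ᶠ[cofinite] k • A₀.indicator 1 ∧ z = boundary f := by
  obtain ⟨k, f, hf, rfl⟩ := hz.exists_eq_smul_add_boundary C.eq_zpowers
  exact ⟨k, C.exists_smul_baseCycle_eq k hf⟩

lemma IsHalfSurface.exists_chain_eq_boundary (C : IsHalfSurface γ A₀) {k : ℤ} {x : Gamma g}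
    {w : List (Letter g)} (hw : x * wordG w * x⁻¹ = γ ^ k) :
    ∃ f : Cos g J → ℤ, f =ᶠ[cofinite] k • A₀.indicator 1 ∧
      chain (dartWalk (mkCos g J x) w) = boundary f := by
  obtain ⟨f, hf, h⟩ := exists_chain_eq_smul_add_boundary C.gen_mem hw
  rw [h]
  exact C.exists_smul_baseCycle_eq k hf

lemma IsHalfSurface.compl (C : IsHalfSurface γ A₀) : IsHalfSurface γ⁻¹ A₀ᶜ where
  two_le := C.two_le
  eq_zpowers := by rw [Subgroup.zpowers_inv]; exact C.eq_zpowers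
  ne_one := inv_ne_one.mpr C.ne_one
  infinite := C.infinite_compl
  infinite_compl := by rw [compl_compl]; exact C.infinite
  finite_cut := by
    rw [cut_compl]
    exact C.finite_cut.preimage Dart.rev_injective.injOn
  homologous := by
    obtain ⟨f, hf, h⟩ := C.homologous
    obtain ⟨f', hf', h'⟩ := exists_chain_eq_smul_add_boundary (x := 1) (k := -1)
      (w := wordRep γ⁻¹) C.gen_mem (by simp [wordG_wordRep])
    refine ⟨-1 • f - f', (hf.union hf').subset fun x => ?_, ?_⟩
    · contrapose!
      simp +contextual
    · rw [boundary_indicator_compl, h, boundary_sub, boundary_smul,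
        show baseCycle J γ⁻¹ = _ from h']
      module

section Existence

variable {f₀ : Cos g J → ℤ}

lemma finite_range_of_boundary_eq_baseCycle (hg : 0 < g) (hγ : γ ∈ J)
    (h₀ : boundary f₀ = baseCycle J γ) : (Set.range f₀).Finite := by
  have hcycle := isOneCycle_baseCycle hγ
  refine ((hcycle.finite_support.image fun d => f₀ (Dart.face d)).union
    (Set.finite_singleton (f₀ (base g J)))).subset ?_
  rintro _ ⟨y, rfl⟩
  by_contra hy
  simp only [Set.mem_union, Set.mem_image, Set.mem_singleton_iff, not_or, not_exists, not_and,
    Function.mem_support] at hy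
  have hconst (d : Dart g J) : (f₀ d.face = f₀ y) = (f₀ d.rev.face = f₀ y) := by
    by_cases hd : baseCycle J γ d = 0
    · rw [← h₀, boundary, sub_eq_zero] at hd
      rw [hd]
    · have hr : baseCycle J γ d.rev ≠ 0 := by rwa [hcycle.anti, neg_ne_zero]
      simp only [hy.1 d hd, hy.1 d.rev hr]
  have hlevel := eq_of_face_rev_invariant (f := fun x => f₀ x = f₀ y) hconst hg y (base g J)
  exact hy.2 (hlevel.mp rfl).symm

lemma infinite_setOf_ne_of_boundary_eq_baseCycle (hJ : J = Subgroup.zpowers γ) (hγ : γ ≠ 1)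
    (h₀ : boundary f₀ = baseCycle J γ) (j : ℤ) : {x | f₀ x ≠ j}.Infinite := by
  subst hJ
  intro hfin
  have hsupport : (Function.support fun x => f₀ x - j).Finite := by
    simpa only [Function.support, ne_eq, sub_eq_zero] using hfin
  have hclosed : act (base g (Subgroup.zpowers γ)) (wordG (wordRep γ)) = base g _ := by
    rw [wordG_wordRep, act_base_of_mem (Subgroup.mem_zpowers γ)]
  have hone : wordG (wordRep γ) = 1 := by
    refine wordG_eq_one_of_chain_eq_boundary hclosed hsupport (h₀.symm.trans ?_)
    ext d
    simp [boundary]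
  rw [wordG_wordRep] at hone
  exact hγ hone

lemma exists_infinite_level (hg : 0 < g) (hJ : J = Subgroup.zpowers γ)
    (h₀ : boundary f₀ = baseCycle J γ) : ∃ j, {x | f₀ x = j}.Infinite := by
  subst hJ
  have := infinite_cos_zpowers hg γ
  have := (finite_range_of_boundary_eq_baseCycle hg (Subgroup.mem_zpowers γ) h₀).to_subtype
  obtain ⟨⟨j, _⟩, hj⟩ := Finite.exists_infinite_fiber (Set.rangeFactorization f₀)
  refine ⟨j, (Set.infinite_coe_iff.mp hj).mono fun x hx => ?_⟩
  exact congrArg Subtype.val hx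

lemma eq_one_or_neg_one_of_boundary_level (hg : 0 < g) (hJ : J = Subgroup.zpowers γ) (hγ : γ ≠ 1)
    (h₀ : boundary f₀ = baseCycle J γ) {j : ℤ} (hj : {x | f₀ x = j}.Infinite) {k : ℤ}
    {f : Cos g J → ℤ} (hf : (Function.support f).Finite)
    (h : boundary ({x | f₀ x = j}.indicator 1) = k • baseCycle J γ + boundary f) :
    k = 1 ∨ k = -1 := by
  rw [← h₀, ← boundary_smul, ← boundary_add] at h
  obtain ⟨c, hc⟩ := (boundary_eq_boundary_iff hg).mp h
  have haway {x} (hx : x ∉ Function.support f) :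
      ({x | f₀ x = j}.indicator 1 : Cos g J → ℤ) x = k * f₀ x + c := by
    simpa [Function.notMem_support.mp hx] using hc x
  obtain ⟨x, hxj, hx⟩ := (hj.sdiff hf).nonempty
  obtain ⟨y, hyj, hy⟩ :=
    ((infinite_setOf_ne_of_boundary_eq_baseCycle hJ hγ h₀ j).sdiff hf).nonempty
  have hfx := haway hx
  have hfy := haway hy
  rw [Set.indicator_of_mem hxj, Pi.one_apply, show f₀ x = j from hxj] at hfx
  rw [Set.indicator_of_notMem (show y ∉ {x | f₀ x = j} from hyj)] at hfy
  exact Int.isUnit_iff.mp (IsUnit.of_mul_eq_one (j - f₀ y) (by linarith))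

lemma exists_isHalfSurface (hg : 2 ≤ g) (hJ : J = Subgroup.zpowers γ) (hγ : γ ≠ 1) :
    ∃ A₀ : Set (Cos g J), IsHalfSurface γ A₀ := by
  have hg₀ : 0 < g := by omega
  obtain ⟨f₀, h₀⟩ := exists_boundary_eq_baseCycle hJ hg₀
  obtain ⟨j, hj⟩ := exists_infinite_level hg₀ hJ h₀
  set A := {x | f₀ x = j} with hA
  have hj' : Aᶜ.Infinite := infinite_setOf_ne_of_boundary_eq_baseCycle hJ hγ h₀ j
  have hsupport : (Function.support (boundary (A.indicator 1))).Finite := by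
    refine (isOneCycle_baseCycle (hJ ▸ Subgroup.mem_zpowers γ)).finite_support.subset ?_
    intro d hd hzero
    rw [← h₀, boundary, sub_eq_zero] at hzero
    exact hd (by simp [boundary, Set.indicator, hA, hzero])
  have hcut := finite_cut_of_finite_support_boundary hsupport
  obtain ⟨k, f, hf, h⟩ := (isOneCycle_boundary hsupport).exists_eq_smul_add_boundary hJ
  obtain rfl | rfl := eq_one_or_neg_one_of_boundary_level hg₀ hJ hγ h₀ hj hf h
  · exact ⟨A, hg, hJ, hγ, hj, hj', hcut, f, hf, by rw [h, one_smul]⟩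
  · refine ⟨Aᶜ, hg, hJ, hγ, hj', by rwa [compl_compl], ?_, -1 • f, by simpa using hf, ?_⟩
    · rw [cut_compl]
      exact hcut.preimage Dart.rev_injective.injOn
    · rw [boundary_indicator_compl, h, boundary_smul]
      module

end Existence

lemma infinite_of_eventuallyEq {α : Type*} {s t : Set α} (h : s =ᶠ[cofinite] t)
    (ht : t.Infinite) : s.Infinite :=
  frequently_cofinite_iff_infinite.mp
    ((frequently_cofinite_iff_infinite.mpr ht).mp (h.mem_iff.mono fun _ hx => hx.mpr))

lemma finite_diff_of_eventuallyEq {α : Type*} {s t : Set α} (h : s =ᶠ[cofinite] t) :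
    (s \ t).Finite :=
  (eventually_cofinite.mp h.mem_iff).subset fun _ hx hiff => hx.2 (hiff.mp hx.1)

lemma finite_cut_of_eventuallyEq (h : A =ᶠ[cofinite] A₀) (hA₀ : (cut A₀).Finite) :
    (cut A).Finite := by
  have hface := finite_setOf_face_mem (finite_diff_of_eventuallyEq h)
  have hface' := finite_setOf_face_mem (finite_diff_of_eventuallyEq h.symm)
  refine ((hA₀.union hface).union (hface'.preimage Dart.rev_injective.injOn)).subset fun d hd => ?_
  simp only [Set.mem_union, Set.mem_ofPred_eq, Set.mem_preimage, Set.mem_sdiff]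
  have := hd.1
  have := hd.2
  simp only [cut, Set.mem_ofPred_eq]
  tauto

/-- `A` has a shortest frontier among the sets of faces that agree with `A₀` up to finitely many
faces. -/
structure IsMinCut (A₀ A : Set (Cos g J)) : Prop where
  near : A =ᶠ[cofinite] A₀
  le : ∀ B : Set (Cos g J), B =ᶠ[cofinite] A₀ → (cut A).ncard ≤ (cut B).ncard

lemma exists_isMinCut (A₀ : Set (Cos g J)) : ∃ A, IsMinCut A₀ A := by
  obtain ⟨A, hA, hle⟩ := exists_minimalFor_of_wellFoundedLT
    (fun A : Set (Cos g J) => A =ᶠ[cofinite] A₀) (fun A => (cut A).ncard) ⟨A₀, .rfl⟩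
  exact ⟨A, hA, fun B hB => (le_total _ _).elim id (hle hB)⟩

lemma IsMinCut.ncard_cut_eq (hA : IsMinCut A₀ A) (hB : IsMinCut A₀ B) :
    (cut A).ncard = (cut B).ncard :=
  (hA.le B hB.near).antisymm (hB.le A hA.near)

lemma IsMinCut.compl (hA : IsMinCut A₀ A) : IsMinCut A₀ᶜ Aᶜ where
  near := hA.near.compl
  le B hB := by
    rw [ncard_cut_compl, ← ncard_cut_compl B]
    exact hA.le _ (by simpa only [compl_compl] using hB.compl)

lemma ncard_cut_inter_add_ncard_cut_union_le (hA : (cut A).Finite) (hB : (cut B).Finite) :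
    (cut (A ∩ B)).ncard + (cut (A ∪ B)).ncard ≤ (cut A).ncard + (cut B).ncard := by
  have hunion : cut (A ∩ B) ∪ cut (A ∪ B) ⊆ cut A ∪ cut B := by
    intro d
    simp only [cut, Set.mem_union, Set.mem_inter_iff, Set.mem_ofPred_eq]
    tauto
  have hinter : cut (A ∩ B) ∩ cut (A ∪ B) ⊆ cut A ∩ cut B := by
    intro d
    simp only [cut, Set.mem_union, Set.mem_inter_iff, Set.mem_ofPred_eq]
    tauto
  have hfin := (hA.union hB).subset hunion
  rw [← Set.ncard_union_add_ncard_inter _ _ (hfin.subset Set.subset_union_left)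
    (hfin.subset Set.subset_union_right), ← Set.ncard_union_add_ncard_inter _ _ hA hB]
  exact add_le_add (Set.ncard_le_ncard hunion (hA.union hB))
    (Set.ncard_le_ncard hinter (hA.inter_of_left _))

lemma IsMinCut.finite_cut (C : IsHalfSurface γ A₀) (hA : IsMinCut A₀ A) : (cut A).Finite :=
  finite_cut_of_eventuallyEq hA.near C.finite_cut

lemma IsMinCut.nonempty_cut (C : IsHalfSurface γ A₀) (hA : IsMinCut A₀ A) : (cut A).Nonempty :=
  cut_nonempty C.pos (infinite_of_eventuallyEq hA.near C.infinite).nonempty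
    (infinite_of_eventuallyEq hA.near.compl C.infinite_compl).nonempty

lemma IsMinCut.inter (C : IsHalfSurface γ A₀) (hA : IsMinCut A₀ A) (hB : IsMinCut A₀ B) :
    IsMinCut A₀ (A ∩ B) where
  near := by simpa only [Set.inter_self] using hA.near.inter hB.near
  le D hD := by
    have hsub := ncard_cut_inter_add_ncard_cut_union_le (hA.finite_cut C) (hB.finite_cut C)
    have hunion := hB.le (A ∪ B) (by simpa only [Set.union_self] using hA.near.union hB.near)
    have hAD := hA.le D hD
    omega

lemma IsMinCut.eq_empty_of_isolated (C : IsHalfSurface γ A₀) (hA : IsMinCut A₀ A)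
    {K : Set (Cos g J)} (hK : K.Finite) (hKA : K ⊆ A)
    (hisolated : ∀ d : Dart g J, d.face ∈ K → d.rev.face ∈ A → d.rev.face ∈ K) : K = ∅ := by
  by_contra hne
  have hKc : Kᶜ.Nonempty := (C.infinite.sdiff hK).nonempty.mono fun _ hx => hx.2
  obtain ⟨d, hd⟩ := cut_nonempty C.pos (Set.nonempty_iff_ne_empty.mpr hne) hKc
  have hnear : (A \ K : Set (Cos g J)) =ᶠ[cofinite] A₀ := by
    have hempty : K =ᶠ[cofinite] (∅ : Set (Cos g J)) :=
      eventuallyEq_empty.mpr hK.eventually_cofinite_notMem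
    simpa only [Set.sdiff_empty] using hA.near.diff hempty
  have hsub : cut (A \ K) ⊆ cut A := fun e he => ⟨he.1.1, fun hr => he.2 ⟨hr, fun hK' =>
    he.1.2 (by simpa using hisolated e.rev hK' (by simpa using he.1.1))⟩⟩
  have hdA : d ∈ cut A := ⟨hKA hd.1, fun hr => hd.2 (hisolated d hd.1 hr)⟩
  have hlt := Set.ncard_lt_ncard
    (Set.ssubset_iff_of_subset hsub |>.mpr ⟨d, hdA, fun h => h.1.2 hd.1⟩) (hA.finite_cut C)
  exact hlt.not_ge (hA.le _ hnear)

section Superlevel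

variable {l : List (Dart g J)} {f : Cos g J → ℤ}

lemma card_filter_cut_superlevel_le_count (hl : chain l = boundary f) (S : Finset ℤ)
    (d : Dart g J) [DecidablePred fun i => d ∈ cut {x | i ≤ f x}] :
    (S.filter fun i => d ∈ cut {x | i ≤ f x}).card ≤ l.count d := by
  have hsub : (S.filter fun i => d ∈ cut {x | i ≤ f x}) ⊆ Finset.Ioc (f d.rev.face) (f d.face) :=
    fun i hi => Finset.mem_Ioc.mpr
      ⟨not_le.mp (Finset.mem_filter.mp hi).2.2, (Finset.mem_filter.mp hi).2.1⟩
  have hcard := Finset.card_le_card hsub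
  have hd := congrFun hl d
  simp only [chain, boundary] at hd
  rw [Int.card_Ioc] at hcard
  omega

lemma finite_cut_superlevel (hl : chain l = boundary f) (i : ℤ) : (cut {x | i ≤ f x}).Finite := by
  classical
  refine l.toFinset.finite_toSet.subset fun d hd => ?_
  have hcount := card_filter_cut_superlevel_le_count hl {i} d
  rw [Finset.filter_singleton, if_pos hd, Finset.card_singleton] at hcount
  simpa using List.count_pos_iff.mp hcount

lemma sum_cut_superlevel_le (hl : chain l = boundary f) (S : Finset ℤ) :
    ∑ i ∈ S, (finite_cut_superlevel hl i).toFinset.val ≤ (l : Multiset (Dart g J)) := by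
  classical
  refine Multiset.le_iff_count.mpr fun d => ?_
  have hcount (i : ℤ) : (finite_cut_superlevel hl i).toFinset.val.count d =
      if d ∈ cut {x | i ≤ f x} then 1 else 0 := by
    simp [Multiset.count_eq_of_nodup (Finset.nodup _)]
  rw [Multiset.count_sum', Multiset.coe_count, Finset.sum_congr rfl fun i _ => hcount i,
    ← Finset.card_filter]
  convert card_filter_cut_superlevel_le_count hl S d using 2
  exact lawful_beq_subsingleton _ _

lemma card_sum_cut_superlevel (hl : chain l = boundary f) (S : Finset ℤ) :
    Multiset.card (∑ i ∈ S, (finite_cut_superlevel hl i).toFinset.val) =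
      ∑ i ∈ S, (cut {x | i ≤ f x}).ncard := by
  simp [Multiset.card_sum, Set.ncard_eq_toFinset_card _ (finite_cut_superlevel hl _)]

lemma superlevel_eventuallyEq {k : ℕ} (hf : f =ᶠ[cofinite] (k : ℤ) • A₀.indicator 1) {i : ℤ}
    (hi : i ∈ Finset.Icc 1 (k : ℤ)) : ({x | i ≤ f x} : Set (Cos g J)) =ᶠ[cofinite] A₀ := by
  classical
  rw [Finset.mem_Icc] at hi
  refine Eventually.set_eq (hf.mono fun x hx => ?_)
  simp only [Set.mem_ofPred_eq, hx, Pi.smul_apply, Set.indicator_apply, Pi.one_apply, smul_eq_mul]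
  split_ifs with hmem <;> simp [hmem] <;> omega

lemma IsMinCut.sum_ncard_cut_le (hA : IsMinCut A₀ A) {k : ℕ}
    (hf : f =ᶠ[cofinite] (k : ℤ) • A₀.indicator 1) :
    k * (cut A).ncard ≤ ∑ i ∈ Finset.Icc 1 (k : ℤ), (cut {x | i ≤ f x}).ncard := by
  refine le_trans (le_of_eq ?_)
    (Finset.card_nsmul_le_sum _ _ _ fun i hi => hA.le _ (superlevel_eventuallyEq hf hi))
  simp

lemma IsMinCut.mul_ncard_cut_le_length (hA : IsMinCut A₀ A) {k : ℕ}
    (hf : f =ᶠ[cofinite] (k : ℤ) • A₀.indicator 1) (hl : chain l = boundary f) :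
    k * (cut A).ncard ≤ l.length := by
  refine (hA.sum_ncard_cut_le hf).trans ?_
  rw [← card_sum_cut_superlevel hl]
  exact Multiset.card_le_card (sum_cut_superlevel_le hl _)

lemma IsMinCut.exists_mem_cut_of_length_le (hA : IsMinCut A₀ A) {k : ℕ}
    (hf : f =ᶠ[cofinite] (k : ℤ) • A₀.indicator 1) (hl : chain l = boundary f)
    (hlength : l.length ≤ k * (cut A).ncard) {d : Dart g J} (hd : d ∈ l) :
    ∃ B, IsMinCut A₀ B ∧ d ∈ cut B := by
  have hsum := hlength.trans (hA.sum_ncard_cut_le hf)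
  have hl_eq := Multiset.eq_of_le_of_card_le (sum_cut_superlevel_le hl (Finset.Icc 1 (k : ℤ)))
    (by rwa [card_sum_cut_superlevel hl])
  rw [← Multiset.mem_coe, ← hl_eq, Multiset.mem_sum] at hd
  obtain ⟨i, hi, hdi⟩ := hd
  have hmin (i) (hi : i ∈ Finset.Icc 1 (k : ℤ)) : (cut A).ncard ≤ (cut {x | i ≤ f x}).ncard :=
    hA.le _ (superlevel_eventuallyEq hf hi)
  have hsum_eq : ∑ _i ∈ Finset.Icc 1 (k : ℤ), (cut A).ncard =
      ∑ i ∈ Finset.Icc 1 (k : ℤ), (cut {x | i ≤ f x}).ncard := by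
    refine (Finset.sum_le_sum hmin).antisymm (le_trans ?_ (hlength.trans (by simp)))
    rw [← card_sum_cut_superlevel hl, hl_eq, Multiset.coe_card]
  have heq := (Finset.sum_eq_sum_iff_of_le hmin).mp hsum_eq i hi
  exact ⟨_, ⟨superlevel_eventuallyEq hf hi, fun B hB => heq ▸ hA.le B hB⟩, by simpa using hdi⟩

end Superlevel

end Cuts

section Rank

variable {g : ℕ} {J : Subgroup (Gamma g)} {X : Set (Dart g J)}

lemma finrank_range_add_finrank_ker {R M N : Type*} [CommRing R] [IsDomain R] [AddCommGroup M]
    [AddCommGroup N] [Module R M] [Module R N] [Module.Finite R M] (f : M →ₗ[R] N) :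
    Module.finrank R f.range + Module.finrank R f.ker = Module.finrank R M := by
  rw [← f.quotKerEquivRange.finrank_eq]
  exact Submodule.finrank_quotient_add_finrank _

/-- The edges underlying a set of darts closed under reversal, as tail and label. -/
def edgeSet (X : Set (Dart g J)) : Set (Cos g J × Fin (2 * g)) := Dart.ofEdge ⁻¹' X

lemma finite_edgeSet (hX : X.Finite) : (edgeSet X).Finite :=
  hX.preimage Dart.ofEdge_injective.injOn

/-- The tails of a set of darts; for a set closed under reversal, all incident vertices. -/
def vertexSet (X : Set (Dart g J)) : Set (Cos g J) := Prod.fst '' X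

lemma finite_vertexSet (hX : X.Finite) : (vertexSet X).Finite := hX.image _

lemma two_mul_ncard_edgeSet (hfin : X.Finite) (hrev : ∀ d ∈ X, d.rev ∈ X) :
    2 * (edgeSet X).ncard = X.ncard := by
  have hsplit : X = Dart.ofEdge '' edgeSet X ∪ (Dart.rev ∘ Dart.ofEdge) '' edgeSet X := by
    ext d
    obtain ⟨e, rfl | rfl⟩ := d.exists_ofEdge_eq
    · simp [edgeSet, Dart.ofEdge_injective.eq_iff, (Dart.ofEdge_ne_rev _ _).symm]
    · have : (Dart.ofEdge e).rev ∈ X ↔ Dart.ofEdge e ∈ X :=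
        ⟨fun h => by simpa using hrev _ h, hrev _⟩
      simp [edgeSet, Dart.rev_injective.eq_iff, Dart.ofEdge_injective.eq_iff, Dart.ofEdge_ne_rev,
        this]
  have hE := finite_edgeSet hfin
  have hdisj : Disjoint (Dart.ofEdge '' edgeSet X) ((Dart.rev ∘ Dart.ofEdge) '' edgeSet X) := by
    rw [Set.disjoint_left]
    rintro _ ⟨e, -, rfl⟩ ⟨e', -, h⟩
    exact Dart.ofEdge_ne_rev e e' h.symm
  conv_rhs => rw [hsplit]
  rw [Set.ncard_union_eq hdisj (hE.image _) (hE.image _),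
    Set.ncard_image_of_injective _ Dart.ofEdge_injective,
    Set.ncard_image_of_injective _ (Dart.rev_injective.comp Dart.ofEdge_injective), two_mul]

/-- The cellular 1-chains carried by a set of darts. -/
def chainsOn (X : Set (Dart g J)) : Submodule ℤ (Dart g J → ℤ) where
  carrier := {z | (∀ d, z d.rev = -z d) ∧ ∀ d ∉ X, z d = 0}
  zero_mem' := by simp
  add_mem' := by
    rintro z z' ⟨hz, hzX⟩ ⟨hz', hzX'⟩
    exact ⟨fun d => by simp [hz, hz', add_comm], fun d hd => by simp [hzX d hd, hzX' d hd]⟩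
  smul_mem' := by
    rintro k z ⟨hz, hzX⟩
    exact ⟨fun d => by simp [hz], fun d hd => by simp [hzX d hd]⟩

/-- Restriction of 1-chains to positively oriented edges. -/
def chainsOnRestrict (X : Set (Dart g J)) : chainsOn X →ₗ[ℤ] (edgeSet X → ℤ) where
  toFun z e := z.1 (Dart.ofEdge e.1)
  map_add' _ _ := rfl
  map_smul' _ _ := rfl

lemma chainsOnRestrict_bijective (hrev : ∀ d ∈ X, d.rev ∈ X) :
    Function.Bijective (chainsOnRestrict X) := by
  constructor
  · refine (injective_iff_map_eq_zero _).mpr fun z hz => Subtype.ext (funext fun d => ?_)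
    have hpos (e) : z.1 (Dart.ofEdge e) = 0 := by
      by_cases he : e ∈ edgeSet X
      · exact congrFun hz ⟨e, he⟩
      · exact z.2.2 _ he
    obtain ⟨e, rfl | rfl⟩ := d.exists_ofEdge_eq
    · exact hpos e
    · rw [z.2.1, hpos]
      exact neg_zero
  · intro u
    let ι : edgeSet X → Dart g J := fun e => Dart.ofEdge e.1
    have hι : Function.Injective ι := Dart.ofEdge_injective.comp Subtype.val_injective
    have hoff (d) (hd : d ∉ X) : Function.extend ι u 0 d = 0 :=
      Function.extend_apply' _ _ _ fun ⟨e, he⟩ => hd (he ▸ e.2)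
    refine ⟨⟨fun d => Function.extend ι u 0 d - Function.extend ι u 0 d.rev, fun d => ?_,
      fun d hd => ?_⟩, funext fun e => ?_⟩
    · beta_reduce
      rw [Dart.rev_rev, neg_sub]
    · beta_reduce
      rw [hoff d hd, hoff d.rev fun h => hd (by simpa using hrev _ h), sub_zero]
    · have hnot : ¬ ∃ e', ι e' = (ι e).rev := fun ⟨e', he'⟩ => Dart.ofEdge_ne_rev _ _ he'
      change Function.extend ι u 0 (ι e) - Function.extend ι u 0 (ι e).rev = u e
      rw [hι.extend_apply, Function.extend_apply' _ _ _ hnot, Pi.zero_apply, sub_zero]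

/-- `chainsOnRestrict` as an isomorphism. -/
def chainsOnEquiv (hrev : ∀ d ∈ X, d.rev ∈ X) : chainsOn X ≃ₗ[ℤ] (edgeSet X → ℤ) :=
  LinearEquiv.ofBijective _ (chainsOnRestrict_bijective hrev)

lemma finite_chainsOn (hfin : X.Finite) (hrev : ∀ d ∈ X, d.rev ∈ X) :
    Module.Finite ℤ (chainsOn X) := by
  have := (finite_edgeSet hfin).to_subtype
  exact Module.Finite.equiv (chainsOnEquiv hrev).symm

lemma finrank_chainsOn (hfin : X.Finite) (hrev : ∀ d ∈ X, d.rev ∈ X) :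
    Module.finrank ℤ (chainsOn X) = (edgeSet X).ncard := by
  have := (finite_edgeSet hfin).fintype
  rw [(chainsOnEquiv hrev).finrank_eq, Module.finrank_fintype_fun_eq_card,
    ← Nat.card_eq_fintype_card, Nat.card_coe_set_eq]

/-- The cellular boundary from 1-chains to 0-chains, up to sign. -/
def vertexBoundary (X : Set (Dart g J)) : chainsOn X →ₗ[ℤ] (vertexSet X → ℤ) where
  toFun z x := ∑ s, z.1 (x.1, s)
  map_add' z z' := funext fun x => by simp [Finset.sum_add_distrib]
  map_smul' k z := funext fun x => by simp [Finset.mul_sum]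

lemma mem_ker_vertexBoundary {z : chainsOn X} :
    z ∈ (vertexBoundary X).ker ↔ ∀ x, ∑ s, z.1 (x, s) = 0 := by
  refine ⟨fun h x => ?_, fun h => funext fun x => h x.1⟩
  by_cases hx : x ∈ vertexSet X
  · exact congrFun h ⟨x, hx⟩
  · exact Finset.sum_eq_zero fun s _ => z.2.2 _ fun hs => hx ⟨_, hs, rfl⟩

lemma finrank_range_vertexBoundary_le (hfin : X.Finite) :
    Module.finrank ℤ (vertexBoundary X).range ≤ (vertexSet X).ncard := by
  have := (finite_vertexSet hfin).fintype
  have h := Submodule.finrank_le (vertexBoundary X).range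
  rwa [Module.finrank_fintype_fun_eq_card, ← Nat.card_eq_fintype_card, Nat.card_coe_set_eq] at h

/-- Being joined by a walk along darts of `X`. -/
def Reachable (X : Set (Dart g J)) : Cos g J → Cos g J → Prop :=
  Relation.ReflTransGen fun x y => ∃ d ∈ X, d.1 = x ∧ d.head = y

lemma chain_singleton_mem_chainsOn (hrev : ∀ d ∈ X, d.rev ∈ X) {d : Dart g J} (hd : d ∈ X) :
    chain [d] ∈ chainsOn X := by
  classical
  refine ⟨chain_rev _, fun e he => ?_⟩
  rw [chain_singleton, if_neg (by rintro rfl; exact he hd),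
    if_neg (by rintro rfl; exact he (by simpa using hrev _ hd)), sub_zero]

lemma vertexBoundary_chain_singleton {d : Dart g J} (hd : chain [d] ∈ chainsOn X)
    (htail : d.1 ∈ vertexSet X) (hhead : d.head ∈ vertexSet X) :
    vertexBoundary X ⟨chain [d], hd⟩ = Pi.single ⟨d.1, htail⟩ 1 - Pi.single ⟨d.head, hhead⟩ 1 := by
  funext x
  have h := sum_chain_dartWalk d.1 [d.2] x.1
  simp only [wordG_cons, wordG_nil, mul_one] at h
  refine h.trans ?_
  simp only [Pi.sub_apply, Pi.single_apply, Subtype.ext_iff]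
  rfl

lemma single_sub_single_mem_range (hrev : ∀ d ∈ X, d.rev ∈ X) {x y : Cos g J}
    (h : Reachable X x y) (hx : x ∈ vertexSet X) (hy : y ∈ vertexSet X) :
    (Pi.single ⟨x, hx⟩ 1 - Pi.single ⟨y, hy⟩ 1 : vertexSet X → ℤ) ∈ (vertexBoundary X).range := by
  induction h with
  | refl => simp
  | tail _ hstep ih =>
    obtain ⟨d, hd, rfl, rfl⟩ := hstep
    have htail : d.1 ∈ vertexSet X := ⟨d, hd, rfl⟩
    have hedge := (vertexBoundary X).mem_range_self ⟨_, chain_singleton_mem_chainsOn hrev hd⟩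
    rw [vertexBoundary_chain_singleton _ htail hy] at hedge
    simpa using Submodule.add_mem _ (ih htail) hedge

lemma sum_vertexBoundary [Fintype (vertexSet X)] (hfin : X.Finite) (z : chainsOn X) :
    ∑ x, vertexBoundary X z x = 0 := by
  have hsupp : (Function.support z.1).Finite :=
    hfin.subset fun d hd => by_contra fun h => hd (z.2.2 d h)
  have houtside : (Function.support fun x => ∑ s, z.1 (x, s)) ⊆ vertexSet X := fun x hx => by
    obtain ⟨s, -, hs⟩ := Finset.exists_ne_zero_of_sum_ne_zero hx
    exact ⟨(x, s), by_contra fun h => hs (z.2.2 _ h), rfl⟩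
  calc ∑ x, vertexBoundary X z x = ∑ᶠ x : Cos g J, ∑ s, z.1 (x, s) := by
        rw [finsum_eq_finsetSum_of_support_subset (s := (vertexSet X).toFinset) _
          (by simpa using houtside)]
        exact (Finset.sum_set_coe (vertexSet X) (f := fun x => ∑ s, z.1 (x, s)))
    _ = ∑ᶠ d, z.1 d := by
        rw [finsum_curry z.1 hsupp]
        simp only [finsum_eq_sum_of_fintype]
    _ = 0 := by
        rw [finsum_dart_eq_finsum_edge hsupp]
        simp [z.2.1]

lemma finrank_range_vertexBoundary_add_one (hfin : X.Finite) (hrev : ∀ d ∈ X, d.rev ∈ X)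
    (hne : X.Nonempty) (hconn : ∀ x ∈ vertexSet X, ∀ y ∈ vertexSet X, Reachable X x y) :
    Module.finrank ℤ (vertexBoundary X).range + 1 = (vertexSet X).ncard := by
  classical
  have := (finite_vertexSet hfin).fintype
  obtain ⟨d₀, hd₀⟩ := hne
  let x₀ : vertexSet X := ⟨d₀.1, d₀, hd₀, rfl⟩
  let S : (vertexSet X → ℤ) →ₗ[ℤ] ℤ := Fintype.linearCombination ℤ 1
  have hS (f) : S f = ∑ x, f x := by simp [S, Fintype.linearCombination_apply]
  have hrange : (vertexBoundary X).range = S.ker := by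
    apply le_antisymm
    · rintro _ ⟨z, rfl⟩
      rw [LinearMap.mem_ker, hS, sum_vertexBoundary hfin]
    · intro f hf
      rw [LinearMap.mem_ker, hS] at hf
      have hdecomp : f = ∑ x, f x • (Pi.single x 1 - Pi.single x₀ 1 : vertexSet X → ℤ) := by
        simp only [smul_sub, Finset.sum_sub_distrib, ← Finset.sum_smul, hf, zero_smul, sub_zero]
        funext y
        simp [Finset.sum_apply, Pi.single_apply]
      rw [hdecomp]
      exact Submodule.sum_mem _ fun x _ => Submodule.smul_mem _ _
        (single_sub_single_mem_range hrev (hconn x x.2 x₀ x₀.2) x.2 x₀.2)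
  have hsurj : S.range = ⊤ :=
    LinearMap.range_eq_top.mpr fun k => ⟨Pi.single x₀ k, by rw [hS]; simp⟩
  have hrank := finrank_range_add_finrank_ker S
  rw [hsurj, finrank_top, Module.finrank_self, ← hrange, Module.finrank_fintype_fun_eq_card,
    ← Nat.card_eq_fintype_card, Nat.card_coe_set_eq] at hrank
  omega

end Rank

section Band

open Filter

variable {g : ℕ} {J : Subgroup (Gamma g)} {γ : Gamma g} {A A₀ B : Set (Cos g J)}

/-- The darts whose two sides are neither both in `A` nor both outside `B`. For `A ⊆ B` they are
the darts of a subsurface with set of faces `B \ A`, frontiers of `A` and `B` included. -/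
def band (A B : Set (Cos g J)) : Set (Dart g J) :=
  {d | ¬ (d.face ∈ A ∧ d.rev.face ∈ A) ∧ (d.face ∈ B ∨ d.rev.face ∈ B)}

lemma rev_mem_band {d : Dart g J} (h : d ∈ band A B) : d.rev ∈ band A B := by
  simp only [band, Set.mem_ofPred_eq, Dart.rev_rev] at h ⊢
  tauto

lemma band_eq_union (h : A ⊆ B) :
    band A B = {d | d.face ∈ B \ A} ∪ (cut A ∪ cut Bᶜ) := by
  ext d
  have htail := @h d.face
  have hhead := @h d.rev.face
  simp only [band, cut, Set.mem_ofPred_eq, Set.mem_union, Set.mem_sdiff, Set.mem_compl_iff]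
  tauto

lemma ncard_setOf_face_mem {K : Set (Cos g J)} :
    {d : Dart g J | d.face ∈ K}.ncard = 4 * g * K.ncard := by
  let σ : Cos g J × Letter g → Dart g J := fun p => (act p.1 p.2.prefixElt, p.2)
  have hσ : Function.Injective σ := by
    rintro ⟨x, s⟩ ⟨y, t⟩ h
    obtain ⟨hxy, rfl⟩ := Prod.mk.inj h
    have := congrArg (act · s.prefixElt⁻¹) hxy
    simp only [act_act_inv_cancel] at this
    rw [this]
  have himage : {d : Dart g J | d.face ∈ K} = σ '' (K ×ˢ Set.univ) := by
    ext d
    refine ⟨fun h => ⟨(Dart.face d, d.2), ⟨h, trivial⟩, by simp [σ, Dart.face]⟩, ?_⟩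
    rintro ⟨p, ⟨hp, -⟩, rfl⟩
    simpa [σ, Dart.face] using hp
  rw [himage, Set.ncard_image_of_injective _ hσ, Set.ncard_prod, Set.ncard_univ,
    Nat.card_eq_fintype_card, Fintype.card_prod, Fintype.card_fin, Fintype.card_bool]
  ring

lemma finite_band (h : A ⊆ B) (hA : (cut A).Finite) (hB : (cut B).Finite) (hD : (B \ A).Finite) :
    (band A B).Finite := by
  rw [band_eq_union h, cut_compl]
  exact (finite_setOf_face_mem hD).union (hA.union (hB.preimage Dart.rev_injective.injOn))

lemma ncard_band (h : A ⊆ B) (hA : (cut A).Finite) (hB : (cut B).Finite) (hD : (B \ A).Finite) :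
    (band A B).ncard = 4 * g * (B \ A).ncard + (cut A).ncard + (cut B).ncard := by
  have hB' : (cut Bᶜ).Finite := by
    rw [cut_compl]
    exact hB.preimage Dart.rev_injective.injOn
  have hdisj : Disjoint (cut A) (cut Bᶜ) :=
    Set.disjoint_left.mpr fun d hd hd' => hd'.1 (h hd.1)
  have hdisj' : Disjoint {d : Dart g J | d.face ∈ B \ A} (cut A ∪ cut Bᶜ) := by
    rw [Set.disjoint_left]
    rintro d hd (hd' | hd')
    exacts [hd.2 hd'.1, hd'.1 hd.1]
  rw [band_eq_union h, Set.ncard_union_eq hdisj' (finite_setOf_face_mem hD) (hA.union hB'),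
    Set.ncard_union_eq hdisj hA hB', ncard_setOf_face_mem, ncard_cut_compl, add_assoc]

/-- The 2-chains that are constant on `A` and vanish outside `B`: those whose boundary is
carried by `band A B`. -/
def bandFaceChains (A B : Set (Cos g J)) : Submodule ℤ (Cos g J → ℤ) where
  carrier := {f | (∀ x ∈ A, ∀ y ∈ A, f x = f y) ∧ ∀ x ∉ B, f x = 0}
  zero_mem' := by simp
  add_mem' := by
    rintro f f' ⟨hA, hB⟩ ⟨hA', hB'⟩
    exact ⟨fun x hx y hy => by simp [hA x hx y hy, hA' x hx y hy],
      fun x hx => by simp [hB x hx, hB' x hx]⟩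
  smul_mem' := by
    rintro k f ⟨hA, hB⟩
    exact ⟨fun x hx y hy => by simp [hA x hx y hy], fun x hx => by simp [hB x hx]⟩

/-- The values of a 2-chain on `B \ A` and its common value on `A`, read off at `a ∈ A`. -/
def bandFaceChainsEval (A B : Set (Cos g J)) (a : Cos g J) :
    bandFaceChains A B →ₗ[ℤ] (↥(B \ A) → ℤ) × ℤ where
  toFun f := (fun x => f.1 x, f.1 a)
  map_add' _ _ := rfl
  map_smul' _ _ := rfl

lemma bandFaceChainsEval_bijective (h : A ⊆ B) {a : Cos g J} (ha : a ∈ A) :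
    Function.Bijective (bandFaceChainsEval A B a) := by
  classical
  constructor
  · refine (injective_iff_map_eq_zero _).mpr fun f hf => Subtype.ext (funext fun x => ?_)
    obtain ⟨hband, hA⟩ := Prod.mk.inj hf
    by_cases hxA : x ∈ A
    · exact (f.2.1 x hxA a ha).trans hA
    · by_cases hxB : x ∈ B
      · exact congrFun hband ⟨x, hxB, hxA⟩
      · exact f.2.2 x hxB
  · rintro ⟨u, c⟩
    refine ⟨⟨fun x => if hx : x ∈ B \ A then u ⟨x, hx⟩ else if x ∈ A then c else 0,
      fun x hx y hy => by simp [hx, hy],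
      fun x hx => by simp [hx, Set.notMem_subset h hx]⟩, Prod.ext (funext fun x => ?_) ?_⟩
    · exact dif_pos x.2
    · simp [bandFaceChainsEval, ha]

lemma finrank_bandFaceChains (h : A ⊆ B) (hA : A.Nonempty) (hD : (B \ A).Finite) :
    Module.finrank ℤ (bandFaceChains A B) = (B \ A).ncard + 1 := by
  obtain ⟨a, ha⟩ := hA
  have := hD.fintype
  rw [(LinearEquiv.ofBijective _ (bandFaceChainsEval_bijective h ha)).finrank_eq,
    Module.finrank_prod, Module.finrank_fintype_fun_eq_card, Module.finrank_self,
    ← Nat.card_eq_fintype_card, Nat.card_coe_set_eq]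

/-- The cellular boundary from 2-chains to 1-chains of the band. -/
def bandBoundary (A B : Set (Cos g J)) : bandFaceChains A B →ₗ[ℤ] chainsOn (band A B) where
  toFun f := ⟨boundary f.1, boundary_rev _, fun d hd => by
    rw [boundary, sub_eq_zero]
    by_cases hA : Dart.face d ∈ A ∧ d.rev.face ∈ A
    · exact f.2.1 _ hA.1 _ hA.2
    · have hB : Dart.face d ∉ B ∧ d.rev.face ∉ B := by
        simp only [band, Set.mem_ofPred_eq] at hd
        tauto
      rw [f.2.2 _ hB.1, f.2.2 _ hB.2]⟩
  map_add' _ _ := Subtype.ext (boundary_add _ _)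
  map_smul' _ _ := Subtype.ext (boundary_smul _ _)

lemma bandBoundary_injective (hg : 0 < g) (hB : Bᶜ.Nonempty) :
    Function.Injective (bandBoundary A B) := by
  refine (injective_iff_map_eq_zero _).mpr fun f hf => Subtype.ext (funext fun x => ?_)
  obtain ⟨b, hb⟩ := hB
  have hinv (d : Dart g J) : f.1 d.face = f.1 d.rev.face :=
    sub_eq_zero.mp (congrFun (congrArg Subtype.val hf) d)
  exact (eq_of_face_rev_invariant hinv hg x b).trans (f.2.2 b hb)

lemma IsMinCut.eq_of_face_rev_eq (C : IsHalfSurface γ A₀) (hA : IsMinCut A₀ A) {f : Cos g J → ℤ}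
    {c : ℤ} (hf : ∀ᶠ x in cofinite, x ∈ A₀ → f x = c)
    (hinv : ∀ d : Dart g J, d.face ∈ A → d.rev.face ∈ A → f d.face = f d.rev.face) {x : Cos g J}
    (hx : x ∈ A) : f x = c := by
  have hfin : {x | x ∈ A ∧ f x ≠ c}.Finite :=
    (eventually_cofinite.mp (hA.near.mem_iff.and hf)).subset fun x hx h =>
      hx.2 (h.2 (h.1.mp hx.1))
  have hempty := hA.eq_empty_of_isolated C hfin (fun _ h => h.1) fun d hd hr =>
    ⟨hr, by rw [← hinv d hd.1 hr]; exact hd.2⟩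
  by_contra hne
  exact hempty.subset ⟨hx, hne⟩

lemma ker_vertexBoundary_band (C : IsHalfSurface γ A₀) (hA : IsMinCut A₀ A) (hB : IsMinCut A₀ B)
    (hfin : (band A B).Finite) :
    (vertexBoundary (band A B)).ker = (bandBoundary A B).range := by
  apply le_antisymm
  · intro z hz
    have hcycle : IsOneCycle z.1 := ⟨z.2.1, mem_ker_vertexBoundary.mp hz,
      hfin.subset fun d hd => by_contra fun h => hd (z.2.2 d h)⟩
    obtain ⟨k, f, hf, hzf⟩ := C.exists_eq_boundary hcycle
    have hoff (d : Dart g J) (hd : d ∉ band A B) : f d.face = f d.rev.face :=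
      sub_eq_zero.mp ((congrFun hzf d).symm.trans (z.2.2 d hd))
    have hfA {x} (hx : x ∈ A) : f x = k := hA.eq_of_face_rev_eq C
      (hf.mono fun x hx h => by simpa [h] using hx) (fun d hd hr => hoff d fun h => h.1 ⟨hd, hr⟩) hx
    have hfB {x} (hx : x ∈ Bᶜ) : f x = 0 := hB.compl.eq_of_face_rev_eq C.compl
      (hf.mono fun x hx h => by simpa [show x ∉ A₀ from h] using hx)
      (fun d hd hr => hoff d fun h => h.2.elim hd hr) hx
    exact ⟨⟨f, fun x hx y hy => (hfA hx).trans (hfA hy).symm, fun x hx => hfB hx⟩,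
      Subtype.ext hzf.symm⟩
  · rintro _ ⟨f, rfl⟩
    exact mem_ker_vertexBoundary.mpr (sum_boundary f.1)

lemma ncard_edgeSet_band (C : IsHalfSurface γ A₀) (hA : IsMinCut A₀ A) (hB : IsMinCut A₀ B)
    (h : A ⊆ B) (hfin : (band A B).Finite) : (edgeSet (band A B)).ncard =
      (B \ A).ncard + 1 + Module.finrank ℤ (vertexBoundary (band A B)).range := by
  have hD : (B \ A).Finite := finite_diff_of_eventuallyEq (hB.near.trans hA.near.symm)
  have hBc := (infinite_of_eventuallyEq hB.near.compl C.infinite_compl).nonempty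
  have hAne := (infinite_of_eventuallyEq hA.near C.infinite).nonempty
  have := finite_chainsOn hfin fun _ => rev_mem_band
  have hrank := finrank_range_add_finrank_ker (vertexBoundary (band A B))
  rw [ker_vertexBoundary_band C hA hB hfin,
    LinearMap.finrank_range_of_inj (bandBoundary_injective C.pos hBc),
    finrank_bandFaceChains h hAne hD, finrank_chainsOn hfin fun _ => rev_mem_band] at hrank
  omega

lemma face_ofRelPos_zero (hg : 0 < g) (x : Cos g J) :
    Dart.face (x, Letter.ofRelPos 0 (by omega)) = x := by
  simp [Dart.face, Letter.prefixElt, Letter.relPos_ofRelPos]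

lemma face_mem_iff_of_notMem_vertexSet {x : Cos g J}
    (hx : x ∉ vertexSet (cut A ∪ cut Aᶜ)) (s t : Letter g) :
    Dart.face (x, s) ∈ A ↔ Dart.face (x, t) ∈ A := by
  refine iff_of_eq
    (Letter.eq_of_rot_invariant (p := fun s => Dart.face (x, s) ∈ A) (fun s => ?_) s t)
  have hnot : (x, s) ∉ cut A ∪ cut Aᶜ := fun h => hx ⟨_, h, rfl⟩
  simp only [cut, Set.mem_union, Set.mem_ofPred_eq, Dart.face_rev, Set.mem_compl_iff] at hnot
  exact propext (by tauto)

lemma vertexSet_band_subset (hg : 0 < g) : vertexSet (band A B) ⊆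
    B \ A ∪ (vertexSet (cut A ∪ cut Aᶜ) ∪ vertexSet (cut B ∪ cut Bᶜ)) := by
  rintro _ ⟨⟨x, s⟩, hd, rfl⟩
  by_contra hx
  simp only [Set.mem_union, not_or] at hx
  obtain ⟨hxD, hxA, hxB⟩ := hx
  have hA (t) := face_mem_iff_of_notMem_vertexSet hxA t (Letter.ofRelPos 0 (by omega))
  have hB (t) := face_mem_iff_of_notMem_vertexSet hxB t (Letter.ofRelPos 0 (by omega))
  simp only [face_ofRelPos_zero hg] at hA hB
  simp only [band, Set.mem_ofPred_eq, Dart.face_rev, hA, hB, and_self, or_self] at hd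
  exact hxD ⟨hd.2, hd.1⟩

lemma ncard_vertexSet_cut_le (hA : (cut A).Finite) :
    (vertexSet (cut A ∪ cut Aᶜ)).ncard ≤ 2 * (cut A).ncard := by
  have hfin : (cut A ∪ cut Aᶜ).Finite := by
    rw [cut_compl]
    exact hA.union (hA.preimage Dart.rev_injective.injOn)
  calc (vertexSet (cut A ∪ cut Aᶜ)).ncard ≤ (cut A ∪ cut Aᶜ).ncard := Set.ncard_image_le hfin
    _ ≤ (cut A).ncard + (cut Aᶜ).ncard := Set.ncard_union_le _ _
    _ = 2 * (cut A).ncard := by rw [ncard_cut_compl, two_mul]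

lemma finite_vertexSet_cut (hA : (cut A).Finite) : (vertexSet (cut A ∪ cut Aᶜ)).Finite := by
  rw [cut_compl]
  exact finite_vertexSet (hA.union (hA.preimage Dart.rev_injective.injOn))

lemma ncard_vertexSet_band_le (hg : 0 < g) (hA : (cut A).Finite) (hB : (cut B).Finite)
    (hD : (B \ A).Finite) : (vertexSet (band A B)).ncard ≤
      (B \ A).ncard + (2 * (cut A).ncard + 2 * (cut B).ncard) :=
  calc (vertexSet (band A B)).ncard
      ≤ (B \ A ∪ (vertexSet (cut A ∪ cut Aᶜ) ∪ vertexSet (cut B ∪ cut Bᶜ))).ncard :=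
        Set.ncard_le_ncard (vertexSet_band_subset hg)
          (hD.union ((finite_vertexSet_cut hA).union (finite_vertexSet_cut hB)))
    _ ≤ (B \ A).ncard + ((vertexSet (cut A ∪ cut Aᶜ)).ncard +
          (vertexSet (cut B ∪ cut Bᶜ)).ncard) :=
        (Set.ncard_union_le _ _).trans (Nat.add_le_add_left (Set.ncard_union_le _ _) _)
    _ ≤ _ := by gcongr <;> exact ncard_vertexSet_cut_le ‹_›

-- Comparing `2E = 4g(F) + 2n`, `E ≤ F + 1 + V` and `V ≤ F + 4n`, with `n` the length of a
-- minimal cut, bounds the number `F` of faces because `4g > 4`.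
lemma IsMinCut.ncard_diff_le (C : IsHalfSurface γ A₀) (hA : IsMinCut A₀ A) (hB : IsMinCut A₀ B)
    (h : A ⊆ B) : (B \ A).ncard ≤ 3 * (cut A).ncard + 1 := by
  have hcutA := hA.finite_cut C
  have hcutB := hB.finite_cut C
  have hD : (B \ A).Finite := finite_diff_of_eventuallyEq (hB.near.trans hA.near.symm)
  have hfin := finite_band h hcutA hcutB hD
  have hdarts := ncard_band h hcutA hcutB hD
  have hedges := two_mul_ncard_edgeSet hfin fun _ => rev_mem_band
  have heuler := ncard_edgeSet_band C hA hB h hfin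
  have hrank := finrank_range_vertexBoundary_le hfin
  have hvertices := ncard_vertexSet_band_le C.pos hcutA hcutB hD
  have hcut := hA.ncard_cut_eq hB
  have hgenus : 8 * (B \ A).ncard ≤ 4 * g * (B \ A).ncard :=
    Nat.mul_le_mul_right _ (by have := C.two_le; omega)
  omega

lemma exists_isLeast_isMinCut (C : IsHalfSurface γ A₀) :
    ∃ A, IsLeast {A | IsMinCut A₀ A} A := by
  obtain ⟨A₁, hA₁⟩ := exists_isMinCut A₀
  let S : Set ℕ := {n | ∃ A, IsMinCut A₀ A ∧ A ⊆ A₁ ∧ (A₁ \ A).ncard = n}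
  have hbdd : BddAbove S := ⟨3 * (cut A₁).ncard + 1, by
    rintro _ ⟨A, hA, hsub, rfl⟩
    rw [hA₁.ncard_cut_eq hA]
    exact hA.ncard_diff_le C hA₁ hsub⟩
  obtain ⟨_, ⟨A, hA, hsub, rfl⟩, hmax⟩ := hbdd.exists_isGreatest_of_nonempty
    ⟨_, A₁, hA₁, subset_rfl, rfl⟩
  refine ⟨A, hA, fun B hB x hx => ?_⟩
  have hinter := hA.inter C hB
  have hle : (A₁ \ (A ∩ B)).ncard ≤ (A₁ \ A).ncard :=
    hmax ⟨_, hinter, Set.inter_subset_left.trans hsub, rfl⟩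
  have heq : A₁ \ A = A₁ \ (A ∩ B) := Set.eq_of_subset_of_ncard_le
    (Set.sdiff_subset_sdiff_right Set.inter_subset_left) hle
    (finite_diff_of_eventuallyEq (hA₁.near.trans hinter.near.symm))
  by_contra hxB
  have hmem : x ∈ A₁ \ (A ∩ B) := ⟨hsub hx, fun h => hxB h.2⟩
  rw [← heq] at hmem
  exact hmem.2 hx

lemma isLeast_isMinCut_compl :
    IsLeast {A | IsMinCut A₀ᶜ A} Bᶜ ↔ IsGreatest {B | IsMinCut A₀ B} B := by
  refine ⟨fun h => ⟨?_, fun X hX => ?_⟩, fun h => ⟨h.1.compl, fun X hX => ?_⟩⟩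
  · change IsMinCut A₀ B
    simpa only [compl_compl] using IsMinCut.compl h.1
  · exact Set.compl_subset_compl.mp (h.2 (IsMinCut.compl hX))
  · have hcompl : IsMinCut A₀ Xᶜ := by simpa only [compl_compl] using IsMinCut.compl hX
    exact Set.compl_subset_comm.mp (h.2 hcompl)

lemma exists_isGreatest_isMinCut (C : IsHalfSurface γ A₀) :
    ∃ B, IsGreatest {B | IsMinCut A₀ B} B := by
  obtain ⟨A, hA⟩ := exists_isLeast_isMinCut C.compl
  exact ⟨Aᶜ, isLeast_isMinCut_compl.mp (by rwa [compl_compl])⟩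

end Band

section Orbit

open Filter

variable {g : ℕ} {J : Subgroup (Gamma g)} {γ : Gamma g} {A₀ B : Set (Cos g J)}

/-- The dart leaving the head of `d` that has exactly `i` half-edges between itself and the arrival
of `d`, in the order of `gapN`. -/
def Dart.turn (d : Dart g J) (i : ℕ) : Dart g J := (d.head, Letter.rot^[i] d.2.next)

lemma Dart.face_turn_zero (d : Dart g J) : (d.turn 0).face = d.face := d.face_next

lemma Dart.face_rev_turn (d : Dart g J) (i : ℕ) : (d.turn i).rev.face = (d.turn (i + 1)).face := by
  rw [face_rev, turn, turn, Function.iterate_succ_apply']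

lemma Dart.turn_last (hg : 0 < g) (d : Dart g J) : d.turn (4 * g - 1) = d.rev := by
  rw [turn, Letter.next, ← Function.iterate_succ_apply, show (4 * g - 1).succ = 4 * g by omega,
    Letter.rot_iterate_period]
  rfl

lemma Dart.eq_of_head_eq {d e : Dart g J} (hhead : d.head = e.head) (hletter : d.2 = e.2) :
    d = e :=
  rev_injective (Prod.ext hhead (congrArg Letter.inv hletter))

lemma exists_turn_mem_cut (hg : 0 < g) {d : Dart g J} (hd : d ∈ cut B) :
    ∃ i < 4 * g, d.turn i ∈ cut B := by
  by_contra! hnot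
  have hface (i) (hi : i < 4 * g) : (d.turn i).face ∈ B := by
    induction i with
    | zero => exact d.face_turn_zero ▸ hd.1
    | succ i ih =>
      rw [← d.face_rev_turn]
      by_contra hout
      exact hnot i (by omega) ⟨ih (by omega), hout⟩
  have hlast := hface (4 * g - 1) (by omega)
  rw [d.turn_last hg] at hlast
  exact hd.2 hlast

/-- The next dart along the frontier of `B`, keeping `B` on the same side: the first one among
those leaving the head of `d` that lies in the cut. -/
def cutNext (B : Set (Cos g J)) (d : Dart g J) : Dart g J := d.turn (sInf {i | d.turn i ∈ cut B})

lemma cutNext_fst (B : Set (Cos g J)) (d : Dart g J) : (cutNext B d).1 = d.head := rfl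

lemma cutNext_spec (hg : 0 < g) {d : Dart g J} (hd : d ∈ cut B) :
    ∃ j < 4 * g, cutNext B d = d.turn j ∧ d.turn j ∈ cut B ∧ ∀ i ≤ j, (d.turn i).face ∈ B := by
  obtain ⟨i, hi, hcut⟩ := exists_turn_mem_cut hg hd
  refine ⟨_, (Nat.sInf_le hcut).trans_lt hi, rfl,
    Nat.sInf_mem (s := {i | d.turn i ∈ cut B}) ⟨i, hcut⟩, fun j hj => ?_⟩
  induction j with
  | zero => exact d.face_turn_zero ▸ hd.1
  | succ j ih =>
    rw [← d.face_rev_turn]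
    by_contra hout
    exact Nat.notMem_of_lt_sInf hj ⟨ih (by omega), hout⟩

lemma cutNext_mapsTo (hg : 0 < g) : Set.MapsTo (cutNext B) (cut B) (cut B) := fun _ hd => by
  obtain ⟨j, -, hj, hcut, -⟩ := cutNext_spec hg hd
  exact hj ▸ hcut

lemma eq_of_turn_eq_turn {d e : Dart g J} (hd : d ∈ cut B) {i j : ℕ} (hij : i ≤ j)
    (h : d.turn i = e.turn j) (he : ∀ k ≤ j, (e.turn k).face ∈ B) : d = e := by
  obtain ⟨hhead, hletter⟩ := Prod.mk.inj h
  obtain ⟨m, rfl⟩ := Nat.exists_eq_add_of_le hij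
  rw [Function.iterate_add_apply] at hletter
  have hnext := Letter.rot_bijective.injective.iterate i hletter
  rcases m with _ | m
  · refine Dart.eq_of_head_eq hhead ?_
    have hinv : d.2.inv = e.2.inv := Letter.rot_bijective.injective hnext
    simpa using congrArg Letter.inv hinv
  · rw [Function.iterate_succ_apply'] at hnext
    have hrev : d.rev = e.turn m :=
      Prod.ext hhead (Letter.rot_bijective.injective hnext)
    exact absurd (hrev ▸ he m (by omega)) hd.2

lemma cutNext_injOn (hg : 0 < g) : Set.InjOn (cutNext B) (cut B) := by
  intro d hd e he h
  obtain ⟨i, -, hi, -, hfacei⟩ := cutNext_spec hg hd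
  obtain ⟨j, -, hj, -, hfacej⟩ := cutNext_spec hg he
  rw [hi, hj] at h
  rcases le_total i j with hij | hij
  · exact eq_of_turn_eq_turn hd hij h hfacej
  · exact (eq_of_turn_eq_turn he hij h.symm hfacei).symm

lemma mem_periodicPts_of_injOn {α : Type*} {f : α → α} {s : Set α} (hs : s.Finite)
    (hmaps : Set.MapsTo f s s) (hinj : Set.InjOn f s) {x : α} (hx : x ∈ s) :
    x ∈ Function.periodicPts f := by
  have := hs.to_subtype
  obtain ⟨n, hn, hper⟩ := (hmaps.restrict_inj.mpr hinj).mem_periodicPts ⟨x, hx⟩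
  refine ⟨n, hn, ?_⟩
  have hval := congrArg Subtype.val hper
  rwa [hmaps.iterate_restrict] at hval

lemma iterate_eq_dartWalk {F : Dart g J → Dart g J} (hF : ∀ d, (F d).1 = d.head) (d : Dart g J)
    (m : ℕ) : List.iterate F d m = dartWalk d.1 ((List.iterate F d m).map Prod.snd) := by
  induction m generalizing d with
  | zero => rfl
  | succ m ih =>
    simp only [List.iterate, List.map_cons, dartWalk]
    congr 1
    exact (ih (F d)).trans (by rw [hF]; rfl)

lemma act_wordG_iterate {F : Dart g J → Dart g J} (hF : ∀ d, (F d).1 = d.head) (d : Dart g J)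
    (m : ℕ) : act d.1 (wordG ((List.iterate F d m).map Prod.snd)) = (F^[m] d).1 := by
  induction m generalizing d with
  | zero => simp
  | succ m ih =>
    simp only [List.iterate, List.map_cons, wordG_cons, act_mul, Function.iterate_succ_apply]
    rw [← ih (F d), hF]
    rfl

lemma chain_perm {l l' : List (Dart g J)} (h : l.Perm l') : chain l = chain l' := by
  funext d
  rw [chain, chain, h.count_eq, h.count_eq]

lemma chain_toList_cut (hB : (cut B).Finite) :
    chain hB.toFinset.toList = boundary (B.indicator 1) := by
  classical
  funext d
  have hcount (e : Dart g J) :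
      (hB.toFinset.toList.count e : ℤ) = (cut B).indicator (1 : Dart g J → ℤ) e := by
    by_cases he : e ∈ cut B
    · rw [List.count_eq_one_of_mem (Finset.nodup_toList _) (by simpa using he),
        Set.indicator_of_mem he]
      rfl
    · rw [List.count_eq_zero_of_not_mem (by simpa using he), Set.indicator_of_notMem he]
      rfl
  rw [boundary_indicator_apply, chain, hcount, hcount]

lemma exists_complementary_chain (hB : (cut B).Finite) {l : List (Dart g J)} (hl : l.Nodup)
    (hsub : ∀ d ∈ l, d ∈ cut B) : ∃ l' : List (Dart g J),
      l.length + l'.length = (cut B).ncard ∧ chain l + chain l' = boundary (B.indicator 1) := by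
  obtain ⟨l₀, hperm₀, hsublist⟩ := List.subperm_of_subset hl (l₂ := hB.toFinset.toList)
    fun d hd => by simpa using hsub d hd
  obtain ⟨l', hperm'⟩ := hsublist.exists_perm_append
  have hperm := hperm'.trans (hperm₀.append_right l')
  refine ⟨l', ?_, ?_⟩
  · rw [← List.length_append, ← hperm.length_eq, Finset.length_toList,
      Set.ncard_eq_toFinset_card _ hB]
  · rw [← chain_append, ← chain_perm hperm, chain_toList_cut]

lemma exists_conj_eq_zpow (hJ : J = Subgroup.zpowers γ) {x : Gamma g} {w : List (Letter g)}
    (h : act (mkCos g J x) (wordG w) = mkCos g J x) : ∃ k : ℤ, x * wordG w * x⁻¹ = γ ^ k := by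
  rw [act_mkCos_eq_self_iff, hJ, Subgroup.mem_zpowers_iff] at h
  exact h.imp fun _ => Eq.symm

-- The walk represents some `γ ^ k`, and its complement in the cut represents `γ ^ (1 - k)`; the
-- lower bound on lengths applied to either of them leaves only `k = 1`.
lemma IsMinCut.eq_and_ncard_le_of_nodup (C : IsHalfSurface γ A₀) (hB : IsMinCut A₀ B) {x : Gamma g}
    {w : List (Letter g)} (hclosed : act (mkCos g J x) (wordG w) = mkCos g J x) (hw : w ≠ [])
    (hnodup : (dartWalk (mkCos g J x) w).Nodup)
    (hsub : ∀ d ∈ dartWalk (mkCos g J x) w, d ∈ cut B) :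
    x * wordG w * x⁻¹ = γ ∧ (cut B).ncard ≤ w.length := by
  obtain ⟨k, hk⟩ := exists_conj_eq_zpow C.eq_zpowers hclosed
  obtain ⟨f, hf, hchain⟩ := C.exists_chain_eq_boundary hk
  obtain ⟨l', hlength, hsum⟩ := exists_complementary_chain (hB.finite_cut C) hnodup hsub
  rw [length_dartWalk] at hlength
  have hpos : 0 < w.length := List.length_pos_iff.mpr hw
  rcases le_or_gt k 0 with hk₀ | hk₀
  · obtain ⟨m, hm⟩ := Int.eq_ofNat_of_zero_le (show 0 ≤ -k by omega)
    have hchain' : chain l' = boundary (B.indicator 1 - f) := by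
      rw [boundary_sub, ← hsum, hchain, add_sub_cancel_left]
    have hnear : B.indicator 1 - f =ᶠ[cofinite] ((m + 1 : ℕ) : ℤ) • A₀.indicator 1 := by
      have hind : B.indicator (1 : Cos g J → ℤ) =ᶠ[cofinite] A₀.indicator 1 :=
        indicator_eventuallyEq .rfl hB.near
      refine (hind.sub hf).trans (.of_eq ?_)
      rw [show k = -m by omega]
      push_cast
      module
    have hle := hB.mul_ncard_cut_le_length hnear hchain'
    nlinarith
  · obtain ⟨m, rfl⟩ := Int.eq_succ_of_zero_lt hk₀
    have hle := hB.mul_ncard_cut_le_length (k := m + 1) (by exact_mod_cast hf) hchain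
    rw [length_dartWalk] at hle
    obtain rfl : m = 0 := by
      by_contra hm
      have : 1 ≤ m := Nat.one_le_iff_ne_zero.mpr hm
      nlinarith
    exact ⟨by simpa using hk, by simpa using hle⟩

lemma IsMinCut.exists_iterate_cutNext (C : IsHalfSurface γ A₀) (hB : IsMinCut A₀ B) :
    ∃ (x : Gamma g) (w : List (Letter g)) (d : Dart g J), x * wordG w * x⁻¹ = γ ∧
      w.length = (cut B).ncard ∧ (∀ e, e ∈ dartWalk (mkCos g J x) w ↔ e ∈ cut B) ∧
      dartWalk (mkCos g J x) w = List.iterate (cutNext B) d w.length ∧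
      (cutNext B)^[w.length] d = d := by
  classical
  have hfin := hB.finite_cut C
  have hmaps : Set.MapsTo (cutNext B) (cut B) (cut B) := cutNext_mapsTo C.pos
  obtain ⟨d, hd⟩ := hB.nonempty_cut C
  obtain ⟨x, hx⟩ := mkCos_surjective d.1
  have hperiod := mem_periodicPts_of_injOn hfin hmaps (cutNext_injOn C.pos) hd
  set n := Function.minimalPeriod (cutNext B) d
  set w := (List.iterate (cutNext B) d n).map Prod.snd with hw
  have hwalk : dartWalk (mkCos g J x) w = List.iterate (cutNext B) d n := by
    rw [hx, hw, ← iterate_eq_dartWalk (cutNext_fst B)]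
  have hlength : w.length = n := by rw [hw, List.length_map, List.length_iterate]
  have hclosed : act (mkCos g J x) (wordG w) = mkCos g J x := by
    rw [hx, hw, act_wordG_iterate (cutNext_fst B), Function.iterate_minimalPeriod]
  have hnodup : (dartWalk (mkCos g J x) w).Nodup := by
    rw [hwalk, ← List.range_map_iterate]
    exact List.nodup_range.map_on fun i hi j hj =>
      Function.iterate_injOn_Iio_minimalPeriod (by simpa using hi) (by simpa using hj)
  have hsub : ∀ e ∈ dartWalk (mkCos g J x) w, e ∈ cut B := fun e he => by
    rw [hwalk, ← List.range_map_iterate, List.mem_map] at he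
    obtain ⟨i, -, rfl⟩ := he
    exact hmaps.iterate i hd
  have hne : w ≠ [] := List.ne_nil_of_length_pos
    (hlength ▸ Function.minimalPeriod_pos_of_mem_periodicPts hperiod)
  obtain ⟨hconj, hle⟩ := hB.eq_and_ncard_le_of_nodup C hclosed hne hnodup hsub
  have hcard : (dartWalk (mkCos g J x) w).toFinset.card = w.length := by
    rw [List.toFinset_card_of_nodup hnodup, length_dartWalk]
  have heq : (dartWalk (mkCos g J x) w).toFinset = hfin.toFinset :=
    Finset.eq_of_subset_of_card_le (fun e he => by simpa using hsub e (by simpa using he))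
      (by rw [hcard, ← Set.ncard_eq_toFinset_card _ hfin]; exact hle)
  refine ⟨x, w, d, hconj, ?_, fun e => ?_, by rw [hwalk, hlength], ?_⟩
  · rw [← hcard, heq, ← Set.ncard_eq_toFinset_card _ hfin]
  · rw [← List.mem_toFinset, heq, Set.Finite.mem_toFinset]
  · rw [hlength, Function.iterate_minimalPeriod]

lemma IsMinCut.ncard_cut_le_length (C : IsHalfSurface γ A₀) (hB : IsMinCut A₀ B) {x : Gamma g}
    {w : List (Letter g)} (h : x * wordG w * x⁻¹ = γ) : (cut B).ncard ≤ w.length := by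
  obtain ⟨f, hf, hchain⟩ := C.exists_chain_eq_boundary (k := 1) (by rwa [zpow_one])
  have hle := hB.mul_ncard_cut_le_length (k := 1) (by exact_mod_cast hf) hchain
  rwa [length_dartWalk, one_mul] at hle

lemma IsMinCut.conjLen_eq (C : IsHalfSurface γ A₀) (hB : IsMinCut A₀ B) :
    conjLen γ = (cut B).ncard := by
  obtain ⟨x, w, -, hconj, hlength, -⟩ := hB.exists_iterate_cutNext C
  refine le_antisymm (Nat.sInf_le ⟨w, hlength, x, hconj⟩) (le_csInf ⟨_, w, hlength, x, hconj⟩ ?_)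
  rintro _ ⟨w', rfl, y, hy⟩
  exact hB.ncard_cut_le_length C hy

end Orbit

section Homotopy

namespace Complex

variable {g : ℕ} {Y : Complex g} {sE : Set Y.E} {sF : Set Y.F}

lemma inSet_univ (l : List Y.D) : Y.InSet Set.univ l := fun _ _ => trivial

lemma WalkFrom.append {u v x : Y.V} {l l' : List Y.D} (h : Y.WalkFrom u v l)
    (h' : Y.WalkFrom v x l') : Y.WalkFrom u x (l ++ l') := by
  induction h with
  | nil => exact h'
  | cons d _ ih => exact .cons d (ih h')

lemma elemMove.append {b b' : List Y.D} (h : Y.elemMove sE sF b b') (p q : List Y.D) :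
    Y.elemMove sE sF (p ++ b ++ q) (p ++ b' ++ q) := by
  rcases h with ⟨l₁, l₂, d, hd, rfl, rfl⟩ | ⟨l₁, l₂, d, hd, rfl, rfl⟩
  · exact .inl ⟨p ++ l₁, l₂ ++ q, d, hd, by simp, by simp⟩
  · exact .inr ⟨p ++ l₁, l₂ ++ q, d, hd, by simp, by simp⟩

lemma Homotopic.append {t u v x : Y.V} {p q c c' : List Y.D}
    (h : Y.Homotopic Set.univ Set.univ u v c c') (hp : Y.WalkFrom t u p) (hq : Y.WalkFrom v x q) :
    Y.Homotopic Set.univ Set.univ t x (p ++ c ++ q) (p ++ c' ++ q) := by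
  induction h with
  | rel b b' h =>
    obtain ⟨hb, hb', -, -, hmove⟩ := h
    exact .rel _ _ ⟨(hp.append hb).append hq, (hp.append hb').append hq, inSet_univ _,
      inSet_univ _, hmove.imp (·.append p q) (·.append p q)⟩
  | refl => exact .refl _
  | symm _ _ _ ih => exact .symm _ _ ih
  | trans _ _ _ _ _ ih ih' => exact .trans _ _ _ ih ih'

lemma wordOf_append (l l' : List Y.D) : Y.wordOf (l ++ l') = Y.wordOf l ++ Y.wordOf l' :=
  List.map_append

lemma wordOf_revW (l : List Y.D) : Y.wordOf (Y.revW l) = invWord (Y.wordOf l) := by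
  rw [wordOf, revW, invWord, List.map_reverse, List.map_map, wordOf, List.map_map]
  rfl

lemma wordG_wordOf_backtrack (d : Y.D) : wordG (Y.wordOf [d, Y.dRev d]) = 1 := by
  have hinv : Y.dLet (Y.dRev d) = (Y.dLet d).inv := rfl
  simp [wordOf, hinv, letterG_inv]

end Complex

variable {g : ℕ}

lemma wordG_rotate_eq_one {w : List (Letter g)} (h : wordG w = 1) (n : ℕ) :
    wordG (w.rotate n) = 1 := by
  rw [List.rotate_eq_drop_append_take_mod, wordG_append, mul_eq_one_comm, ← wordG_append,
    List.take_append_drop, h]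

namespace Complex

variable {Y : Complex g} {sE : Set Y.E} {sF : Set Y.F}

lemma wordG_wordOf_faceLoop (hY : ∀ f, Y.wordOf (Y.bdry f) = relatorWord g) {b : List Y.D}
    (hb : Y.faceLoop sF b) : wordG (Y.wordOf b) = 1 := by
  obtain ⟨f, -, n, hf⟩ := hb
  have hrotate : wordG (Y.wordOf ((Y.bdry f).rotate n)) = 1 := by
    rw [wordOf, List.map_rotate]
    exact wordG_rotate_eq_one ((congrArg wordG (hY f)).trans wordG_relatorWord) n
  rcases hf with rfl | rfl
  · exact hrotate
  · rw [wordOf_revW, wordG_invWord, hrotate, inv_one]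

lemma elemMove.wordG_eq (hY : ∀ f, Y.wordOf (Y.bdry f) = relatorWord g) {l l' : List Y.D}
    (h : Y.elemMove sE sF l l') : wordG (Y.wordOf l) = wordG (Y.wordOf l') := by
  rcases h with ⟨l₁, l₂, d, -, rfl, rfl⟩ | ⟨l₁, l₂, b, hb, rfl, rfl⟩
  · rw [show l₁ ++ d :: Y.dRev d :: l₂ = l₁ ++ ([d, Y.dRev d] ++ l₂) from rfl]
    simp only [wordOf_append, wordG_append, wordG_wordOf_backtrack, one_mul]
  · simp only [wordOf_append, wordG_append, wordG_wordOf_faceLoop hY hb, mul_one]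

lemma Homotopic.wordG_eq (hY : ∀ f, Y.wordOf (Y.bdry f) = relatorWord g) {u v : Y.V}
    {c c' : List Y.D} (h : Y.Homotopic sE sF u v c c') :
    wordG (Y.wordOf c) = wordG (Y.wordOf c') := by
  induction h with
  | rel b b' h => exact h.2.2.2.2.elim (·.wordG_eq hY) fun h' => (h'.wordG_eq hY).symm
  | refl => rfl
  | symm _ _ _ ih => exact ih.symm
  | trans _ _ _ _ _ ih ih' => exact ih.trans ih'

end Complex

variable {J : Subgroup (Gamma g)}

lemma wordOf_bdry_cover (f : (cover g J).F) :
    (cover g J).wordOf ((cover g J).bdry f) = relatorWord g :=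
  (congrArg _ (bdry_cover f)).trans (wordOf_dartWalk _ _)

/-- The walk of `cover g J` that starts at the vertex `v` and reads the word `w`. -/
abbrev coverWalk (v : Cos g J) (w : List (Letter g)) : List (cover g J).D :=
  (dartWalk v w).map Dart.toCover

lemma coverWalk_append (v : Cos g J) (w w' : List (Letter g)) :
    coverWalk v (w ++ w') = coverWalk v w ++ coverWalk (act v (wordG w)) w' := by
  rw [coverWalk, dartWalk_append, List.map_append]

lemma length_coverWalk (v : Cos g J) (w : List (Letter g)) : (coverWalk v w).length = w.length := by
  rw [coverWalk, List.length_map, length_dartWalk]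

lemma walkFrom_coverWalk {v v' : Cos g J} {w : List (Letter g)} (h : act v (wordG w) = v') :
    (cover g J).WalkFrom v v' (coverWalk v w) :=
  h ▸ walkFrom_dartWalk v w

/-- Two words are related when they represent the same element of the surface group and the walks
that read them from any given vertex of `cover g J` are homotopic. -/
def homotopyCon (g : ℕ) (J : Subgroup (Gamma g)) : Con (FreeMonoid (Letter g)) where
  r w w' := wordG w.toList = wordG w'.toList ∧ ∀ u : Cos g J, (cover g J).Homotopic Set.univ
    Set.univ u (act u (wordG w.toList)) (coverWalk u w.toList) (coverWalk u w'.toList)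
  iseqv.refl _ := ⟨rfl, fun _ => .refl _⟩
  iseqv.symm := fun ⟨h, hu⟩ => ⟨h.symm, fun u => h ▸ .symm _ _ (hu u)⟩
  iseqv.trans := fun ⟨h, hu⟩ ⟨h', hu'⟩ =>
    ⟨h.trans h', fun u => .trans _ _ _ (hu u) (by rw [h]; exact hu' u)⟩
  mul' := by
    rintro a b c d ⟨hab, hab'⟩ ⟨hcd, hcd'⟩
    simp only [FreeMonoid.toList_mul, wordG_append, coverWalk_append, act_mul]
    refine ⟨by rw [hab, hcd], fun u => ?_⟩
    have hleft := (hab' u).append (.nil _) (walkFrom_coverWalk (w := c.toList) rfl)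
    have hright := (hcd' (act u (wordG a.toList))).append
      (walkFrom_coverWalk (w := b.toList) (by rw [hab])) (.nil _)
    rw [List.nil_append, List.nil_append] at hleft
    rw [List.append_nil, List.append_nil] at hright
    rw [← hab]
    exact .trans _ _ _ hleft hright

lemma homotopic_coverWalk_nil {u : Cos g J} {w : List (Letter g)} (hw : wordG w = 1)
    (hmove : (cover g J).elemMove Set.univ Set.univ [] (coverWalk u w)) :
    (cover g J).Homotopic Set.univ Set.univ u (act u (wordG w)) (coverWalk u w) [] := by
  have hclosed : act u (wordG w) = u := by rw [hw, act_one]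
  rw [hclosed]
  exact .rel _ _ ⟨walkFrom_coverWalk hclosed, .nil _, Complex.inSet_univ _, Complex.inSet_univ _,
    .inr hmove⟩

lemma homotopic_coverWalk (u : Cos g J) {w w' : List (Letter g)} (h : wordG w = wordG w') :
    (cover g J).Homotopic Set.univ Set.univ u (act u (wordG w)) (coverWalk u w)
      (coverWalk u w') := by
  refine (con_of_wordG_eq (homotopyCon g J) (fun s => ?_) ?_ h).2 u
  · have hs : wordG [s, s.inv] = 1 := by simp [letterG_inv]
    refine ⟨hs, fun u => homotopic_coverWalk_nil hs 
      (.inl ⟨[], [], Dart.toCover (u, s), trivial, rfl, ?_⟩)⟩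
    exact congrArg (Dart.toCover (u, s) :: [·]) (Dart.dRev_toCover (u, s)).symm
  · refine ⟨wordG_relatorWord, fun u => homotopic_coverWalk_nil wordG_relatorWord
      (.inr ⟨[], [], _, ⟨u, trivial, 0, .inl rfl⟩, rfl, ?_⟩)⟩
    rw [bdry_cover]
    simp

lemma nullHomotopic_coverWalk_iff {v : Cos g J} {w : List (Letter g)}
    (hclosed : act v (wordG w) = v) :
    (cover g J).NullHomotopic Set.univ Set.univ (coverWalk v w) ↔ wordG w = 1 := by
  refine ⟨fun ⟨_, _, h⟩ => ?_, fun h => ⟨v, walkFrom_coverWalk hclosed, ?_⟩⟩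
  · have hword := h.wordG_eq wordOf_bdry_cover
    rwa [wordOf_dartWalk] at hword
  · have hhom := homotopic_coverWalk (J := J) v (h.trans wordG_nil.symm)
    rwa [hclosed] at hhom

lemma freelyHomotopic_coverWalk {x y : Gamma g} {w w' : List (Letter g)}
    (hclosed : x * wordG w * x⁻¹ ∈ J) (h : y * wordG w' * y⁻¹ = x * wordG w * x⁻¹) :
    (cover g J).FreelyHomotopic Set.univ Set.univ (coverWalk (mkCos g J x) w)
      (coverWalk (mkCos g J y) w') := by
  obtain ⟨q, hq⟩ := wordG_surjective (x⁻¹ * y)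
  have hqy : act (mkCos g J x) (wordG q) = mkCos g J y := by
    rw [hq, act_mkCos, mul_inv_cancel_left]
  have hclosed' := act_mkCos_eq_self_iff.mpr (h ▸ hclosed)
  have hword : wordG w = wordG (q ++ w' ++ invWord q) := by
    rw [wordG_append, wordG_append, wordG_invWord, hq]
    calc wordG w = x⁻¹ * (x * wordG w * x⁻¹) * x := by group
      _ = x⁻¹ * y * wordG w' * (x⁻¹ * y)⁻¹ := by rw [← h]; group
  refine ⟨_, _, coverWalk (mkCos g J x) q,
    walkFrom_coverWalk (act_mkCos_eq_self_iff.mpr hclosed), walkFrom_coverWalk hclosed',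
    walkFrom_coverWalk hqy, Complex.inSet_univ _, Complex.inSet_univ _, Complex.inSet_univ _, ?_⟩
  have hrev : coverWalk (mkCos g J y) (invWord q) =
      (cover g J).revW (coverWalk (mkCos g J x) q) := by
    rw [← hqy, revW_map_toCover, ← dartWalk_invWord]
  have hhom := homotopic_coverWalk (mkCos g J x) hword
  rwa [act_mkCos_eq_self_iff.mpr hclosed, coverWalk_append, coverWalk_append, wordG_append,
    act_mul, hqy, hclosed', hrev] at hhom

lemma exists_conj_eq_of_freelyHomotopic {x : Gamma g} {w : List (Letter g)}
    {c : List (cover g J).D} (h : (cover g J).FreelyHomotopic Set.univ Set.univ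
      (coverWalk (mkCos g J x) w) c) :
    ∃ (y : Gamma g) (w' : List (Letter g)), c.length = w'.length ∧
      y * wordG w' * y⁻¹ = x * wordG w * x⁻¹ := by
  obtain ⟨(u : Cos g J), (v : Cos g J), q, -, hv, hq, -, -, -, hhom⟩ := h
  obtain ⟨w', rfl, -⟩ := walkFrom_iff.mp hv
  obtain ⟨q', rfl, -⟩ := walkFrom_iff.mp hq
  refine ⟨x * wordG q', w', length_coverWalk _ _, ?_⟩
  have hword := hhom.wordG_eq wordOf_bdry_cover
  simp only [Complex.wordOf_append, Complex.wordOf_revW, wordOf_dartWalk, wordG_append,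
    wordG_invWord] at hword
  rw [hword]
  group

lemma goodCycle_coverWalk_iff {x : Gamma g} {w : List (Letter g)}
    (hclosed : x * wordG w * x⁻¹ ∈ J) :
    (cover g J).GoodCycle (coverWalk (mkCos g J x) w) ↔ wordG w ≠ 1 ∧
      ∀ (y : Gamma g) (w' : List (Letter g)), y * wordG w' * y⁻¹ = x * wordG w * x⁻¹ →
        w.length ≤ w'.length := by
  have hact := act_mkCos_eq_self_iff.mpr hclosed
  constructor
  · rintro ⟨-, ⟨-, -, hessential⟩, hshort⟩
    refine ⟨mt (nullHomotopic_coverWalk_iff hact).mpr hessential, fun y w' h => ?_⟩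
    simpa only [length_coverWalk] using hshort _ (freelyHomotopic_coverWalk hclosed h)
  · rintro ⟨hne, hshort⟩
    have hw : w ≠ [] := fun h => hne (h ▸ wordG_nil)
    have hcycle : (cover g J).IsCycle (coverWalk (mkCos g J x) w) :=
      ⟨List.ne_nil_of_length_pos (length_coverWalk _ _ ▸ List.length_pos_iff.mpr hw), _,
        walkFrom_coverWalk hact⟩
    refine ⟨hcycle, ⟨hcycle, Complex.inSet_univ _, mt (nullHomotopic_coverWalk_iff hact).mp hne⟩,
      fun c hc => ?_⟩
    obtain ⟨y, w', hlength, hconj⟩ := exists_conj_eq_of_freelyHomotopic hc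
    rw [length_coverWalk, hlength]
    exact hshort y w' hconj

lemma exists_coverWalk_eq_of_isCycle {c : List (cover g J).D} (hc : (cover g J).IsCycle c) :
    ∃ (x : Gamma g) (w : List (Letter g)),
      x * wordG w * x⁻¹ ∈ J ∧ c = coverWalk (mkCos g J x) w := by
  obtain ⟨-, v, hv⟩ := hc
  obtain ⟨w, rfl, hclosed⟩ := walkFrom_iff.mp hv
  obtain ⟨x, rfl⟩ := mkCos_surjective (v : Cos g J)
  exact ⟨x, w, act_mkCos_eq_self_iff.mp hclosed.symm, rfl⟩

end Homotopy

section ShortestCycles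

open Filter

variable {g : ℕ} {J : Subgroup (Gamma g)} {γ : Gamma g} {A₀ A B : Set (Cos g J)}

lemma wordG_flatten_replicate (w : List (Letter g)) (n : ℕ) :
    wordG (List.replicate n w).flatten = wordG w ^ n := by
  induction n with
  | zero => simp
  | succ n ih => rw [List.replicate_succ, List.flatten_cons, wordG_append, ih, pow_succ']

lemma IsMinCut.exists_word_conj_eq_zpow (C : IsHalfSurface γ A₀) (hB : IsMinCut A₀ B) (k : ℤ) :
    ∃ (y : Gamma g) (w : List (Letter g)),
      y * wordG w * y⁻¹ = γ ^ k ∧ w.length = k.natAbs * (cut B).ncard := by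
  obtain ⟨y, w, -, hconj, hlength, -⟩ := hB.exists_iterate_cutNext C
  rcases Int.natAbs_eq k with hk | hk
  · refine ⟨y, (List.replicate k.natAbs w).flatten, ?_, by simp [hlength]⟩
    rw [wordG_flatten_replicate, ← conj_pow, hconj, ← zpow_natCast, ← hk]
  · refine ⟨y, (List.replicate k.natAbs (invWord w)).flatten, ?_, by simp [hlength, invWord]⟩
    rw [wordG_flatten_replicate, ← conj_pow, wordG_invWord, ← conj_inv, hconj, inv_pow,
      ← zpow_natCast, ← zpow_neg, ← hk]

lemma IsMinCut.exists_mem_cut_or_rev_mem_cut (hA : IsMinCut A₀ A) {k : ℤ} {f : Cos g J → ℤ}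
    {l : List (Dart g J)} (hf : f =ᶠ[cofinite] k • A₀.indicator 1) (hl : chain l = boundary f)
    (hlength : l.length ≤ k.natAbs * (cut A).ncard) {d : Dart g J} (hd : d ∈ l) :
    ∃ B, IsMinCut A₀ B ∧ (d ∈ cut B ∨ d.rev ∈ cut B) := by
  rcases Int.natAbs_eq k with hk | hk
  · rw [hk] at hf
    exact (hA.exists_mem_cut_of_length_le hf hl hlength hd).imp fun _ => And.imp_right .inl
  · have hf' : (-1 : ℤ) • f =ᶠ[cofinite] (k.natAbs : ℤ) • A₀.indicator 1 := by
      refine (hf.const_smul (-1)).trans (.of_eq ?_)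
      rw [smul_smul, neg_one_mul, show -k = k.natAbs by omega]
    have hl' : chain (l.map Dart.rev).reverse = boundary ((-1 : ℤ) • f) := by
      rw [chain_reverse_map_rev, hl, boundary_smul, neg_one_smul]
    exact (hA.exists_mem_cut_of_length_le hf' hl' (by simpa using hlength)
      (List.mem_reverse.mpr (List.mem_map_of_mem hd))).imp fun _ => And.imp_right .inr

lemma exists_isMinCut_of_mem_goodCycle (C : IsHalfSurface γ A₀) {c : List (cover g J).D}
    (hc : (cover g J).GoodCycle c) {d : Dart g J} (hd : d.toCover ∈ c) :
    ∃ B, IsMinCut A₀ B ∧ (d ∈ cut B ∨ d.rev ∈ cut B) := by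
  obtain ⟨x, w, hclosed, rfl⟩ := exists_coverWalk_eq_of_isCycle hc.1
  obtain ⟨-, hshort⟩ := (goodCycle_coverWalk_iff hclosed).mp hc
  obtain ⟨k, hk⟩ := Subgroup.mem_zpowers_iff.mp (C.eq_zpowers ▸ hclosed)
  obtain ⟨f, hf, hchain⟩ := C.exists_chain_eq_boundary hk.symm
  obtain ⟨A, hA⟩ := exists_isMinCut A₀
  obtain ⟨y, w', hconj, hlength⟩ := hA.exists_word_conj_eq_zpow C k
  refine hA.exists_mem_cut_or_rev_mem_cut hf hchain ?_
    ((List.mem_map_of_injective Dart.toCover_injective).mp hd)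
  rw [length_dartWalk, ← hlength]
  exact hshort y w' (hconj.trans hk)

lemma IsMinCut.exists_goodCycle (C : IsHalfSurface γ A₀) (hB : IsMinCut A₀ B) :
    ∃ c, (cover g J).GoodCycle c ∧ ∀ d ∈ cut B, d.toCover ∈ c := by
  obtain ⟨x, w, -, hconj, hlength, hmem, -⟩ := hB.exists_iterate_cutNext C
  refine ⟨coverWalk (mkCos g J x) w, (goodCycle_coverWalk_iff (hconj ▸ C.gen_mem)).mpr
    ⟨fun hw => C.ne_one ?_, fun y w' h => ?_⟩, fun d hd => List.mem_map_of_mem ((hmem d).mpr hd)⟩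
  · rw [← hconj, hw, mul_one, mul_inv_cancel]
  · exact hlength ▸ hB.ncard_cut_le_length C (h.trans hconj)

lemma toCover_fst_mem_coreE1_iff (C : IsHalfSurface γ A₀) (d : Dart g J) :
    d.toCover.1 ∈ coreE1 g J ↔ ∃ B, IsMinCut A₀ B ∧ (d ∈ cut B ∨ d.rev ∈ cut B) := by
  constructor
  · rintro ⟨c, hc, b, hb⟩
    obtain ⟨e, he⟩ := Dart.toCover_surjective (d.toCover.1, b)
    obtain ⟨B, hB, hcut⟩ := exists_isMinCut_of_mem_goodCycle C hc (he ▸ hb)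
    have hfst : e.toCover.1 = d.toCover.1 := by rw [he]
    rcases Dart.eq_or_eq_rev_of_toCover_fst_eq hfst with rfl | rfl
    · exact ⟨B, hB, hcut⟩
    · exact ⟨B, hB, by rwa [Dart.rev_rev, or_comm] at hcut⟩
  · rintro ⟨B, hB, hcut⟩
    obtain ⟨c, hc, hmem⟩ := hB.exists_goodCycle C
    rcases hcut with hcut | hcut
    · exact ⟨c, hc, _, hmem d hcut⟩
    · refine ⟨c, hc, d.rev.toCover.2, ?_⟩
      rw [← Dart.toCover_rev_fst]
      exact hmem _ hcut

end ShortestCycles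

section CoreCells

variable {g : ℕ} {J : Subgroup (Gamma g)} {Z : Set (Cos g J)}

lemma Dart.ofEdge_toCover_fst (d : Dart g J) :
    ofEdge d.toCover.1 = d ∨ ofEdge d.toCover.1 = d.rev :=
  eq_or_eq_rev_of_toCover_fst_eq rfl

lemma Dart.fst_mem_coreV1 {d : Dart g J} (h : d.toCover.1 ∈ coreE1 g J) : d.1 ∈ coreV1 g J := by
  refine ⟨_, h, ?_⟩
  rcases d.ofEdge_toCover_fst with hd | hd
  · exact .inl (congrArg Prod.fst hd)
  · exact .inr ((congrArg head hd).trans d.head_rev)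

lemma Dart.toCover_mem_bdry_iff {d : Dart g J} {f : Cos g J} :
    d.toCover ∈ (cover g J).bdry f ↔ d.face = f := by
  rw [bdry_cover, List.mem_map_of_injective toCover_injective, mem_dartWalk_relatorWord]

lemma inc0_iff {c c' : (cover g J).Cell} : (cover g J).inc0 c c' ↔ ∃ d : Dart g J,
    (c = (cover g J).vCell d.1 ∧ c' = (cover g J).eCell d.toCover.1) ∨
    (c = (cover g J).vCell d.1 ∧ c' = (cover g J).fCell d.face) ∨
    (c = (cover g J).eCell d.toCover.1 ∧ c' = (cover g J).fCell d.face) := by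
  constructor
  · intro h
    rcases c with (v : Cos g J) | e | f <;> rcases c' with v' | e' | (f' : Cos g J) <;>
      try exact h.elim
    · rcases h with rfl | rfl
      · exact ⟨Dart.ofEdge e', .inl ⟨rfl, rfl⟩⟩
      · exact ⟨(Dart.ofEdge e').rev, .inl ⟨rfl, by rw [Dart.toCover_rev_fst]; rfl⟩⟩
    · obtain ⟨d, hd, rfl⟩ := h
      obtain ⟨d, rfl⟩ := Dart.toCover_surjective d
      obtain rfl := Dart.toCover_mem_bdry_iff.mp hd
      exact ⟨d, .inr (.inl ⟨by rw [Dart.dTail_toCover]; rfl, rfl⟩)⟩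
    · obtain ⟨b, hd⟩ := h
      obtain ⟨d, hdb⟩ := Dart.toCover_surjective (e, b)
      obtain rfl := Dart.toCover_mem_bdry_iff.mp (hdb ▸ hd)
      exact ⟨d, .inr (.inr ⟨by rw [hdb]; rfl, rfl⟩)⟩
  · rintro ⟨d, ⟨rfl, rfl⟩ | ⟨rfl, rfl⟩ | ⟨rfl, rfl⟩⟩
    · rcases d.ofEdge_toCover_fst with h | h
      · exact .inl (congrArg Prod.fst h)
      · exact .inr ((congrArg Dart.head h).trans d.head_rev)
    · exact ⟨_, Dart.toCover_mem_bdry_iff.mpr rfl, d.dTail_toCover⟩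
    · exact ⟨_, Dart.toCover_mem_bdry_iff.mpr rfl⟩

/-- A face whose closure contains the given cell; through it a set of faces that is a union of
components determines a set of cells. -/
def cellFace : (cover g J).Cell → Cos g J
  | Sum.inl v => v
  | Sum.inr (Sum.inl e) => (Dart.ofEdge e).face
  | Sum.inr (Sum.inr f) => f

/-- A set of faces is saturated if it is a union of components of the complement of step (i) of
the core surface: no edge outside step (i) separates it from its complement. -/
def IsSaturated (Z : Set (Cos g J)) : Prop :=
  ∀ d : Dart g J, d.toCover.1 ∉ coreE1 g J → (d.face ∈ Z ↔ d.rev.face ∈ Z)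

lemma IsSaturated.sdiff {Z' : Set (Cos g J)} (hZ : IsSaturated Z) (hZ' : IsSaturated Z') :
    IsSaturated (Z \ Z') :=
  fun d hd => and_congr (hZ d hd) (not_congr (hZ' d hd))

lemma IsSaturated.face_mem_iff (hZ : IsSaturated Z) (hg : 0 < g) {d : Dart g J}
    (hd : d.1 ∉ coreV1 g J) : d.face ∈ Z ↔ d.1 ∈ Z := by
  have hcut : d.1 ∉ vertexSet (cut Z ∪ cut Zᶜ) := by
    rintro ⟨e, he, hed⟩
    have hsides := hZ e fun h => hd (hed ▸ Dart.fst_mem_coreV1 h)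
    rcases he with ⟨hface, hrev⟩ | ⟨hface, hrev⟩
    · exact hrev (hsides.mp hface)
    · exact hface (hsides.mpr (not_not.mp hrev))
  rw [← face_ofRelPos_zero hg d.1]
  exact face_mem_iff_of_notMem_vertexSet hcut _ _

lemma IsSaturated.cellFace_eCell_mem_iff (hZ : IsSaturated Z) {d : Dart g J}
    (hd : d.toCover.1 ∉ coreE1 g J) :
    cellFace ((cover g J).eCell d.toCover.1) ∈ Z ↔ d.face ∈ Z := by
  change (Dart.ofEdge d.toCover.1).face ∈ Z ↔ _
  rcases d.ofEdge_toCover_fst with h | h <;> rw [h]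
  exact (hZ d hd).symm

lemma IsSaturated.cellFace_mem_iff_of_inc0 (hZ : IsSaturated Z) (hg : 0 < g)
    {c c' : (cover g J).Cell} (hinc : (cover g J).inc0 c c')
    (hc : ¬ (cover g J).inSub (coreS1 g J) c) (hc' : ¬ (cover g J).inSub (coreS1 g J) c') :
    cellFace c ∈ Z ↔ cellFace c' ∈ Z := by
  obtain ⟨d, ⟨rfl, rfl⟩ | ⟨rfl, rfl⟩ | ⟨rfl, rfl⟩⟩ := inc0_iff.mp hinc
  · exact (hZ.face_mem_iff hg hc).symm.trans (hZ.cellFace_eCell_mem_iff hc').symm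
  · exact (hZ.face_mem_iff hg hc).symm
  · exact hZ.cellFace_eCell_mem_iff hc

lemma IsSaturated.cellFace_mem_iff_of_reachS (hZ : IsSaturated Z) (hg : 0 < g)
    {c c' : (cover g J).Cell} (h : (cover g J).reachS (coreS1 g J) c c') :
    cellFace c ∈ Z ↔ cellFace c' ∈ Z := by
  induction h with
  | refl => exact Iff.rfl
  | tail _ hstep ih =>
    obtain ⟨hinc | hinc, hc, hc'⟩ := hstep
    · exact ih.trans (hZ.cellFace_mem_iff_of_inc0 hg hinc hc hc')
    · exact ih.trans (hZ.cellFace_mem_iff_of_inc0 hg hinc hc' hc).symm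

lemma not_inSub_coreS1_fCell (f : (cover g J).F) :
    ¬ (cover g J).inSub (coreS1 g J) ((cover g J).fCell f) :=
  fun h => h

lemma exists_reachS_fCell (hg : 0 < g) {c : (cover g J).Cell}
    (hc : ¬ (cover g J).inSub (coreS1 g J) c) :
    ∃ f, (cover g J).reachS (coreS1 g J) c ((cover g J).fCell f) := by
  have hstep {f} (h : (cover g J).inc0 c ((cover g J).fCell f)) :
      (cover g J).reachS (coreS1 g J) c ((cover g J).fCell f) :=
    .single ⟨.inl h, hc, not_inSub_coreS1_fCell f⟩
  rcases c with v | e | f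
  · exact ⟨_, hstep (inc0_iff.mpr ⟨((v : Cos g J), Letter.ofRelPos 0 (by omega)),
      .inr (.inl ⟨rfl, rfl⟩)⟩)⟩
  · exact ⟨_, hstep (inc0_iff.mpr ⟨Dart.ofEdge e, .inr (.inr ⟨rfl, rfl⟩)⟩)⟩
  · exact ⟨f, .refl⟩

lemma reachS_fCell_face_rev {c : (cover g J).Cell} {d : Dart g J}
    (hd : d.toCover.1 ∉ coreE1 g J)
    (h : (cover g J).reachS (coreS1 g J) c ((cover g J).fCell d.face)) :
    (cover g J).reachS (coreS1 g J) c ((cover g J).fCell d.rev.face) := by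
  have hinc : (cover g J).inc0 ((cover g J).eCell d.toCover.1) ((cover g J).fCell d.face) :=
    inc0_iff.mpr ⟨d, .inr (.inr ⟨rfl, rfl⟩)⟩
  have hinc' : (cover g J).inc0 ((cover g J).eCell d.toCover.1) ((cover g J).fCell d.rev.face) :=
    inc0_iff.mpr ⟨d.rev, .inr (.inr ⟨by rw [Dart.toCover_rev_fst], rfl⟩)⟩
  exact (h.tail ⟨.inr hinc, not_inSub_coreS1_fCell _, hd⟩).tail
    ⟨.inl hinc', hd, not_inSub_coreS1_fCell _⟩

end CoreCells

section Core

variable {g : ℕ} {J : Subgroup (Gamma g)} {γ : Gamma g} {A₀ A B : Set (Cos g J)}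

lemma IsMinCut.isSaturated (C : IsHalfSurface γ A₀) (hA : IsMinCut A₀ A) : IsSaturated A := by
  intro d hd
  by_contra hsides
  refine hd ((toCover_fst_mem_coreE1_iff C d).mpr ⟨A, hA, ?_⟩)
  simp only [cut, Set.mem_ofPred_eq, Dart.rev_rev]
  tauto

lemma toCover_fst_notMem_coreE1_of_isLeast (C : IsHalfSurface γ A₀)
    (hA : IsLeast {A | IsMinCut A₀ A} A) {d : Dart g J} (hd : d.face ∈ A) (hd' : d.rev.face ∈ A) :
    d.toCover.1 ∉ coreE1 g J := by
  rw [toCover_fst_mem_coreE1_iff C]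
  rintro ⟨B, hB, hcut | hcut⟩
  · exact hcut.2 (hA.2 hB hd')
  · exact hcut.2 (hA.2 hB (by rwa [Dart.rev_rev]))

lemma infinite_setOf_reachS_of_isLeast (C : IsHalfSurface γ A₀)
    (hA : IsLeast {A | IsMinCut A₀ A} A) {c : (cover g J).Cell}
    (hc : ¬ (cover g J).inSub (coreS1 g J) c) (hcA : cellFace c ∈ A) :
    {f | (cover g J).reachS (coreS1 g J) c ((cover g J).fCell f)}.Infinite := by
  intro hfin
  have hmem {f : Cos g J} (h : (cover g J).reachS (coreS1 g J) c ((cover g J).fCell f)) : f ∈ A :=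
    ((hA.1.isSaturated C).cellFace_mem_iff_of_reachS C.pos h).mp hcA
  have hempty := hA.1.eq_empty_of_isolated C hfin (fun f => hmem) fun d hd hd' =>
    reachS_fCell_face_rev (toCover_fst_notMem_coreE1_of_isLeast C hA (hmem hd) hd') hd
  obtain ⟨f, hf⟩ := exists_reachS_fCell C.pos hc
  exact Set.notMem_empty f (hempty ▸ hf)

lemma coreFin_iff (C : IsHalfSurface γ A₀) (hA : IsLeast {A | IsMinCut A₀ A} A)
    (hB : IsGreatest {B | IsMinCut A₀ B} B) (c : (cover g J).Cell) :
    coreFin g J c ↔ ¬ (cover g J).inSub (coreS1 g J) c ∧ cellFace c ∈ B \ A := by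
  refine and_congr_right fun hc => ⟨fun hfin => ⟨?_, fun hcA => ?_⟩, fun hcD => ?_⟩
  · by_contra hcB
    exact infinite_setOf_reachS_of_isLeast C.compl (isLeast_isMinCut_compl.mpr hB) hc hcB hfin
  · exact infinite_setOf_reachS_of_isLeast C hA hc hcA hfin
  · have hsat := (hB.1.isSaturated C).sdiff (hA.1.isSaturated C)
    exact (finite_diff_of_eventuallyEq (hB.1.near.trans hA.1.near.symm)).subset fun f hf =>
      (hsat.cellFace_mem_iff_of_reachS C.pos hf).mp hcD

lemma mem_band_of_face_mem {d : Dart g J} (h : d.face ∈ B \ A) : d ∈ band A B :=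
  ⟨fun hd => h.2 hd.1, .inl h.1⟩

lemma mem_band_of_toCover_fst_mem_coreE1 (C : IsHalfSurface γ A₀)
    (hA : IsLeast {A | IsMinCut A₀ A} A) (hB : IsGreatest {B | IsMinCut A₀ B} B) {d : Dart g J}
    (hd : d.toCover.1 ∈ coreE1 g J) : d ∈ band A B := by
  obtain ⟨X, hX, hcut⟩ := (toCover_fst_mem_coreE1_iff C d).mp hd
  have hAX (e : Dart g J) (h : e.face ∈ A) : e.face ∈ X := hA.2 hX h
  have hXB (e : Dart g J) (h : e.face ∈ X) : e.face ∈ B := hB.2 hX h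
  have := hAX d
  have := hAX d.rev
  have := hXB d
  have := hXB d.rev
  simp only [cut, band, Set.mem_ofPred_eq, Dart.rev_rev] at hcut ⊢
  tauto

lemma face_mem_iff_mem_band (hA : IsSaturated A) (hB : IsSaturated B) {d : Dart g J}
    (hd : d.toCover.1 ∉ coreE1 g J) : d.face ∈ B \ A ↔ d ∈ band A B := by
  have := hA d hd
  have := hB d hd
  simp only [band, Set.mem_ofPred_eq, Set.mem_sdiff]
  tauto

lemma coreSub_of_ne_one (C : IsHalfSurface γ A₀) : coreSub g J =
    ⟨coreV1 g J ∪ {v | coreFin g J ((cover g J).vCell v)},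
      coreE1 g J ∪ {e | coreFin g J ((cover g J).eCell e)},
      {f | coreFin g J ((cover g J).fCell f)}⟩ :=
  if_neg fun h => C.ne_one (Subgroup.zpowers_eq_bot.mp (C.eq_zpowers ▸ h))

lemma coreSub_sF (C : IsHalfSurface γ A₀) (hA : IsLeast {A | IsMinCut A₀ A} A)
    (hB : IsGreatest {B | IsMinCut A₀ B} B) : (coreSub g J).sF = (B \ A : Set (Cos g J)) := by
  rw [coreSub_of_ne_one C]
  ext f
  exact (coreFin_iff C hA hB _).trans (and_iff_right (not_inSub_coreS1_fCell f))

lemma toCover_fst_mem_coreSub_sE (C : IsHalfSurface γ A₀) (hA : IsLeast {A | IsMinCut A₀ A} A)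
    (hB : IsGreatest {B | IsMinCut A₀ B} B) (d : Dart g J) :
    d.toCover.1 ∈ (coreSub g J).sE ↔ d ∈ band A B := by
  rw [coreSub_of_ne_one C]
  change d.toCover.1 ∈ coreE1 g J ∨ coreFin g J _ ↔ _
  rw [coreFin_iff C hA hB]
  by_cases hd : d.toCover.1 ∈ coreE1 g J
  · exact iff_of_true (.inl hd) (mem_band_of_toCover_fst_mem_coreE1 C hA hB hd)
  · have hsatA := hA.1.isSaturated C
    have hsatB := hB.1.isSaturated C
    rw [or_iff_right hd, (hsatB.sdiff hsatA).cellFace_eCell_mem_iff hd,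
      face_mem_iff_mem_band hsatA hsatB hd]
    exact and_iff_right hd

lemma coreSub_sE (C : IsHalfSurface γ A₀) (hA : IsLeast {A | IsMinCut A₀ A} A)
    (hB : IsGreatest {B | IsMinCut A₀ B} B) : (coreSub g J).sE = edgeSet (band A B) :=
  Set.ext fun e => toCover_fst_mem_coreSub_sE C hA hB (Dart.ofEdge e)

lemma coreSub_sV (C : IsHalfSurface γ A₀) (hA : IsLeast {A | IsMinCut A₀ A} A)
    (hB : IsGreatest {B | IsMinCut A₀ B} B) : (coreSub g J).sV = vertexSet (band A B) := by
  have hsatA := hA.1.isSaturated C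
  have hsatB := hB.1.isSaturated C
  rw [coreSub_of_ne_one C]
  refine Set.Subset.antisymm ?_ ?_
  · rintro (v : Cos g J) (⟨e, he, hv⟩ | hv)
    · have hband : Dart.ofEdge e ∈ band A B :=
        mem_band_of_toCover_fst_mem_coreE1 C hA hB (d := Dart.ofEdge e) he
      rcases hv with hv | hv
      · exact ⟨_, hband, hv⟩
      · exact ⟨_, rev_mem_band hband, hv⟩
    · refine ⟨(v, Letter.ofRelPos 0 (by have := C.pos; omega)), mem_band_of_face_mem ?_, rfl⟩
      rw [face_ofRelPos_zero C.pos]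
      exact ((coreFin_iff C hA hB _).mp hv).2
  · rintro _ ⟨d, hd, rfl⟩
    by_cases hv : d.1 ∈ coreV1 g J
    · exact .inl hv
    · refine .inr ((coreFin_iff C hA hB _).mpr ⟨hv, ?_⟩)
      have hface := (face_mem_iff_mem_band hsatA hsatB (mt Dart.fst_mem_coreV1 hv)).mpr hd
      exact ((hsatB.sdiff hsatA).face_mem_iff C.pos hv).mp hface

end Core

section Connectedness

variable {g : ℕ} {J : Subgroup (Gamma g)} {γ : Gamma g} {A A₀ B : Set (Cos g J)}
  {X : Set (Dart g J)} {x y : Cos g J}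

lemma Reachable.symm (hrev : ∀ d ∈ X, d.rev ∈ X) (h : Reachable X x y) : Reachable X y x := by
  induction h with
  | refl => exact .refl
  | tail _ hstep ih =>
    obtain ⟨d, hd, rfl, rfl⟩ := hstep
    exact .head ⟨d.rev, hrev d hd, rfl, d.head_rev⟩ ih

lemma Reachable.mono {Y : Set (Dart g J)} (hXY : X ⊆ Y) (h : Reachable X x y) : Reachable Y x y :=
  Relation.ReflTransGen.mono (fun _ _ ⟨d, hd, hends⟩ => ⟨d, hXY hd, hends⟩) _ _ h

lemma Reachable.exists_walkFrom {sE : Set (cover g J).E} (hX : ∀ d ∈ X, d.toCover.1 ∈ sE)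
    (h : Reachable X x y) : ∃ l, (cover g J).WalkFrom x y l ∧ (cover g J).InSet sE l := by
  induction h using Relation.ReflTransGen.head_induction_on with
  | refl => exact ⟨[], .nil _, by simp [Complex.InSet]⟩
  | head h _ ih =>
    obtain ⟨d, hd, rfl, rfl⟩ := h
    obtain ⟨l, hwalk, hl⟩ := ih
    rw [← d.dHead_toCover] at hwalk
    have hcons := Complex.WalkFrom.cons _ hwalk
    rw [d.dTail_toCover] at hcons
    exact ⟨d.toCover :: l, hcons, List.forall_mem_cons.mpr ⟨hX d hd, hl⟩⟩

lemma reachable_fst_of_mem_dartWalk {w : List (Letter g)} (h : ∀ d ∈ dartWalk x w, d ∈ X)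
    {d : Dart g J} (hd : d ∈ dartWalk x w) : Reachable X x d.1 := by
  induction w generalizing x with
  | nil => simp [dartWalk] at hd
  | cons s w ih =>
    obtain ⟨hs, hw⟩ := List.forall_mem_cons.mp h
    rcases List.mem_cons.mp hd with rfl | hd
    · exact .refl
    · exact .head ⟨(x, s), hs, rfl, rfl⟩ (ih hw hd)

lemma reachable_face_fst {d : Dart g J} (h : ∀ e : Dart g J, e.face = d.face → e ∈ X) :
    Reachable X d.face d.1 :=
  reachable_fst_of_mem_dartWalk (fun _ he => h _ (mem_dartWalk_relatorWord.mp he))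
    (mem_dartWalk_relatorWord.mpr rfl)

lemma cut_subset_band (h : A ⊆ B) : cut A ⊆ band A B :=
  fun _ hd => ⟨fun h' => hd.2 h'.2, .inl (h hd.1)⟩

lemma IsMinCut.exists_reachable_cut (C : IsHalfSurface γ A₀) (hA : IsMinCut A₀ A) :
    ∃ x, ∀ d ∈ cut A, Reachable (cut A) x d.1 := by
  obtain ⟨x, w, -, -, -, hmem, -⟩ := hA.exists_iterate_cutNext C
  exact ⟨mkCos g J x, fun d hd =>
    reachable_fst_of_mem_dartWalk (fun e he => (hmem e).mp he) ((hmem d).mpr hd)⟩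

lemma reachable_face_of_reachable_cut (C : IsHalfSurface γ A₀) (hA : IsMinCut A₀ A)
    (hB : IsMinCut A₀ B) (hx : ∀ d ∈ cut A, Reachable (band A B) x d.1) :
    ∀ f ∈ B \ A, Reachable (band A B) x f := by
  have hface {d : Dart g J} (hd : d.face ∈ B \ A) : Reachable (band A B) d.face d.1 :=
    reachable_face_fst fun e he => mem_band_of_face_mem (he ▸ hd)
  let K : Set (Cos g J) := {f | f ∈ B \ A ∧ ¬ Reachable (band A B) x f}
  have hK : K = ∅ := by
    have hfin := finite_diff_of_eventuallyEq (hB.near.trans hA.near.symm)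
    refine hB.eq_empty_of_isolated C (hfin.subset fun f hf => hf.1) (fun f hf => hf.1.1) ?_
    rintro d ⟨hd, hunreachable⟩ hrevB
    have hhead : ¬ Reachable (band A B) x d.rev.1 := fun h =>
      hunreachable ((h.tail ⟨d.rev, rev_mem_band (mem_band_of_face_mem hd), rfl, d.head_rev⟩).trans
        ((hface hd).symm fun _ => rev_mem_band))
    have hrevA : d.rev.face ∉ A := fun h =>
      hhead (hx d.rev ⟨h, by rw [Dart.rev_rev]; exact hd.2⟩)
    exact ⟨⟨hrevB, hrevA⟩, fun h => hhead (h.trans (hface ⟨hrevB, hrevA⟩))⟩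
  intro f hf
  by_contra h
  exact (hK ▸ ⟨hf, h⟩ : f ∈ (∅ : Set (Cos g J)))

lemma exists_reachable_band (C : IsHalfSurface γ A₀) (hA : IsMinCut A₀ A) (hB : IsMinCut A₀ B)
    (h : A ⊆ B) : ∃ x, ∀ d ∈ band A B, Reachable (band A B) x d.1 := by
  obtain ⟨x, hx⟩ := hA.exists_reachable_cut C
  have hreachA : ∀ d ∈ cut A, Reachable (band A B) x d.1 := fun d hd =>
    (hx d hd).mono (cut_subset_band h)
  have hreachD {d : Dart g J} (hd : d.face ∈ B \ A) : Reachable (band A B) x d.1 :=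
    (reachable_face_of_reachable_cut C hA hB hreachA _ hd).trans
      (reachable_face_fst fun e he => mem_band_of_face_mem (he ▸ hd))
  have hreachB {d : Dart g J} (hd : d ∈ cut B) : Reachable (band A B) x d.1 := by
    by_cases hface : d.face ∈ A
    · exact hreachA d ⟨hface, fun h' => hd.2 (h h')⟩
    · exact hreachD ⟨hd.1, hface⟩
  refine ⟨x, fun d hd => ?_⟩
  have hd' := hd
  rw [band_eq_union h] at hd'
  rcases hd' with hD | hA | hBc
  · exact hreachD hD
  · exact hreachA d hA
  · exact (hreachB (mem_cut_compl.mp hBc)).tail ⟨d.rev, rev_mem_band hd, rfl, d.head_rev⟩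

lemma reachable_band (C : IsHalfSurface γ A₀) (hA : IsMinCut A₀ A) (hB : IsMinCut A₀ B)
    (h : A ⊆ B) :
    ∀ x ∈ vertexSet (band A B), ∀ y ∈ vertexSet (band A B), Reachable (band A B) x y := by
  obtain ⟨z, hz⟩ := exists_reachable_band C hA hB h
  rintro _ ⟨d, hd, rfl⟩ _ ⟨e, he, rfl⟩
  exact ((hz d hd).symm fun _ => rev_mem_band).trans (hz e he)

lemma band_nonempty (C : IsHalfSurface γ A₀) (hA : IsMinCut A₀ A) (h : A ⊆ B) :
    (band A B).Nonempty :=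
  (hA.nonempty_cut C).mono (cut_subset_band h)

lemma IsMinCut.finite_band_of_subset (C : IsHalfSurface γ A₀) (hA : IsMinCut A₀ A)
    (hB : IsMinCut A₀ B) (h : A ⊆ B) : (band A B).Finite :=
  finite_band h (hA.finite_cut C) (hB.finite_cut C)
    (finite_diff_of_eventuallyEq (hB.near.trans hA.near.symm))

lemma connected_coreSub (C : IsHalfSurface γ A₀) (hA : IsLeast {A | IsMinCut A₀ A} A)
    (hB : IsGreatest {B | IsMinCut A₀ B} B) : (coreSub g J).Connected := by
  rw [SubC.Connected, coreSub_sV C hA hB]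
  refine ⟨(band_nonempty C hA.1 (hA.2 hB.1)).image _, fun v hv w hw => ?_⟩
  exact (reachable_band C hA.1 hB.1 (hA.2 hB.1) v hv w hw).exists_walkFrom
    fun d hd => (toCover_fst_mem_coreSub_sE C hA hB d).mpr hd

lemma compact_coreSub (C : IsHalfSurface γ A₀) (hA : IsLeast {A | IsMinCut A₀ A} A)
    (hB : IsGreatest {B | IsMinCut A₀ B} B) : (coreSub g J).Compact := by
  have hfin := hA.1.finite_band_of_subset C hB.1 (hA.2 hB.1)
  rw [SubC.Compact, coreSub_sV C hA hB, coreSub_sE C hA hB, coreSub_sF C hA hB]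
  exact ⟨finite_vertexSet hfin, finite_edgeSet hfin,
    finite_diff_of_eventuallyEq (hB.1.near.trans hA.1.near.symm)⟩

lemma ncard_coreSub_sV_add_ncard_coreSub_sF (C : IsHalfSurface γ A₀)
    (hA : IsLeast {A | IsMinCut A₀ A} A) (hB : IsGreatest {B | IsMinCut A₀ B} B) :
    (coreSub g J).sV.ncard + (coreSub g J).sF.ncard = (coreSub g J).sE.ncard := by
  have hAB : A ⊆ B := hA.2 hB.1
  have hfin := hA.1.finite_band_of_subset C hB.1 hAB
  rw [coreSub_sV C hA hB, coreSub_sE C hA hB, coreSub_sF C hA hB]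
  have hedges := ncard_edgeSet_band C hA.1 hB.1 hAB hfin
  have hvertices := finrank_range_vertexBoundary_add_one hfin (fun _ => rev_mem_band)
    (band_nonempty C hA.1 hAB) (reachable_band C hA.1 hB.1 hAB)
  have hsum : (vertexSet (band A B)).ncard + (B \ A).ncard = (edgeSet (band A B)).ncard := by omega
  exact hsum

end Connectedness

section BoundaryCycles

variable {g : ℕ} {J : Subgroup (Gamma g)} {γ : Gamma g} {A A₀ B Z : Set (Cos g J)}
  {sE : Set (cover g J).E} {sF : Set (cover g J).F} {d : Dart g J}

lemma pair_next_infix (d : Dart g J) :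
    [d, d.next] <:+: dartWalk d.face (relatorWord g) ++ dartWalk d.face (relatorWord g) := by
  have hd := getElem?_dartWalk_relPos d
  have hnext := getElem?_dartWalk_relPos d.next
  rw [Dart.face_next, Dart.next, Letter.relPos_next] at hnext
  have hlen : (dartWalk d.face (relatorWord g)).length = 4 * g := by
    rw [length_dartWalk, length_relatorWord]
  have hpos := d.2.relPos_lt
  refine List.infix_iff_getElem?.mpr ⟨d.2.relPos, by simp [hlen]; omega, fun i hi => ?_⟩
  match i, hi with
  | 0, _ =>
    rw [Nat.zero_add, List.getElem?_append_left (by omega)]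
    exact hd
  | 1, _ =>
    rcases Nat.lt_or_ge (d.2.relPos + 1) (4 * g) with hlt | hge
    · rw [Nat.mod_eq_of_lt hlt] at hnext
      rw [Nat.add_comm, List.getElem?_append_left (by omega)]
      exact hnext
    · have hlast : d.2.relPos + 1 = 4 * g := by omega
      rw [hlast, Nat.mod_self] at hnext
      rw [Nat.add_comm, List.getElem?_append_right (by omega), hlen, hlast, Nat.sub_self]
      exact hnext

lemma faceStep_toCover_next (h : d.face ∈ sF) :
    (cover g J).faceStep sF d.toCover d.next.toCover := by
  refine ⟨d.face, h, ?_⟩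
  rw [bdry_cover, ← List.map_append]
  exact (pair_next_infix d).map Dart.toCover

lemma face_mem_of_faceStep {e : (cover g J).D} (h : (cover g J).faceStep sF d.toCover e) :
    d.face ∈ sF := by
  obtain ⟨(f : Cos g J), hf, hinfix⟩ := h
  have hmem : d.toCover ∈ (cover g J).bdry f := by
    simpa using hinfix.subset (List.mem_cons_self (a := d.toCover))
  exact Dart.toCover_mem_bdry_iff.mp hmem ▸ hf

/-- `Z` is a union of faces complementary to the subcomplex with edges `sE` and faces `sF`, and
the edges of the subcomplex incident to `Z` are exactly those of its frontier. -/
structure IsComplementaryRegion (sE : Set (cover g J).E) (sF : Set (cover g J).F)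
    (Z : Set (Cos g J)) : Prop where
  mem_of_mem_cut : ∀ d ∈ cut Z, d.toCover.1 ∈ sE
  notMem_of_face_mem : ∀ d : Dart g J, d.face ∈ Z → d.rev.face ∈ Z → d.toCover.1 ∉ sE
  face_notMem : ∀ f ∈ Z, f ∉ sF

namespace IsComplementaryRegion

lemma nextD_cutNext (hg : 0 < g) (hZ : IsComplementaryRegion sE sF Z) (hd : d ∈ cut Z) :
    (cover g J).nextD sE d.toCover (cutNext Z d).toCover := by
  obtain ⟨j, hj, hcutNext, hturn, hface⟩ := cutNext_spec hg hd
  rw [hcutNext]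
  refine ⟨hZ.mem_of_mem_cut _ hturn, (Dart.adj_toCover _ _).mpr rfl, fun e he hadj => ?_⟩
  obtain ⟨e, rfl⟩ := Dart.toCover_surjective e
  rw [Dart.adj_toCover] at hadj
  simp only [Dart.dLet_toCover]
  rw [show (d.turn j).2 = Letter.rot^[j] d.2.next from rfl, gapN_rot_iterate_next _ hj]
  by_contra! hlt
  have heturn : e = d.turn (gapN d.2 e.2) :=
    Prod.ext hadj.symm (rot_iterate_gapN_next d.2 e.2).symm
  refine hZ.notMem_of_face_mem e ?_ ?_ he
  · rw [heturn]
    exact hface _ hlt.le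
  · rw [heturn, Dart.face_rev_turn]
    exact hface _ hlt

lemma bStep_cutNext (hg : 0 < g) (hZ : IsComplementaryRegion sE sF Z) (hd : d ∈ cut Z) :
    (cover g J).bStep sE sF d.toCover (cutNext Z d).toCover :=
  ⟨hZ.mem_of_mem_cut d hd, hZ.nextD_cutNext hg hd,
    fun h => hZ.face_notMem _ hd.1 (face_mem_of_faceStep h)⟩

lemma exists_bCycle (C : IsHalfSurface γ A₀) (hmin : IsMinCut A₀ Z)
    (hZ : IsComplementaryRegion sE sF Z) : ∃ δ, (cover g J).BCycle sE sF δ ∧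
      δ.length = (cut Z).ncard ∧ ∀ d : Dart g J, d.toCover ∈ δ ↔ d ∈ cut Z := by
  obtain ⟨x, w, d, -, hlength, hmem, hiterate, hperiod⟩ := hmin.exists_iterate_cutNext C
  have hiter {i : ℕ} (hi : i < w.length) : (cutNext Z)^[i] d ∈ cut Z := by
    rw [← hmem, hiterate, ← List.range_map_iterate]
    exact List.mem_map.mpr ⟨i, List.mem_range.mpr hi, rfl⟩
  have hstep {i : ℕ} (hi : i < w.length) : (cover g J).bStep sE sF ((cutNext Z)^[i] d).toCover
      ((cutNext Z)^[i + 1] d).toCover := by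
    rw [Function.iterate_succ_apply']
    exact hZ.bStep_cutNext C.pos (hiter hi)
  obtain ⟨n, hn⟩ : ∃ n, w.length = n + 1 := Nat.exists_eq_succ_of_ne_zero <| by
    rw [hlength]
    exact (Set.ncard_pos (hmin.finite_cut C)).mpr (hmin.nonempty_cut C) |>.ne'
  have hlast := hstep (i := n) (by omega)
  rw [← hn, hperiod] at hlast
  have hδ (e : Dart g J) : e.toCover ∈ (List.iterate (cutNext Z) d w.length).map Dart.toCover ↔
      e ∈ cut Z := by
    rw [List.mem_map_of_injective Dart.toCover_injective, ← hiterate, hmem]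
  refine ⟨(List.iterate (cutNext Z) d w.length).map Dart.toCover,
    ⟨⟨?_, ?_, ?_⟩, _, _, ?_, ?_, hlast⟩, ?_, hδ⟩
  · simp [hn]
  · intro e he
    obtain ⟨e, rfl⟩ := Dart.toCover_surjective e
    exact hZ.mem_of_mem_cut e ((hδ e).mp he)
  · change List.IsChain _ _
    rw [List.isChain_map, List.isChain_iff_getElem]
    intro i hi
    rw [List.length_iterate] at hi
    simpa only [List.getElem_iterate] using hstep (by omega)
  · simp [-List.iterate, hn, List.getLast?_eq_getElem?]
  · simp [hn]
  · rw [List.length_map, List.length_iterate, hlength]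

end IsComplementaryRegion

lemma face_notMem_of_isBDart (h : (cover g J).IsBDart sE sF d.toCover)
    (hclosed : ∀ e : Dart g J, e.face ∈ sF → e.toCover.1 ∈ sE) : d.face ∉ sF := by
  intro hd
  obtain ⟨-, d', ⟨-, hadj, hmin⟩, hnot⟩ := h
  obtain ⟨d', rfl⟩ := Dart.toCover_surjective d'
  have hnext : gapN d.2 d.2.next = 0 :=
    gapN_rot_iterate_next d.2 (j := 0) (Nat.zero_lt_of_lt (posLv_lt d.2))
  have hle := hmin d.next.toCover (hclosed _ (d.face_next ▸ hd)) ((Dart.adj_toCover _ _).mpr rfl)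
  simp only [Dart.dLet_toCover] at hle
  have hgap : gapN d.2 d'.2 = 0 := Nat.eq_zero_of_le_zero (hle.trans_eq hnext)
  have heq : d' = d.next := by
    refine Prod.ext ((Dart.adj_toCover _ _).mp hadj).symm ?_
    rw [← rot_iterate_gapN_next d.2 d'.2, hgap]
    rfl
  exact hnot (heq ▸ faceStep_toCover_next hd)

lemma mem_cut_or_mem_cut_compl_of_isBDart (C : IsHalfSurface γ A₀)
    (hA : IsLeast {A | IsMinCut A₀ A} A) (hB : IsGreatest {B | IsMinCut A₀ B} B)
    (h : (cover g J).IsBDart (coreSub g J).sE (coreSub g J).sF d.toCover) :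
    d ∈ cut A ∨ d ∈ cut Bᶜ := by
  have hband := (toCover_fst_mem_coreSub_sE C hA hB d).mp h.1
  rw [coreSub_sF C hA hB] at h
  rw [band_eq_union (hA.2 hB.1)] at hband
  refine hband.resolve_left (face_notMem_of_isBDart h fun e he => ?_)
  exact (toCover_fst_mem_coreSub_sE C hA hB e).mpr (mem_band_of_face_mem he)

lemma isComplementaryRegion_least (C : IsHalfSurface γ A₀) (hA : IsLeast {A | IsMinCut A₀ A} A)
    (hB : IsGreatest {B | IsMinCut A₀ B} B) :
    IsComplementaryRegion (coreSub g J).sE (coreSub g J).sF A where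
  mem_of_mem_cut d hd := (toCover_fst_mem_coreSub_sE C hA hB d).mpr
    (cut_subset_band (hA.2 hB.1) hd)
  notMem_of_face_mem d hd hrev h := ((toCover_fst_mem_coreSub_sE C hA hB d).mp h).1 ⟨hd, hrev⟩
  face_notMem f hf := by
    rw [coreSub_sF C hA hB]
    exact fun h => h.2 hf

lemma isComplementaryRegion_compl_greatest (C : IsHalfSurface γ A₀)
    (hA : IsLeast {A | IsMinCut A₀ A} A) (hB : IsGreatest {B | IsMinCut A₀ B} B) :
    IsComplementaryRegion (coreSub g J).sE (coreSub g J).sF Bᶜ where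
  mem_of_mem_cut d hd := by
    refine (toCover_fst_mem_coreSub_sE C hA hB d).mpr ?_
    rw [band_eq_union (hA.2 hB.1)]
    exact .inr (.inr hd)
  notMem_of_face_mem d hd hrev h :=
    ((toCover_fst_mem_coreSub_sE C hA hB d).mp h).2.elim hd hrev
  face_notMem f hf := by
    rw [coreSub_sF C hA hB]
    exact fun h => hf h.1

end BoundaryCycles

/-- For `1 ≠ γ ∈ Γ_g`, the core surface `Core(⟨γ⟩)` is connected
and compact, its thick version is homeomorphic to an annulus (rendered: a compact
connected orientable surface with Euler characteristic `0` and exactly two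
boundary cycles), and both boundary cycles have length `ℓ(γ^{Γ_g})`. -/
theorem statement_9 (g : ℕ) (hg : 2 ≤ g) (γ : Gamma g) (hγ : γ ≠ 1)
    (J : Subgroup (Gamma g)) (hJ : J = Subgroup.zpowers γ) :
    (coreSub g J).Connected ∧ (coreSub g J).Compact ∧
    (coreSub g J).sV.ncard + (coreSub g J).sF.ncard = (coreSub g J).sE.ncard ∧
    ∃ δ₁ δ₂ : List ((cover g J).D),
      (cover g J).BCycle (coreSub g J).sE (coreSub g J).sF δ₁ ∧
      (cover g J).BCycle (coreSub g J).sE (coreSub g J).sF δ₂ ∧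
      δ₁.Disjoint δ₂ ∧
      (∀ d, (cover g J).IsBDart (coreSub g J).sE (coreSub g J).sF d →
        d ∈ δ₁ ∨ d ∈ δ₂) ∧
      δ₁.length = conjLen γ ∧ δ₂.length = conjLen γ := by
  obtain ⟨A₀, C⟩ := exists_isHalfSurface hg hJ hγ
  obtain ⟨A, hA⟩ := exists_isLeast_isMinCut C
  obtain ⟨B, hB⟩ := exists_isGreatest_isMinCut C
  obtain ⟨δ₁, hδ₁, hlength₁, hmem₁⟩ :=
    (isComplementaryRegion_least C hA hB).exists_bCycle C hA.1
  obtain ⟨δ₂, hδ₂, hlength₂, hmem₂⟩ :=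
    (isComplementaryRegion_compl_greatest C hA hB).exists_bCycle C.compl hB.1.compl
  refine ⟨connected_coreSub C hA hB, compact_coreSub C hA hB,
    ncard_coreSub_sV_add_ncard_coreSub_sF C hA hB, δ₁, δ₂, hδ₁, hδ₂, ?_, ?_, ?_, ?_⟩
  · intro d hd₁ hd₂
    obtain ⟨d, rfl⟩ := Dart.toCover_surjective d
    exact ((hmem₂ d).mp hd₂).1 (hA.2 hB.1 ((hmem₁ d).mp hd₁).1)
  · intro d hd
    obtain ⟨d, rfl⟩ := Dart.toCover_surjective d
    rw [hmem₁, hmem₂]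
    exact mem_cut_or_mem_cut_compl_of_isBDart C hA hB hd
  · rw [hlength₁, hA.1.conjLen_eq C]
  · rw [hlength₂, ncard_cut_compl, hB.1.conjLen_eq C]

end CS

end
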